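/- Let d ≥ 3 be odd and let P ⊆ ℝ^d be a d-dimensional simplicial reflexive polytope with exactly 3d−1 vertices. Then P splits into (d−3)/2 copies of V2 and one copy of one of the two 3-polytopes Q3, Q3'. -/

import Mathlib

noncomputable section

/-- The standard inner product on `ℝ^d`. -/
def dotp {d : ℕ} (x y : Fin d → ℝ) : ℝ := ∑ i, x i * y i

/-- `x` is a point of the lattice `ℤ^d`. -/
def IsLP {d : ℕ} (x : Fin d → ℝ) : Prop := ∀ i, ∃ n : ℤ, x i = (n : ℝ)

/-- A lattice polytope: convex hull of finitely many lattice points. -/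
def IsLatticePolytope {d : ℕ} (P : Set (Fin d → ℝ)) : Prop :=
  ∃ V : Finset (Fin d → ℝ), (∀ v ∈ V, IsLP v) ∧ P = convexHull ℝ (V : Set (Fin d → ℝ))

/-- The dual polytope `P* = {x | ⟨x,y⟩ ≤ 1 ∀ y ∈ P}`. -/
def dualPolytope {d : ℕ} (P : Set (Fin d → ℝ)) : Set (Fin d → ℝ) :=
  {x | ∀ y ∈ P, dotp x y ≤ 1}

/-- `P` is a reflexive polytope: a (`d`-dimensional) lattice polytope with `0` in its
interior whose dual is again a lattice polytope. -/
def IsReflexive {d : ℕ} (P : Set (Fin d → ℝ)) : Prop :=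
  IsLatticePolytope P ∧ (0 : Fin d → ℝ) ∈ interior P ∧ IsLatticePolytope (dualPolytope P)

/-- `F` is a facet of `P` with (uniquely determined) outer normal `u`, normalized by
`⟨u, F⟩ = 1` (possible since `0` is in the interior of `P`). -/
def IsFacetNormal {d : ℕ} (P F : Set (Fin d → ℝ)) (u : Fin d → ℝ) : Prop :=
  F.Nonempty ∧ (∀ y ∈ P, dotp u y ≤ 1) ∧ F = {y ∈ P | dotp u y = 1} ∧
    Module.finrank ℝ (vectorSpan ℝ F) = d - 1

/-- `F` is a facet of `P`. -/
def IsFacet {d : ℕ} (P F : Set (Fin d → ℝ)) : Prop := ∃ u, IsFacetNormal P F u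

/-- `P` is simplicial: every facet has exactly `d` vertices. -/
def IsSimplicial {d : ℕ} (P : Set (Fin d → ℝ)) : Prop :=
  ∀ F, IsFacet P F → (Set.extremePoints ℝ F).ncard = d

/-- Vertices of the hexagon `V₂`. -/
def V2v : Set (Fin 2 → ℤ) := {![1,0], ![0,1], ![1,1], ![-1,0], ![0,-1], ![-1,-1]}

/-- Vertices of the pentagon `Ṽ₂`. -/
def tV2v : Set (Fin 2 → ℤ) := {![1,0], ![0,1], ![1,1], ![-1,0], ![0,-1]}

/-- Vertices of the pentagon `E₁`. -/
def E1v : Set (Fin 2 → ℤ) := {![1,0], ![-1,2], ![-1,1], ![0,-1], ![1,-1]}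

/-- Vertices of the pentagon `E₂`. -/
def E2v : Set (Fin 2 → ℤ) := {![1,0], ![0,1], ![-1,1], ![-1,-1], ![1,-1]}

/-- Vertices of the 3-polytope `Q₃`. -/
def Q3v : Set (Fin 3 → ℤ) :=
  {![1,0,0], ![-1,0,0], ![0,1,0], ![0,-1,0], ![1,1,0], ![-1,-1,0], ![0,0,1], ![0,0,-1]}

/-- Vertices of the 3-polytope `Q₃'`. -/
def Q3'v : Set (Fin 3 → ℤ) :=
  {![1,0,0], ![-1,0,0], ![0,1,0], ![0,-1,0], ![1,1,0], ![-1,-1,0], ![0,0,1], ![1,0,-1]}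

/-- Embed `ℤ²` into coordinates `o, o+1` of `ℝ^d`. -/
def embed2 (d o : ℕ) (v : Fin 2 → ℤ) : Fin d → ℝ :=
  fun i => if (i : ℕ) = o then (v 0 : ℝ) else if (i : ℕ) = o + 1 then (v 1 : ℝ) else 0

/-- Embed `ℤ³` into coordinates `0, 1, 2` of `ℝ^d`. -/
def embed3 (d : ℕ) (v : Fin 3 → ℤ) : Fin d → ℝ :=
  fun i => if (i : ℕ) = 0 then (v 0 : ℝ) else if (i : ℕ) = 1 then (v 1 : ℝ)
    else if (i : ℕ) = 2 then (v 2 : ℝ) else 0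

/-- Standard model of a polytope in `ℝ^d` that splits into a polygon with vertex set `Q`
(in coordinates `0,1`) and `(d-2)/2` copies of `V₂` (in the remaining coordinate pairs). -/
def splitModel2 (d : ℕ) (Q : Set (Fin 2 → ℤ)) : Set (Fin d → ℝ) :=
  convexHull ℝ (embed2 d 0 '' Q ∪ ⋃ j ∈ Finset.range ((d - 2) / 2), embed2 d (2 * j + 2) '' V2v)

/-- Standard model of a polytope in `ℝ^d` that splits into a 3-polytope with vertex set `Q`
(in coordinates `0,1,2`) and `(d-3)/2` copies of `V₂` (in the remaining coordinate pairs). -/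
def splitModel3 (d : ℕ) (Q : Set (Fin 3 → ℤ)) : Set (Fin d → ℝ) :=
  convexHull ℝ (embed3 d '' Q ∪ ⋃ j ∈ Finset.range ((d - 3) / 2), embed2 d (2 * j + 3) '' V2v)

/-- Standard model of a polytope in `ℝ^d` that splits into `d/2` copies of `V₂`. -/
def splitModelV2 (d : ℕ) : Set (Fin d → ℝ) :=
  convexHull ℝ (⋃ j ∈ Finset.range (d / 2), embed2 d (2 * j) '' V2v)

/-- `φ` is a unimodular transformation: a linear automorphism of `ℝ^d` mapping the lattice
`ℤ^d` onto itself. `P` splits into given polytopes iff some unimodular transformation maps `P`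
onto the corresponding standard model. -/
def Unimodular {d : ℕ} (φ : (Fin d → ℝ) ≃ₗ[ℝ] (Fin d → ℝ)) : Prop :=
  ∀ x, IsLP x ↔ IsLP (φ x)

/-- an abstract simplicial facet, with its dual basis -/
structure Fct {E : Type*} [AddCommGroup E] [Module ℝ E] (V : Finset E) (L : AddSubgroup E)
    (d : ℕ) where
  S : Finset E
  sub : S ⊆ V
  card : S.card = d
  co : E → E →ₗ[ℝ] ℝ
  co_self : ∀ v ∈ S, co v v = 1
  co_ne : ∀ v ∈ S, ∀ w ∈ S, v ≠ w → co v w = 0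
  repr : ∀ x, ∑ v ∈ S, co v x • v = x
  lt : ∀ x ∈ V, x ∉ S → ∑ v ∈ S, co v x < 1
  int : ∀ x ∈ L, ∃ m : ℤ, ∑ v ∈ S, co v x = m

/-- real number that is an integer -/
def IsI (r : ℝ) : Prop := ∃ m : ℤ, r = m

namespace IsI
theorem gap {a b : ℝ} (ha : IsI a) (hb : IsI b) (h : a < b) : a + 1 ≤ b := by
  obtain ⟨m, rfl⟩ := ha; obtain ⟨n, rfl⟩ := hb
  exact_mod_cast h
theorem zero : IsI 0 := ⟨0, by simp⟩
theorem one : IsI 1 := ⟨1, by simp⟩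
theorem ofInt (m : ℤ) : IsI (m : ℝ) := ⟨m, rfl⟩
theorem add {a b : ℝ} (ha : IsI a) (hb : IsI b) : IsI (a + b) := by
  obtain ⟨m, rfl⟩ := ha; obtain ⟨n, rfl⟩ := hb
  exact ⟨m + n, by push_cast; ring⟩
theorem neg {a : ℝ} (ha : IsI a) : IsI (-a) := by
  obtain ⟨m, rfl⟩ := ha
  exact ⟨-m, by push_cast; ring⟩
theorem sub {a b : ℝ} (ha : IsI a) (hb : IsI b) : IsI (a - b) := by
  obtain ⟨m, rfl⟩ := ha; obtain ⟨n, rfl⟩ := hb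
  exact ⟨m - n, by push_cast; ring⟩
theorem mul {a b : ℝ} (ha : IsI a) (hb : IsI b) : IsI (a * b) := by
  obtain ⟨m, rfl⟩ := ha; obtain ⟨n, rfl⟩ := hb
  exact ⟨m * n, by push_cast; ring⟩
theorem sum {ι : Type*} (T : Finset ι) (f : ι → ℝ) (h : ∀ i ∈ T, IsI (f i)) :
    IsI (∑ i ∈ T, f i) := by
  classical
  induction T using Finset.induction_on with
  | empty => simpa using zero
  | insert a T ha ih =>
    rw [Finset.sum_insert ha]
    exact (h a (by simp)).add (ih fun i hi => h i (by simp [hi]))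
theorem pos {a : ℝ} (ha : IsI a) (h : 0 < a) : 1 ≤ a := by have := gap zero ha h; linarith
theorem lt_one {a : ℝ} (ha : IsI a) (h : a < 1) : a ≤ 0 := by have := gap ha one h; linarith
theorem lt_zero {a : ℝ} (ha : IsI a) (h : a < 0) : a ≤ -1 := by have := gap ha zero h; linarith
theorem gt_neg_one {a : ℝ} (ha : IsI a) (h : -1 < a) : 0 ≤ a := by
  have := gap one.neg ha h; linarith
theorem lt_two {a : ℝ} (ha : IsI a) (h : a < 2) : a ≤ 1 := by
  have := gap ha ⟨2, by norm_num⟩ h; linarith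
theorem gt_one {a : ℝ} (ha : IsI a) (h : 1 < a) : 2 ≤ a := by
  have := gap one ha h; linarith
theorem gt_neg_two {a : ℝ} (ha : IsI a) (h : -2 < a) : -1 ≤ a := by
  have := gap ⟨-2, by norm_num⟩ ha h; linarith
end IsI

theorem sum_one {E : Type*} [DecidableEq E] (T : Finset E) (f : E → ℝ) (h0 : ∀ v ∈ T, 0 ≤ f v)
    (hi : ∀ v ∈ T, IsI (f v)) (hs : ∑ v ∈ T, f v = 1) :
    ∃ p ∈ T, f p = 1 ∧ ∀ q ∈ T, q ≠ p → f q = 0 := by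
  have : ∃ p ∈ T, 0 < f p := by
    by_contra! h
    have := Finset.sum_nonpos h
    linarith
  obtain ⟨p, hp, hpos⟩ := this
  have h1 := (hi p hp).pos hpos
  have h2 := Finset.add_sum_erase T f hp
  have h3 : 0 ≤ ∑ x ∈ T.erase p, f x :=
    Finset.sum_nonneg fun i hi => h0 i (Finset.mem_of_mem_erase hi)
  refine ⟨p, hp, by linarith, fun q hq hqp => ?_⟩
  have h4 : ∑ x ∈ T.erase p, f x = 0 := by linarith
  exact (Finset.sum_eq_zero_iff_of_nonneg (fun i hi => h0 i (Finset.mem_of_mem_erase hi))).1 h4 q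
    (by simp [hq, hqp])

theorem sum_two {E : Type*} [DecidableEq E] (T : Finset E) (f : E → ℝ) (h0 : ∀ v ∈ T, 0 ≤ f v)
    (hi : ∀ v ∈ T, IsI (f v)) (hs : ∑ v ∈ T, f v = 2) :
    ∃ p ∈ T, ∃ q ∈ T, ∀ r ∈ T, f r = (if r = p then 1 else 0) + (if r = q then 1 else 0) := by
  have : ∃ p ∈ T, 0 < f p := by
    by_contra! h
    have := Finset.sum_nonpos h
    linarith
  obtain ⟨p, hp, hpos⟩ := this
  have h1 := (hi p hp).pos hpos
  obtain ⟨q, hq, hq1, hq2⟩ := sum_one T (fun r => f r - if r = p then 1 else 0)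
    (by intro v hv; split_ifs with h
        · subst h; linarith
        · simpa using h0 v hv)
    (by intro v hv; split_ifs with h
        · exact (hi v hv).sub IsI.one
        · exact (hi v hv).sub IsI.zero)
    (by rw [Finset.sum_sub_distrib, hs, Finset.sum_ite_eq' T p, if_pos hp]; norm_num)
  refine ⟨p, hp, q, hq, fun r hr => ?_⟩
  by_cases hrq : r = q
  · subst hrq; simp only [if_true]; linarith
  · have := hq2 r hr hrq
    simp only [hrq, if_false]; linarith

/-- fixed point free involutions come in pairs -/
theorem pair_enum {E : Type*} [DecidableEq E] [Nonempty E] (τ : E → E) : ∀ (T : Finset E),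
    (∀ t ∈ T, τ t ∈ T) → (∀ t ∈ T, τ (τ t) = t) → (∀ t ∈ T, τ t ≠ t) →
    ∃ (m : ℕ) (f : ℕ → E), T.card = 2 * m ∧ (∀ j < m, f j ∈ T) ∧
      ∀ t ∈ T, ∃ j < m, t = f j ∨ t = τ (f j) := by
  intro T
  induction T using Finset.strongInduction with
  | H T ih =>
    intro h1 h2 h3
    rcases T.eq_empty_or_nonempty with rfl | ⟨t, ht⟩
    · exact ⟨0, fun _ => Classical.arbitrary E, by simp, by simp, by simp⟩
    · obtain ⟨m, f, hc, hf, hT⟩ := ih ((T.erase t).erase (τ t))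
        (by
          refine (Finset.erase_subset _ _).trans_ssubset (Finset.erase_ssubset ht))
        (by
          intro s hs
          simp only [Finset.mem_erase] at hs ⊢
          refine ⟨fun h => hs.2.1 ?_, fun h => hs.1 ?_, h1 s hs.2.2⟩
          · rw [← h2 s hs.2.2, h, h2 t ht]
          · rw [← h2 s hs.2.2, h])
        (fun s hs => h2 s (by simp only [Finset.mem_erase] at hs; exact hs.2.2))
        (fun s hs => h3 s (by simp only [Finset.mem_erase] at hs; exact hs.2.2))
      refine ⟨m + 1, fun j => if j < m then f j else t, ?_, ?_, ?_⟩
      · have e1 : τ t ∈ T.erase t := by simp [h1 t ht, h3 t ht]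
        have := Finset.card_erase_add_one e1
        have := Finset.card_erase_add_one ht
        omega
      · intro j hj
        dsimp only
        split_ifs with h
        · have := hf j h
          simp only [Finset.mem_erase] at this; exact this.2.2
        · exact ht
      · intro s hs
        by_cases hst : s = t
        · exact ⟨m, by omega, by simp [hst]⟩
        by_cases hst' : s = τ t
        · exact ⟨m, by omega, by simp [hst']⟩
        obtain ⟨j, hj, hh⟩ := hT s (by simp [hs, hst, hst'])
        exact ⟨j, by omega, by simpa [hj] using hh⟩

section abstractpart
variable {E : Type*} [AddCommGroup E] [Module ℝ E] [DecidableEq E]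
  {V : Finset E} {L : AddSubgroup E} {d : ℕ}

namespace Fct

/-- outer normal -/
noncomputable def u (F : Fct V L d) : E →ₗ[ℝ] ℝ := ∑ v ∈ F.S, F.co v

theorem u_apply (F : Fct V L d) (x : E) : F.u x = ∑ v ∈ F.S, F.co v x := by
  simp [u, LinearMap.sum_apply]

theorem co_eq (F : Fct V L d) {v w : E} (hv : v ∈ F.S) (hw : w ∈ F.S) :
    F.co v w = if v = w then 1 else 0 := by
  split_ifs with h
  · subst h; exact F.co_self v hv
  · exact F.co_ne v hv w hw h

theorem u_mem (F : Fct V L d) {v : E} (hv : v ∈ F.S) : F.u v = 1 := by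
  rw [u_apply, Finset.sum_congr rfl (fun w hw => F.co_eq hw hv)]
  simp [hv]

theorem u_int (F : Fct V L d) {x : E} (hx : x ∈ L) : IsI (F.u x) := by
  rw [u_apply]; exact F.int x hx

theorem ext' (F : Fct V L d) {x y : E} (h : ∀ v ∈ F.S, F.co v x = F.co v y) : x = y := by
  rw [← F.repr x, ← F.repr y]
  exact Finset.sum_congr rfl fun v hv => by rw [h v hv]

theorem lin (F : Fct V L d) (f : E →ₗ[ℝ] ℝ) (x : E) : f x = ∑ v ∈ F.S, F.co v x * f v := by
  conv_lhs => rw [← F.repr x]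
  simp

theorem u_erase (F : Fct V L d) {v : E} (hv : v ∈ F.S) (x : E) :
    F.u x = F.co v x + ∑ w ∈ F.S.erase v, F.co w x := by
  rw [u_apply, Finset.add_sum_erase _ (fun w => F.co w x) hv]

/-- `F'` is the neighbour of `F` across the ridge opposite `v`, with new vertex `v'`. -/
def IsNb (F : Fct V L d) (v : E) (F' : Fct V L d) (v' : E) : Prop :=
  v' ∉ F.S ∧ F'.S = insert v' (F.S.erase v)

open Classical in
/-- chosen neighbour -/
noncomputable def Nb (F : Fct V L d) (v : E) : Fct V L d × E :=
  if h : ∃ p : Fct V L d × E, F.IsNb v p.1 p.2 then h.choose else (F, v)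

/-- neighbouring facet -/
noncomputable def N (F : Fct V L d) (v : E) : Fct V L d := (F.Nb v).1
/-- neighbouring vertex -/
noncomputable def n (F : Fct V L d) (v : E) : E := (F.Nb v).2
/-- the jump -/
noncomputable def k (F : Fct V L d) (v : E) : ℝ := 1 - (F.N v).u v

/-- vertices at height zero -/
noncomputable def H0 (F : Fct V L d) : Finset E := V.filter fun x => F.u x = 0
/-- vertices at negative height -/
noncomputable def Hn (F : Fct V L d) : Finset E := V.filter fun x => F.u x < 0

end Fct

/-- A system of simplicial facets -/
structure Sys (V : Finset E) (L : AddSubgroup E) (d : ℕ) : Prop where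
  VL : ∀ v ∈ V, v ∈ L
  zero : (0 : E) ∉ V
  card : V.card + 1 = 3 * d
  nb : ∀ F : Fct V L d, ∀ v ∈ F.S, ∃ p : Fct V L d × E, F.IsNb v p.1 p.2
  cone : ∀ x : E, ∃ F : Fct V L d, ∀ v ∈ F.S, 0 ≤ F.co v x
  vmin : ∃ F : Fct V L d, ∀ v ∈ F.S, ∀ F' v', F.IsNb v F' v' → 1 ≤ |F.co v v'|

namespace Fct

theorem IsNb.u_eq {F F' : Fct V L d} {v v' : E} (hv : v ∈ F.S) (h : F.IsNb v F' v') (x : E) :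
    F'.u x = F.u x - (1 - F'.u v) * F.co v x := by
  rw [F.lin F'.u x, F.u_apply x, ← Finset.add_sum_erase _ _ hv,
    ← Finset.add_sum_erase _ (fun w => F.co w x) hv]
  have : ∑ w ∈ F.S.erase v, F.co w x * F'.u w = ∑ w ∈ F.S.erase v, F.co w x := by
    refine Finset.sum_congr rfl fun w hw => ?_
    rw [F'.u_mem (by rw [h.2]; exact Finset.mem_insert_of_mem hw), mul_one]
  rw [this]; ring

theorem u_lt {F : Fct V L d} {x : E} (hx : x ∈ V) (h : x ∉ F.S) : F.u x < 1 := by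
  rw [u_apply]; exact F.lt x hx h

theorem u_le_one (F : Fct V L d) {x : E} (hx : x ∈ V) : F.u x ≤ 1 := by
  by_cases h : x ∈ F.S
  · rw [F.u_mem h]
  · exact (u_lt hx h).le

theorem mem_of_u {F : Fct V L d} {x : E} (hx : x ∈ V) (h : F.u x = 1) : x ∈ F.S := by
  by_contra hh
  have := u_lt hx hh
  linarith

theorem IsNb.notmem {F F' : Fct V L d} {v v' : E} (hv : v ∈ F.S) (h : F.IsNb v F' v') :
    v ∉ F'.S := by
  rw [h.2]; intro hh
  rcases Finset.mem_insert.1 hh with h1 | h1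
  · exact h.1 (h1 ▸ hv)
  · simp at h1

theorem IsNb.mem {F F' : Fct V L d} {v v' : E} (h : F.IsNb v F' v') : v' ∈ F'.S := by
  rw [h.2]; simp

theorem IsNb.symm {F F' : Fct V L d} {v v' : E} (hv : v ∈ F.S) (h : F.IsNb v F' v') :
    F'.IsNb v' F v := by
  refine ⟨h.notmem hv, ?_⟩
  have h1 : v' ∉ F.S.erase v := fun hh => h.1 (Finset.mem_of_mem_erase hh)
  rw [h.2, Finset.erase_insert h1, Finset.insert_erase hv]

theorem IsNb.unique {F F1 F2 : Fct V L d} {v a b : E} (hv : v ∈ F.S) (h1 : F.IsNb v F1 a)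
    (h2 : F.IsNb v F2 b) : a = b := by
  have aV : a ∈ V := F1.sub h1.mem
  have bV : b ∈ V := F2.sub h2.mem
  have vV : v ∈ V := F.sub hv
  have k1 := u_lt vV (h1.notmem hv)
  have k2 := u_lt vV (h2.notmem hv)
  have ua := u_lt aV h1.1
  have ub := u_lt bV h2.1
  have e1 := h1.u_eq hv a
  have e2 := h2.u_eq hv b
  rw [F1.u_mem h1.mem] at e1
  rw [F2.u_mem h2.mem] at e2
  have f1 := h2.u_eq hv a
  have f2 := h1.u_eq hv b
  have l1 := F2.u_le_one aV
  have l2 := F1.u_le_one bV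
  have ca : F.co v a < 0 := by
    by_contra! hh
    have := mul_nonneg (by linarith : 0 ≤ 1 - F1.u v) hh
    linarith
  have cb : F.co v b < 0 := by
    by_contra! hh
    have := mul_nonneg (by linarith : 0 ≤ 1 - F2.u v) hh
    linarith
  have g1 : F1.u v ≤ F2.u v := by nlinarith
  have g2 : F2.u v ≤ F1.u v := by nlinarith
  have g : F1.u v = F2.u v := le_antisymm g1 g2
  have hb : F1.u b = 1 := by rw [f2, g]; linarith
  have := mem_of_u bV hb
  rw [h1.2] at this
  rcases Finset.mem_insert.1 this with h | h
  · exact h.symm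
  · exact absurd (Finset.mem_of_mem_erase h) h2.1

end Fct

open Fct

namespace Sys

theorem isNb (hS : Sys V L d) (F : Fct V L d) {v : E} (hv : v ∈ F.S) : F.IsNb v (F.N v) (F.n v) := by
  have h := hS.nb F v hv
  unfold Fct.N Fct.n Fct.Nb
  rw [dif_pos h]; exact h.choose_spec

theorem n_notmem (hS : Sys V L d) (F : Fct V L d) {v : E} (hv : v ∈ F.S) : F.n v ∉ F.S := (hS.isNb F hv).1
theorem n_memN (hS : Sys V L d) (F : Fct V L d) {v : E} (hv : v ∈ F.S) : F.n v ∈ (F.N v).S := (hS.isNb F hv).mem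
theorem n_memV (hS : Sys V L d) (F : Fct V L d) {v : E} (hv : v ∈ F.S) : F.n v ∈ V := (F.N v).sub (hS.n_memN F hv)
theorem N_S (hS : Sys V L d) (F : Fct V L d) {v : E} (hv : v ∈ F.S) : (F.N v).S = insert (F.n v) (F.S.erase v) :=
  (hS.isNb F hv).2
theorem mem_N (hS : Sys V L d) (F : Fct V L d) {v w : E} (hv : v ∈ F.S) (hw : w ∈ F.S) (h : w ≠ v) :
    w ∈ (F.N v).S := by rw [hS.N_S F hv]; simp [hw, h]
theorem of_mem_N (hS : Sys V L d) (F : Fct V L d) {v w : E} (hv : v ∈ F.S) (hw : w ∈ (F.N v).S) :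
    w = F.n v ∨ (w ∈ F.S ∧ w ≠ v) := by
  rw [hS.N_S F hv] at hw
  simp only [Finset.mem_insert, Finset.mem_erase] at hw
  tauto
theorem self_notmem (hS : Sys V L d) (F : Fct V L d) {v : E} (hv : v ∈ F.S) : v ∉ (F.N v).S :=
  (hS.isNb F hv).notmem hv
theorem n_ne (hS : Sys V L d) (F : Fct V L d) {v w : E} (hv : v ∈ F.S) (hw : w ∈ F.S) : w ≠ F.n v :=
  fun h => hS.n_notmem F hv (h ▸ hw)

theorem memL (hS : Sys V L d) {x : E} (hx : x ∈ V) : x ∈ L := hS.VL x hx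

theorem u_int (hS : Sys V L d) (F : Fct V L d) {x : E} (hx : x ∈ V) : IsI (F.u x) := F.u_int (hS.VL x hx)

theorem u_le_zero (hS : Sys V L d) (F : Fct V L d) {x : E} (hx : x ∈ V) (h : x ∉ F.S) : F.u x ≤ 0 :=
  (hS.u_int F hx).lt_one (u_lt hx h)

theorem N_u (hS : Sys V L d) (F : Fct V L d) {v : E} (hv : v ∈ F.S) (x : E) :
    (F.N v).u x = F.u x - F.k v * F.co v x := (hS.isNb F hv).u_eq hv x

theorem k_int (hS : Sys V L d) (F : Fct V L d) {v : E} (hv : v ∈ F.S) : IsI (F.k v) :=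
  IsI.one.sub (hS.u_int _ (F.sub hv))

theorem k_pos (hS : Sys V L d) (F : Fct V L d) {v : E} (hv : v ∈ F.S) : 1 ≤ F.k v := by
  have := hS.u_le_zero (F.N v) (F.sub hv) (hS.self_notmem F hv)
  unfold Fct.k; linarith

theorem k_co_n (hS : Sys V L d) (F : Fct V L d) {v : E} (hv : v ∈ F.S) : F.k v * F.co v (F.n v) = F.u (F.n v) - 1 := by
  have := hS.N_u F hv (F.n v)
  rw [(F.N v).u_mem (hS.n_memN F hv)] at this
  linarith

theorem co_n_neg (hS : Sys V L d) (F : Fct V L d) {v : E} (hv : v ∈ F.S) : F.co v (F.n v) < 0 := by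
  have h1 := hS.k_co_n F hv
  have h2 := hS.u_le_zero F (hS.n_memV F hv) (hS.n_notmem F hv)
  have h3 := hS.k_pos F hv
  by_contra! h
  nlinarith [mul_nonneg (by linarith : 0 ≤ F.k v) h]

theorem k_co_int (hS : Sys V L d) (F : Fct V L d) {v : E} (hv : v ∈ F.S) {x : E} (hx : x ∈ L) :
    IsI (F.k v * F.co v x) := by
  have := hS.N_u F hv x
  have h : F.k v * F.co v x = F.u x - (F.N v).u x := by linarith
  rw [h]; exact (F.u_int hx).sub ((F.N v).u_int hx)

/-- L4 -/
theorem u_le_kco (hS : Sys V L d) (F : Fct V L d) {v x : E} (hv : v ∈ F.S) (hx : x ∈ V) (hxS : x ∉ F.S)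
    (hxn : x ≠ F.n v) : F.u x ≤ F.k v * F.co v x := by
  have h1 : x ∉ (F.N v).S := fun h => by
    rcases hS.of_mem_N F hv h with h | h
    · exact hxn h
    · exact hxS h.1
  have := hS.u_le_zero _ hx h1
  rw [hS.N_u F hv] at this
  linarith

theorem notmem_of_u (hS : Sys V L d) (F : Fct V L d) {x : E} (h : F.u x ≠ 1) : x ∉ F.S :=
  fun hh => h (F.u_mem hh)

/-- L5 -/
theorem eq_n (hS : Sys V L d) (F : Fct V L d) {v x : E} (hv : v ∈ F.S) (hx : x ∈ V) (hu : F.u x = 0)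
    (hc : F.co v x < 0) : x = F.n v := by
  by_contra h
  have := hS.u_le_kco F hv hx (hS.notmem_of_u F (by rw [hu]; norm_num)) h
  have h3 := hS.k_pos F hv
  nlinarith

theorem exists_neg (hS : Sys V L d) (F : Fct V L d) {x : E} (hx : x ∈ V) (hu : F.u x ≤ 0) :
    ∃ v ∈ F.S, F.co v x < 0 := by
  by_contra! h
  have h0 : F.u x = 0 := le_antisymm hu (by rw [F.u_apply]; exact Finset.sum_nonneg h)
  rw [F.u_apply, Finset.sum_eq_zero_iff_of_nonneg h] at h0
  have : x = 0 := F.ext' fun v hv => by rw [h0 v hv, map_zero]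
  exact hS.zero (this ▸ hx)

theorem H0_sub (hS : Sys V L d) (F : Fct V L d) : F.H0 ⊆ F.S.image F.n := by
  intro x hx
  simp only [Fct.H0, Finset.mem_filter] at hx
  obtain ⟨v, hv, hc⟩ := hS.exists_neg F hx.1 hx.2.le
  exact Finset.mem_image.2 ⟨v, hv, (hS.eq_n F hv hx.1 hx.2 hc).symm⟩

theorem H0_le (hS : Sys V L d) (F : Fct V L d) : F.H0.card ≤ d :=
  (Finset.card_le_card (hS.H0_sub F)).trans (Finset.card_image_le.trans_eq F.card)

theorem H0_lt_of_u (hS : Sys V L d) (F : Fct V L d) {v : E} (hv : v ∈ F.S) (h : F.u (F.n v) ≠ 0) :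
    F.H0.card + 1 ≤ d := by
  have : F.H0 ⊆ (F.S.erase v).image F.n := by
    intro x hx
    obtain ⟨w, hw, rfl⟩ := Finset.mem_image.1 (hS.H0_sub F hx)
    refine Finset.mem_image_of_mem _ (Finset.mem_erase.2 ⟨?_, hw⟩)
    rintro rfl
    simp only [Fct.H0, Finset.mem_filter] at hx
    exact h hx.2
  have h1 := (Finset.card_le_card this).trans Finset.card_image_le
  have h2 := Finset.card_erase_add_one hv
  rw [F.card] at h2
  omega

theorem H0_lt_of_col (hS : Sys V L d) (F : Fct V L d) {v w : E} (hv : v ∈ F.S) (hw : w ∈ F.S) (hvw : v ≠ w)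
    (h : F.n v = F.n w) : F.H0.card + 1 ≤ d := by
  have : F.H0 ⊆ (F.S.erase v).image F.n := by
    intro x hx
    obtain ⟨y, hy, rfl⟩ := Finset.mem_image.1 (hS.H0_sub F hx)
    by_cases hyv : y = v
    · subst hyv
      rw [h]
      exact Finset.mem_image_of_mem _ (Finset.mem_erase.2 ⟨hvw.symm, hw⟩)
    · exact Finset.mem_image_of_mem _ (Finset.mem_erase.2 ⟨hyv, hy⟩)
  have h1 := (Finset.card_le_card this).trans Finset.card_image_le
  have h2 := Finset.card_erase_add_one hv
  rw [F.card] at h2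
  omega

theorem H0_full (hS : Sys V L d) (F : Fct V L d) (h : F.H0.card = d) {v : E} (hv : v ∈ F.S) : F.u (F.n v) = 0 := by
  by_contra hh
  have := hS.H0_lt_of_u F hv hh
  omega

theorem H0_full_inj (hS : Sys V L d) (F : Fct V L d) (h : F.H0.card = d) {v w : E} (hv : v ∈ F.S) (hw : w ∈ F.S)
    (e : F.n v = F.n w) : v = w := by
  by_contra hh
  have := hS.H0_lt_of_col F hv hw hh e
  omega

theorem split (hS : Sys V L d) (F : Fct V L d) {M : Type*} [AddCommMonoid M] (f : E → M) : ∑ x ∈ V, f x = ∑ x ∈ F.S, f x + ∑ x ∈ F.H0, f x +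
    ∑ x ∈ F.Hn, f x := by
  have h1 : V = (F.S ∪ F.H0) ∪ F.Hn := by
    ext x
    simp only [Fct.H0, Fct.Hn, Finset.mem_union, Finset.mem_filter]
    constructor
    · intro hx
      by_cases h : x ∈ F.S
      · exact Or.inl (Or.inl h)
      · rcases (hS.u_le_zero F hx h).lt_or_eq with h | h
        · exact Or.inr ⟨hx, h⟩
        · exact Or.inl (Or.inr ⟨hx, h⟩)
    · rintro ((h | h) | h)
      · exact F.sub h
      · exact h.1
      · exact h.1
  conv_lhs => rw [h1]
  rw [Finset.sum_union, Finset.sum_union]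
  · rw [Finset.disjoint_left]
    intro x hx hh
    simp only [Fct.H0, Finset.mem_filter] at hh
    rw [F.u_mem hx] at hh; norm_num at hh
  · rw [Finset.disjoint_left]
    intro x hx hh
    simp only [Fct.H0, Fct.Hn, Finset.mem_union, Finset.mem_filter] at hh hx
    rcases hx with h | h
    · have := F.u_mem h; linarith
    · linarith [h.2]

theorem card_split (hS : Sys V L d) (F : Fct V L d) : F.H0.card + F.Hn.card + 1 = 2 * d := by
  have h := hS.split F (fun _ => 1)
  simp only [Finset.sum_const, smul_eq_mul, mul_one] at h
  have := hS.card
  have := F.card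
  omega

theorem level (hS : Sys V L d) (F : Fct V L d) :
    ∑ x ∈ F.Hn, (- F.u x - 1) = F.H0.card - d + 1 - F.u (∑ x ∈ V, x) := by
  have h := hS.split F (fun x => F.u x)
  rw [map_sum, h, Finset.sum_congr rfl (fun x hx => F.u_mem hx)]
  have h0 : ∑ x ∈ F.H0, F.u x = 0 := Finset.sum_eq_zero fun x hx => by
    simp only [Fct.H0, Finset.mem_filter] at hx; exact hx.2
  have hc : (F.H0.card : ℝ) + F.Hn.card + 1 = 2 * d := by exact_mod_cast hS.card_split F
  have hd : (F.S.card : ℝ) = d := by rw [F.card]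
  rw [Finset.sum_sub_distrib, Finset.sum_neg_distrib, h0]
  simp only [Finset.sum_const, nsmul_eq_mul, mul_one, hd]
  linarith

theorem Hn_le (hS : Sys V L d) (F : Fct V L d) {x : E} (hx : x ∈ F.Hn) : F.u x ≤ -1 := by
  simp only [Fct.Hn, Finset.mem_filter] at hx
  exact (hS.u_int F hx.1).lt_zero hx.2

theorem level_nonneg (hS : Sys V L d) (F : Fct V L d) : (0 : ℝ) ≤ F.H0.card - d + 1 - F.u (∑ x ∈ V, x) := by
  rw [← hS.level F]
  exact Finset.sum_nonneg fun x hx => by have := hS.Hn_le F hx; linarith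

theorem level_ge (hS : Sys V L d) (F : Fct V L d) {x : E} (hx : x ∈ V) :
    F.u (∑ x ∈ V, x) - 2 + (d - F.H0.card) ≤ F.u x := by
  by_cases h : F.u x < 0
  · have hx' : x ∈ F.Hn := by simp [Fct.Hn, hx, h]
    have h1 := hS.level F
    have h2 : - F.u x - 1 ≤ ∑ x ∈ F.Hn, (- F.u x - 1) :=
      Finset.single_le_sum (f := fun x => - F.u x - 1)
        (fun x hx => by have := hS.Hn_le F hx; linarith) hx'
    linarith
  · have := hS.level_nonneg F
    push Not at h
    linarith

/-- L9 -/
theorem n_N (hS : Sys V L d) (F : Fct V L d) {v : E} (hv : v ∈ F.S) : (F.N v).n (F.n v) = v :=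
  (hS.isNb (F.N v) (hS.n_memN F hv)).unique (hS.n_memN F hv) ((hS.isNb F hv).symm hv)

theorem N_u_self (hS : Sys V L d) (F : Fct V L d) {v : E} : (F.N v).u v = 1 - F.k v := by
  unfold Fct.k; ring

theorem M (hS : Sys V L d) (F : Fct V L d) {v : E} (hv : v ∈ F.S) (hk : F.k v ≠ 1) :
    F.u (∑ x ∈ V, x) + F.k v - 2 ≤ F.k v * F.co v (∑ x ∈ V, x) := by
  have h1 := hS.N_u_self F (v := v)
  have h2 := hS.H0_lt_of_u (F.N v) (hS.n_memN F hv) (by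
    rw [hS.n_N F hv, h1]; intro h; apply hk; linarith)
  have h3 := hS.level_ge (F.N v) (F.sub hv)
  have h4 : ((F.N v).H0.card : ℝ) + 1 ≤ d := by exact_mod_cast h2
  rw [h1, hS.N_u F hv] at h3
  linarith

theorem co_N_self (hS : Sys V L d) (F : Fct V L d) {v : E} (hv : v ∈ F.S) (x : E) :
    F.co v x = (F.N v).co (F.n v) x * F.co v (F.n v) := by
  rw [(F.N v).lin (F.co v) x, ← Finset.add_sum_erase _ _ (hS.n_memN F hv)]
  rw [Finset.sum_eq_zero, add_zero]
  intro w hw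
  obtain ⟨h1, h2⟩ := Finset.mem_erase.1 hw
  rcases hS.of_mem_N F hv h2 with h | h
  · exact absurd h h1
  · rw [F.co_ne v hv w h.1 h.2.symm, mul_zero]

theorem co_N (hS : Sys V L d) (F : Fct V L d) {v w : E} (hv : v ∈ F.S) (hw : w ∈ F.S) (hwv : w ≠ v) (x : E) :
    F.co w x = (F.N v).co w x + (F.N v).co (F.n v) x * F.co w (F.n v) := by
  have hw' := hS.mem_N F hv hw hwv
  rw [(F.N v).lin (F.co w) x, ← Finset.add_sum_erase _ _ (hS.n_memN F hv),
    ← Finset.add_sum_erase _ _ (Finset.mem_erase.2 ⟨hS.n_ne F hv hw, hw'⟩)]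
  rw [Finset.sum_eq_zero, add_zero, F.co_self w hw]
  · ring
  intro y hy
  obtain ⟨h0, h3⟩ := Finset.mem_erase.1 hy
  obtain ⟨h1, h2⟩ := Finset.mem_erase.1 h3
  rcases hS.of_mem_N F hv h2 with h | h
  · exact absurd h h1
  · rw [F.co_ne w hw y h.1 h0.symm, mul_zero]

theorem sumL (hS : Sys V L d) : (∑ x ∈ V, x) ∈ L := AddSubgroup.sum_mem _ fun x hx => hS.VL x hx

end Sys
end abstractpart

section abstractpart2
set_option linter.unusedSectionVars false
variable {E : Type*} [AddCommGroup E] [Module ℝ E] [DecidableEq E]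
  {V : Finset E} {L : AddSubgroup E} {d : ℕ}
open Fct

/-- the combinatorial output -/
structure Out (F : Fct V L d) (a b c c' : E) (τ : E → E) : Prop where
  unim : ∀ x ∈ L, ∀ v ∈ F.S, IsI (F.co v x)
  ha : a ∈ F.S
  hb : b ∈ F.S
  hc : c ∈ F.S
  hab : a ≠ b
  hac : a ≠ c
  hbc : b ≠ c
  maps : ∀ t ∈ ((F.S.erase a).erase b).erase c, τ t ∈ ((F.S.erase a).erase b).erase c
  invol : ∀ t ∈ ((F.S.erase a).erase b).erase c, τ (τ t) = t
  fpf : ∀ t ∈ ((F.S.erase a).erase b).erase c, τ t ≠ t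
  mem : ∀ x, x ∈ V ↔ ((x = a ∨ x = -a ∨ x = b - a ∨ x = a - b ∨ x = b ∨ x = -b ∨ x = c ∨ x = c') ∨
    ∃ t ∈ ((F.S.erase a).erase b).erase c, x = t ∨ x = -t ∨ x = τ t - t)

theorem sum_le_except (T : Finset E) (f : E → ℝ) (a : E) (h0 : ∀ x ∈ T, f x ≤ 0)
    (h1 : ∀ x ∈ T, x ≠ a → f x ≤ -1) : ∑ x ∈ T, f x ≤ 1 - T.card := by
  have h2 : ∑ x ∈ T.erase a, f x ≤ ∑ x ∈ T.erase a, (-1 : ℝ) :=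
    Finset.sum_le_sum fun x hx => h1 x (Finset.mem_of_mem_erase hx) (Finset.ne_of_mem_erase hx)
  rw [Finset.sum_const, nsmul_eq_mul] at h2
  by_cases ha : a ∈ T
  · have h3 := Finset.add_sum_erase T f ha
    have h4 : ((T.erase a).card : ℝ) + 1 = T.card := by exact_mod_cast Finset.card_erase_add_one ha
    have := h0 a ha
    linarith
  · rw [Finset.erase_eq_of_notMem ha] at h2
    linarith

namespace Fct
/-- special facet -/
def Sp (F : Fct V L d) : Prop := ∀ v ∈ F.S, 0 ≤ F.co v (∑ x ∈ V, x)
end Fct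

namespace Sys

theorem H0_image (hS : Sys V L d) (F : Fct V L d) (h : F.H0.card = d) : F.H0 = F.S.image F.n :=
  Finset.eq_of_subset_of_card_le (hS.H0_sub F)
    (Finset.card_image_le.trans (by rw [F.card, h]))

theorem sum_H0 (hS : Sys V L d) (F : Fct V L d) (h : F.H0.card = d) (f : E → ℝ) :
    ∑ x ∈ F.H0, f x = ∑ s ∈ F.S, f (F.n s) := by
  rw [hS.H0_image F h, Finset.sum_image]
  intro v hv w hw e
  exact hS.H0_full_inj F h hv hw e

theorem mem_Hn (hS : Sys V L d) (F : Fct V L d) {x : E} : x ∈ F.Hn ↔ x ∈ V ∧ F.u x < 0 := by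
  simp [Fct.Hn]
theorem mem_H0 (hS : Sys V L d) (F : Fct V L d) {x : E} : x ∈ F.H0 ↔ x ∈ V ∧ F.u x = 0 := by
  simp [Fct.H0]

section nz

theorem sp_u (hS : Sys V L d) (hν : (∑ x ∈ V, x) ≠ 0) {F : Fct V L d} (h : F.Sp) : F.u (∑ x ∈ V, x) = 1 ∧ F.H0.card = d := by
  have h0 : 0 ≤ F.u (∑ x ∈ V, x) := by rw [F.u_apply]; exact Finset.sum_nonneg h
  have h1 : 1 ≤ F.u (∑ x ∈ V, x) := by
    apply (F.u_int hS.sumL).pos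
    refine lt_of_le_of_ne h0 fun e => hν ?_
    rw [F.u_apply, eq_comm, Finset.sum_eq_zero_iff_of_nonneg h] at e
    exact F.ext' fun v hv => by rw [e v hv, map_zero]
  have h2 := hS.level_nonneg F
  have h3 := hS.H0_le F
  have h4 : (F.H0.card : ℝ) ≤ d := by exact_mod_cast h3
  refine ⟨by linarith, ?_⟩
  have : (d : ℝ) ≤ F.H0.card := by linarith
  have : d ≤ F.H0.card := by exact_mod_cast this
  omega

theorem sp_ge (hS : Sys V L d) (hν : (∑ x ∈ V, x) ≠ 0) {F : Fct V L d} (h : F.Sp) {x : E} (hx : x ∈ V) : -1 ≤ F.u x := by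
  have h1 := hS.level_ge F hx
  obtain ⟨h2, h3⟩ := hS.sp_u hν h
  rw [h2, h3] at h1
  linarith

theorem sp_Hn (hS : Sys V L d) (hν : (∑ x ∈ V, x) ≠ 0) {F : Fct V L d} (h : F.Sp) {x : E} (hx : x ∈ F.Hn) : F.u x = -1 :=
  le_antisymm (hS.Hn_le F hx) (hS.sp_ge hν h (hS.mem_Hn F |>.1 hx).1)

theorem sp_Hncard (hS : Sys V L d) (hν : (∑ x ∈ V, x) ≠ 0) {F : Fct V L d} (h : F.Sp) : (F.Hn.card : ℝ) = d - 1 := by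
  have h1 := hS.card_split F
  rw [(hS.sp_u hν h).2] at h1
  have : (d : ℝ) + F.Hn.card + 1 = 2 * d := by exact_mod_cast h1
  linarith

theorem sp_n (hS : Sys V L d) (hν : (∑ x ∈ V, x) ≠ 0) {F : Fct V L d} (h : F.Sp) {v : E} (hv : v ∈ F.S) : F.u (F.n v) = 0 :=
  hS.H0_full F (hS.sp_u hν h).2 hv

theorem sp_kn (hS : Sys V L d) (hν : (∑ x ∈ V, x) ≠ 0) {F : Fct V L d} (h : F.Sp) {v : E} (hv : v ∈ F.S) : F.k v * F.co v (F.n v) = -1 := by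
  rw [hS.k_co_n F hv, hS.sp_n hν h hv]; norm_num

theorem sp_n_nonneg (hS : Sys V L d) (hν : (∑ x ∈ V, x) ≠ 0) {F : Fct V L d} (h : F.Sp) {v w : E} (hv : v ∈ F.S) (hw : w ∈ F.S)
    (hvw : w ≠ v) : 0 ≤ F.co w (F.n v) := by
  by_contra! hh
  have := hS.eq_n F hw (hS.n_memV F hv) (hS.sp_n hν h hv) hh
  exact hvw (hS.H0_full_inj F (hS.sp_u hν h).2 hv hw this).symm

theorem sp_k (hS : Sys V L d) (hν : (∑ x ∈ V, x) ≠ 0) {F : Fct V L d} (h : F.Sp) {v : E} (hv : v ∈ F.S) (h0 : F.co v (∑ x ∈ V, x) = 0) :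
    F.k v = 1 := by
  by_contra hh
  have h1 := hS.M F hv hh
  rw [h0, (hS.sp_u hν h).1] at h1
  have := hS.k_pos F hv
  exact hh (by linarith)

theorem sp_co (hS : Sys V L d) (hν : (∑ x ∈ V, x) ≠ 0) {F : Fct V L d} {v w : E} (hv : v ∈ F.S)
    (h0 : F.co v (∑ x ∈ V, x) = 0) (hw : w ∈ F.S) (hwv : w ≠ v) :
    (F.N v).co w (∑ x ∈ V, x) = F.co w (∑ x ∈ V, x) := by
  have h1 := hS.co_N_self F hv (∑ x ∈ V, x)
  rw [h0] at h1
  have h2 := hS.co_n_neg F hv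
  have h3 : (F.N v).co (F.n v) (∑ x ∈ V, x) = 0 := by
    rcases mul_eq_zero.1 h1.symm with h | h
    · exact h
    · linarith
  have h4 := hS.co_N F hv hw hwv (∑ x ∈ V, x)
  rw [h3] at h4
  linarith

theorem sp_N (hS : Sys V L d) (hν : (∑ x ∈ V, x) ≠ 0) {F : Fct V L d} (h : F.Sp) {v : E} (hv : v ∈ F.S)
    (h0 : F.co v (∑ x ∈ V, x) = 0) : (F.N v).Sp := by
  intro w hw
  rcases hS.of_mem_N F hv hw with rfl | ⟨hw, hwv⟩
  · have h1 := hS.co_N_self F hv (∑ x ∈ V, x)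
    rw [h0] at h1
    have h2 := hS.co_n_neg F hv
    rcases mul_eq_zero.1 h1.symm with h | h
    · exact h.ge
    · linarith
  · rw [hS.sp_co hν hv h0 hw hwv]; exact h w hw

theorem sp_le (hS : Sys V L d) (hν : (∑ x ∈ V, x) ≠ 0) {F : Fct V L d} (h : F.Sp) {v : E} (hv : v ∈ F.S)
    (h0 : F.co v (∑ x ∈ V, x) = 0) {x : E} (hx : x ∈ V) : F.co v x ≤ F.u x + 1 := by
  have h1 := hS.sp_ge hν (hS.sp_N hν h hv h0) hx
  rw [hS.N_u F hv, hS.sp_k hν h hv h0] at h1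
  linarith

theorem sp_H0form (hS : Sys V L d) (hν : (∑ x ∈ V, x) ≠ 0) {F : Fct V L d} (h : F.Sp) {p : E} (hp : p ∈ F.S) {x : E} (hx : x ∈ V)
    (hu : F.u x = 0) (hc : F.co p x = 1) : ∃ y ∈ F.S, y ≠ p ∧ x = p - y := by
  obtain ⟨y, hy, hyn⟩ := Finset.mem_image.1 (hS.H0_sub F (hS.mem_H0 F |>.2 ⟨hx, hu⟩))
  have hyp : y ≠ p := by
    rintro rfl
    have := hS.co_n_neg F hy
    rw [hyn] at this; linarith
  have h1 := hS.sp_kn hν h hy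
  rw [hyn] at h1
  have hk := hS.k_pos F hy
  have h2 : -1 ≤ F.co y x := by
    by_contra! hh; nlinarith
  have h3 := F.u_erase hy x
  have hpe : p ∈ F.S.erase y := by simp [hp, hyp.symm]
  rw [hu, ← Finset.add_sum_erase _ _ hpe, hc] at h3
  have h4 : ∀ w ∈ (F.S.erase y).erase p, 0 ≤ F.co w x := by
    intro w hw
    simp only [Finset.mem_erase] at hw
    have := hS.sp_n_nonneg hν h hy hw.2.2 hw.2.1
    rwa [hyn] at this
  have h5 := Finset.sum_nonneg h4
  have h6 : ∑ w ∈ (F.S.erase y).erase p, F.co w x = 0 := by linarith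
  rw [Finset.sum_eq_zero_iff_of_nonneg h4] at h6
  refine ⟨y, hy, hyp, F.ext' fun w hw => ?_⟩
  rw [map_sub, F.co_eq hw hp, F.co_eq hw hy]
  by_cases e1 : w = p
  · subst e1; simp [hyp.symm, hc]
  by_cases e2 : w = y
  · subst e2; simp [hyp]; linarith
  simp [e1, e2]
  exact h6 w (by simp [hw, e1, e2])

theorem sp_R (hS : Sys V L d) (hν : (∑ x ∈ V, x) ≠ 0) {F : Fct V L d} (h : F.Sp) {z : E} (hz : z ∈ F.S)
    (h0 : F.co z (∑ x ∈ V, x) = 0) {x : E} (hx : x ∈ V) (hu : F.u x = -1) (hc : F.co z x < 0) :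
    ∃ y ∈ F.S, y ≠ z ∧ x = F.n z - y := by
  have hk := hS.sp_k hν h hz h0
  have h1 := hS.sp_kn hν h hz
  rw [hk, one_mul] at h1
  have hi := hS.k_co_int F hz (hS.VL x hx)
  rw [hk, one_mul] at hi
  have h2 := hS.u_le_kco F hz hx (hS.notmem_of_u F (by rw [hu]; norm_num)) (by
    rintro rfl
    rw [hS.sp_n hν h hz] at hu; norm_num at hu)
  rw [hk, one_mul] at h2
  have h3 : F.co z x = -1 := le_antisymm (hi.lt_zero hc) (by linarith)
  have h4 := hS.co_N_self F hz x
  rw [h1, h3] at h4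
  have h5 := hS.N_u F hz x
  rw [hk, hu, h3] at h5
  obtain ⟨y, hy, hyp, e⟩ := hS.sp_H0form hν (hS.sp_N hν h hz h0) (hS.n_memN F hz) hx
    (by rw [h5]; norm_num) (by linarith)
  rcases hS.of_mem_N F hz hy with h6 | h6
  · exact absurd h6 hyp
  · exact ⟨y, h6.1, h6.2, e⟩

theorem sp_invol (hS : Sys V L d) (hν : (∑ x ∈ V, x) ≠ 0) {F : Fct V L d} (h : F.Sp) {y z t : E} (hy : y ∈ F.S) (hz : z ∈ F.S) (ht : t ∈ F.S)
    (hyz : y ≠ z) (htz : t ≠ z)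
    (h0 : F.co z (∑ x ∈ V, x) = 0) (h1 : F.co t (∑ x ∈ V, x) = 0)
    (e1 : F.n y = z - y) (e2 : F.n z = t - z) : t = y := by
  by_contra hty
  have hyV := hS.n_memV F hy
  have hk := hS.sp_k hν h hz h0
  have h5 := hS.N_u F hz (F.n y)
  have e4 : F.co z (F.n y) = 1 := by
    rw [e1, map_sub, F.co_self z hz, F.co_ne z hz y hy hyz.symm, sub_zero]
  rw [hS.sp_n hν h hy, hk, e4] at h5
  have h6 := hS.sp_le hν (hS.sp_N hν h hz h0) (hS.mem_N F hz ht htz)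
    (by rw [hS.sp_co hν hz h0 ht htz, h1]) hyV
  have e3 : F.n y = t - F.n z - y := by rw [e1, e2]; abel
  rw [h5, e3, map_sub, map_sub, co_self _ t (hS.mem_N F hz ht htz),
    co_ne _ t (hS.mem_N F hz ht htz) _ (hS.n_memN F hz) (hS.n_ne F hz ht),
    co_ne _ t (hS.mem_N F hz ht htz) _ (hS.mem_N F hz hy hyz) hty] at h6
  norm_num at h6

theorem sp_case_a (hS : Sys V L d) (hν : (∑ x ∈ V, x) ≠ 0) {F : Fct V L d} (hdo : Odd d) (h : F.Sp) {w : E} (hw : w ∈ F.S)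
    (hkw : F.k w ≠ 1) : False := by
  have hkw2 : 2 ≤ F.k w := (hS.k_int F hw).gt_one (lt_of_le_of_ne (hS.k_pos F hw) (Ne.symm hkw))
  have hw1 := hS.sp_kn hν h hw
  have hwu := hS.sp_n hν h hw
  rw [F.u_erase hw] at hwu
  have hneg := hS.co_n_neg F hw
  have : ∃ v ∈ F.S.erase w, 0 < F.co v (F.n w) := by
    by_contra! hh
    have := Finset.sum_nonpos hh
    linarith
  obtain ⟨v, hve, hvpos⟩ := this
  have hvw : v ≠ w := Finset.ne_of_mem_erase hve
  have hv := Finset.mem_of_mem_erase hve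
  have hvk := hS.k_pos F hv
  have hi := (hS.k_co_int F hv (hS.VL _ (hS.n_memV F hw))).pos (by positivity)
  rw [← Finset.add_sum_erase _ _ hve] at hwu
  have h5 : 0 ≤ ∑ x ∈ (F.S.erase w).erase v, F.co x (F.n w) := Finset.sum_nonneg fun x hx => by
    simp only [Finset.mem_erase] at hx
    exact hS.sp_n_nonneg hν h hw hx.2.2 hx.2.1
  have h6 : F.co v (F.n w) ≤ - F.co w (F.n w) := by linarith
  have h7 : F.k w ≤ F.k v := by
    have a1 : F.k w * F.co v (F.n w) ≤ 1 := by nlinarith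
    by_contra! hh
    nlinarith
  have Mw := hS.M F hw hkw
  have Mv := hS.M F hv (by intro hh; linarith)
  have huν := (hS.sp_u hν h).1
  rw [huν] at Mw Mv
  have cw : 1/2 ≤ F.co w (∑ x ∈ V, x) := by
    by_contra! hh
    nlinarith
  have cv : 1/2 ≤ F.co v (∑ x ∈ V, x) := by
    by_contra! hh
    nlinarith
  have hsum := huν
  rw [F.u_erase hw, ← Finset.add_sum_erase _ _ hve] at hsum
  have hnn : ∀ x ∈ (F.S.erase w).erase v, 0 ≤ F.co x (∑ x ∈ V, x) := fun x hx => h x (by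
    simp only [Finset.mem_erase] at hx; exact hx.2.2)
  have hnn' := Finset.sum_nonneg hnn
  have cw' : F.co w (∑ x ∈ V, x) = 1/2 := by linarith
  have cv' : F.co v (∑ x ∈ V, x) = 1/2 := by linarith
  have hz0 : ∑ x ∈ (F.S.erase w).erase v, F.co x (∑ x ∈ V, x) = 0 := by linarith
  rw [Finset.sum_eq_zero_iff_of_nonneg hnn] at hz0
  have kw : F.k w = 2 := by rw [cw'] at Mw; linarith
  have kv : F.k v = 2 := by rw [cv'] at Mv; linarith
  set Z := (F.S.erase w).erase v with hZ
  have memZ : ∀ z, z ∈ Z ↔ z ∈ F.S ∧ z ≠ v ∧ z ≠ w := by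
    intro z; simp only [hZ, Finset.mem_erase]; tauto
  have kz : ∀ z ∈ Z, F.k z = 1 := fun z hz => hS.sp_k hν h ((memZ z).1 hz).1 (hz0 z hz)
  have intz : ∀ z ∈ Z, ∀ x ∈ V, IsI (F.co z x) := fun z hz x hx => by
    have := hS.k_co_int F ((memZ z).1 hz).1 (hS.VL x hx)
    rwa [kz z hz, one_mul] at this
  -- b
  have bdef : ∀ x, F.u x = F.co w x + (F.co v x + ∑ z ∈ Z, F.co z x) := fun x => by
    rw [F.u_erase hw, ← Finset.add_sum_erase _ _ hve]
  have bS : ∑ s ∈ F.S, (F.u s - F.co w s - F.co v s) = d - 2 := by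
    rw [Finset.sum_sub_distrib, Finset.sum_sub_distrib, Finset.sum_congr rfl (fun x hx => F.u_mem hx),
      Finset.sum_congr rfl (fun x hx => F.co_eq hw hx), Finset.sum_congr rfl (fun x hx => F.co_eq hv hx)]
    simp [F.card, hw, hv]; ring
  have bHn : ∑ x ∈ F.Hn, (F.u x - F.co w x - F.co v x) ≤ 1 - F.Hn.card := by
    apply sum_le_except _ _ (-((1/2:ℝ) • v + (1/2:ℝ) • w))
    · intro x hx
      have := bdef x
      have h2 : ∑ z ∈ Z, F.co z x ≤ 0 := Finset.sum_nonpos fun z hz => by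
        have := hS.sp_le hν h ((memZ z).1 hz).1 (hz0 z hz) ((hS.mem_Hn F).1 hx).1
        rw [hS.sp_Hn hν h hx] at this; linarith
      linarith
    · intro x hx hne
      by_contra! hh
      have hb := bdef x
      have hxV := ((hS.mem_Hn F).1 hx).1
      have hux := hS.sp_Hn hν h hx
      have hxS := hS.notmem_of_u F (by rw [hux]; norm_num)
      have h2 : ∀ z ∈ Z, F.co z x ≤ 0 := fun z hz => by
        have := hS.sp_le hν h ((memZ z).1 hz).1 (hz0 z hz) hxV
        rw [hux] at this; linarith
      have h3 := Finset.sum_nonpos h2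
      have h4 : IsI (∑ z ∈ Z, F.co z x) := IsI.sum _ _ fun z hz => intz z hz x hxV
      have h5 := h4.gt_neg_one (by linarith)
      have h6 : ∑ z ∈ Z, F.co z x = 0 := le_antisymm h3 h5
      have h7 := h6
      rw [Finset.sum_eq_zero_iff_of_nonpos h2] at h7
      have a1 := hS.u_le_kco F hw hxV hxS (by rintro rfl; rw [hS.sp_n hν h hw] at hux; norm_num at hux)
      have a2 := hS.u_le_kco F hv hxV hxS (by rintro rfl; rw [hS.sp_n hν h hv] at hux; norm_num at hux)
      rw [kw] at a1; rw [kv] at a2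
      apply hne
      apply F.ext'
      intro s hs
      rw [map_neg, map_add, map_smul, map_smul, F.co_eq hs hv, F.co_eq hs hw]
      by_cases e1 : s = w
      · subst e1; simp [hvw.symm]; linarith
      by_cases e2 : s = v
      · subst e2; simp [hvw]; linarith
      · simp [e1, e2]; exact h7 s ((memZ s).2 ⟨hs, e2, e1⟩)
  have hb := hS.split F (fun x => F.u x - F.co w x - F.co v x)
  have hbν : ∑ x ∈ V, (F.u x - F.co w x - F.co v x) = 0 := by
    rw [Finset.sum_sub_distrib, Finset.sum_sub_distrib, ← map_sum, ← map_sum, ← map_sum, huν, cw', cv']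
    norm_num
  rw [bS, hbν, hS.sum_H0 F (hS.sp_u hν h).2, ← Finset.add_sum_erase _ _ hw,
    ← Finset.add_sum_erase _ (fun s => F.u (F.n s) - F.co w (F.n s) - F.co v (F.n s)) hve] at hb
  have hHc := hS.sp_Hncard hν h
  -- v', w' have b = 0
  have key : ∀ x ∈ F.S, (x = v ∨ x = w) → F.u (F.n x) - F.co w (F.n x) - F.co v (F.n x) ≤ 0 := by
    intro x hx hxx
    by_contra! hh
    have hb := bdef (F.n x)
    have h1 : IsI (∑ z ∈ Z, F.co z (F.n x)) := IsI.sum _ _ fun z hz => intz z hz _ (hS.n_memV F hx)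
    have h2 := h1.pos (by linarith)
    rw [hS.sp_n hν h hx] at hb
    rcases hxx with rfl | rfl
    · have := hS.sp_n_nonneg hν h hx hw hvw.symm
      have h3 := hS.sp_kn hν h hx
      rw [kv] at h3; linarith
    · have := hS.sp_n_nonneg hν h hx hv hvw
      have h3 := hS.sp_kn hν h hx
      rw [kw] at h3; linarith
  have kv0 := key v hv (Or.inl rfl)
  have kw0 := key w hw (Or.inr rfl)
  have hzle : ∀ z ∈ Z, F.u (F.n z) - F.co w (F.n z) - F.co v (F.n z) ≤ 0 := by
    intro z hz
    obtain ⟨a, b, c⟩ := (memZ z).1 hz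
    rw [hS.sp_n hν h a]
    have := hS.sp_n_nonneg hν h a hw c.symm
    have := hS.sp_n_nonneg hν h a hv b.symm
    linarith
  have hzs := Finset.sum_nonpos hzle
  have hzs0 : ∑ z ∈ Z, (F.u (F.n z) - F.co w (F.n z) - F.co v (F.n z)) = 0 := by linarith
  rw [Finset.sum_eq_zero_iff_of_nonpos hzle] at hzs0
  have hσ : ∀ z : E, ∃ t : E, z ∈ Z → t ∈ Z ∧ t ≠ z ∧ F.n z = t - z := by
    intro z
    by_cases hz : z ∈ Z
    swap
    · exact ⟨z, fun h => absurd h hz⟩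
    obtain ⟨a, b, c⟩ := (memZ z).1 hz
    have e0 := hzs0 z hz
    have hb := bdef (F.n z)
    rw [hS.sp_n hν h a] at e0 hb
    have p1 := hS.sp_n_nonneg hν h a hw c.symm
    have p2 := hS.sp_n_nonneg hν h a hv b.symm
    have q1 : F.co w (F.n z) = 0 := by linarith
    have q2 : F.co v (F.n z) = 0 := by linarith
    have q3 := hS.sp_kn hν h a
    rw [kz z hz, one_mul] at q3
    rw [q1, q2, ← Finset.add_sum_erase _ _ hz, q3] at hb
    obtain ⟨t, ht, ht1, ht2⟩ := sum_one (Z.erase z) (fun s => F.co s (F.n z))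
      (fun s hs => hS.sp_n_nonneg hν h a ((memZ s).1 (Finset.mem_of_mem_erase hs)).1
        (Finset.ne_of_mem_erase hs))
      (fun s hs => intz s (Finset.mem_of_mem_erase hs) _ (hS.n_memV F a)) (by linarith)
    obtain ⟨htz, htZ⟩ := Finset.mem_erase.1 ht
    obtain ⟨a', b', c'⟩ := (memZ t).1 htZ
    refine ⟨t, fun _ => ⟨htZ, htz, F.ext' fun s hs => ?_⟩⟩
    rw [map_sub, F.co_eq hs a', F.co_eq hs a]
    by_cases e1 : s = w
    · subst e1; simp [c.symm, c'.symm, q1]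
    by_cases e2 : s = v
    · subst e2; simp [b.symm, b'.symm, q2]
    by_cases e3 : s = z
    · subst e3; simp [htz.symm, q3]
    by_cases e4 : s = t
    · subst e4; simp [htz, ht1]
    simp [e3, e4]
    exact ht2 s (Finset.mem_erase.2 ⟨e3, (memZ s).2 ⟨hs, e2, e1⟩⟩) e4
  choose σ hσ using hσ
  have : Nonempty E := ⟨0⟩
  obtain ⟨m, f, hm, -⟩ := pair_enum σ Z (fun z hz => (hσ z hz).1) (fun y hy => by
    obtain ⟨a1, a2, a3⟩ := hσ y hy
    obtain ⟨b1, b2, b3⟩ := hσ _ a1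
    exact hS.sp_invol hν h ((memZ _).1 hy).1 ((memZ _).1 a1).1 ((memZ _).1 b1).1 a2.symm b2
      (hz0 _ a1) (hz0 _ b1) a3 b3) (fun z hz => (hσ z hz).2.1)
  have c1 := Finset.card_erase_add_one hve
  have c2 := Finset.card_erase_add_one hw
  rw [F.card] at c2
  rw [← hZ] at c1
  obtain ⟨r, hr⟩ := hdo
  omega

end nz
end Sys
end abstractpart2

section abstractpart3
set_option linter.unusedSectionVars false
variable {E : Type*} [AddCommGroup E] [Module ℝ E] [DecidableEq E]
  {V : Finset E} {L : AddSubgroup E} {d : ℕ}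
open Fct

namespace Fct

theorem form_sub (F : Fct V L d) {v x : E} (hv : v ∈ F.S) (hu : F.u x = 0) (hc : F.co v x = -1)
    (h0 : ∀ w ∈ F.S, w ≠ v → 0 ≤ F.co w x) (hi : ∀ w ∈ F.S, IsI (F.co w x)) :
    ∃ s ∈ F.S, s ≠ v ∧ x = s - v := by
  rw [F.u_erase hv, hc] at hu
  obtain ⟨t, ht, ht1, ht2⟩ := sum_one (F.S.erase v) (fun s => F.co s x)
      (fun s hs => h0 s (Finset.mem_of_mem_erase hs) (Finset.ne_of_mem_erase hs))
      (fun s hs => hi s (Finset.mem_of_mem_erase hs)) (by linarith)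
  obtain ⟨htv, htS⟩ := Finset.mem_erase.1 ht
  refine ⟨t, htS, htv, F.ext' fun s hs => ?_⟩
  rw [map_sub, F.co_eq hs htS, F.co_eq hs hv]
  by_cases e3 : s = v
  · subst e3; simp [htv.symm, hc]
  by_cases e4 : s = t
  · subst e4; simp [htv, ht1]
  simp [e3, e4]
  exact ht2 s (Finset.mem_erase.2 ⟨e3, hs⟩) e4

theorem form_neg (F : Fct V L d) {x : E} (hu : F.u x = -1)
    (h0 : ∀ w ∈ F.S, F.co w x ≤ 0) (hi : ∀ w ∈ F.S, IsI (F.co w x)) :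
    ∃ s ∈ F.S, x = - s := by
  rw [F.u_apply] at hu
  obtain ⟨t, htS, ht1, ht2⟩ := sum_one F.S (fun s => - F.co s x)
      (fun s hs => by have := h0 s hs; linarith)
      (fun s hs => (hi s hs).neg) (by rw [Finset.sum_neg_distrib]; linarith)
  refine ⟨t, htS, F.ext' fun s hs => ?_⟩
  rw [map_neg, F.co_eq hs htS]
  by_cases e4 : s = t
  · subst e4; simp; linarith
  simp [e4]
  have := ht2 s hs e4
  linarith

theorem fib_sum (F : Fct V L d) (T : Finset E) (hT : T ⊆ F.S) (σ : E → E) (hσ : ∀ s ∈ T, σ s ∈ F.S) {z : E} (hz : z ∈ F.S) :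
    ∑ s ∈ T, F.co z (σ s - s) = ((T.filter fun s => σ s = z).card : ℝ) - if z ∈ T then 1 else 0 := by
  rw [Finset.sum_congr rfl (g := fun s => (if σ s = z then (1:ℝ) else 0) - if z = s then 1 else 0)]
  · rw [Finset.sum_sub_distrib, Finset.sum_boole, Finset.sum_ite_eq]
  · intro s hs
    rw [map_sub, F.co_eq hz (hσ s hs), F.co_eq hz (hT hs)]
    simp only [eq_comm]

theorem co_neg_sum (F : Fct V L d) (T : Finset E) (hT : ∀ x ∈ T, ∃ s ∈ F.S, x = - s) {z : E}
    (hz : z ∈ F.S) : ∑ x ∈ T, F.co z x = - if -z ∈ T then 1 else 0 := by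
  rw [Finset.sum_congr rfl (g := fun x => - if -z = x then (1:ℝ) else 0)]
  · rw [Finset.sum_neg_distrib, Finset.sum_ite_eq]
  · intro x hx
    obtain ⟨s, hs, rfl⟩ := hT x hx
    rw [map_neg, F.co_eq hz hs]
    simp only [neg_inj]

end Fct

theorem evencard (σ : E → E) (T : Finset E) (h1 : ∀ t ∈ T, σ t ∈ T) (h2 : ∀ t ∈ T, σ (σ t) = t)
    (h3 : ∀ t ∈ T, σ t ≠ t) : Even T.card := by
  have : Nonempty E := ⟨0⟩
  obtain ⟨m, f, hm, -⟩ := pair_enum σ T h1 h2 h3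
  exact ⟨m, by omega⟩

namespace Sys

section nz

theorem sp_case_b (hS : Sys V L d) (hν : (∑ x ∈ V, x) ≠ 0) {F : Fct V L d} (hdo : Odd d) (h : F.Sp) (hk : ∀ w ∈ F.S, F.k w = 1) :
    ∃ a b c τ, Out F a b c (a - c) τ := by
  have hInt : ∀ x ∈ L, ∀ v ∈ F.S, IsI (F.co v x) := fun x hx v hv => by
    have := hS.k_co_int F hv hx
    rwa [hk v hv, one_mul] at this
  have huν := (hS.sp_u hν h).1
  obtain ⟨v0, hv0, c0, cz⟩ := sum_one F.S (fun v => F.co v (∑ x ∈ V, x)) h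
    (fun v hv => hInt _ hS.sumL v hv) (by rw [← F.u_apply, huν])
  have hσ : ∀ v : E, ∃ t : E, v ∈ F.S → t ∈ F.S ∧ t ≠ v ∧ F.n v = t - v := by
    intro v
    by_cases hv : v ∈ F.S
    swap
    · exact ⟨v, fun h => absurd h hv⟩
    have h1 := hS.sp_kn hν h hv
    rw [hk v hv, one_mul] at h1
    obtain ⟨t, h1, h2, h3⟩ := F.form_sub hv (hS.sp_n hν h hv) h1
      (fun w hw hwv => hS.sp_n_nonneg hν h hv hw hwv)
      (fun w hw => hInt _ (hS.memL (hS.n_memV F hv)) w hw)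
    exact ⟨t, fun _ => ⟨h1, h2, h3⟩⟩
  choose σ hσ using hσ
  have σS : ∀ v ∈ F.S, σ v ∈ F.S := fun v hv => (hσ v hv).1
  have σne : ∀ v ∈ F.S, σ v ≠ v := fun v hv => (hσ v hv).2.1
  have nσ : ∀ v ∈ F.S, F.n v = σ v - v := fun v hv => (hσ v hv).2.2
  have star : ∀ y ∈ F.S, σ y ≠ v0 → σ (σ y) = y ∨ σ (σ y) = v0 := by
    intro y hy hy0
    by_cases ht : σ (σ y) = v0
    · exact Or.inr ht
    have hz := σS y hy
    exact Or.inl (hS.sp_invol hν h hy hz (σS _ hz) (σne y hy).symm (σne _ hz)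
      (cz _ hz hy0) (cz _ (σS _ hz) ht) (nσ y hy) (nσ _ hz))
  -- Hn
  have HV : ∀ x ∈ F.Hn, x ∈ V := fun x hx => ((hS.mem_Hn F).1 hx).1
  have Hu : ∀ x ∈ F.Hn, F.u x = -1 := fun x hx => hS.sp_Hn hν h hx
  have Hge : ∀ x ∈ F.Hn, ∀ s ∈ F.S, -1 ≤ F.co s x := by
    intro x hx s hs
    have := hS.u_le_kco F hs (HV x hx) (hS.notmem_of_u F (by rw [Hu x hx]; norm_num)) (by
      rintro rfl
      have := Hu _ hx
      rw [hS.sp_n hν h hs] at this; norm_num at this)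
    rw [hk s hs, one_mul, Hu x hx] at this
    exact this
  have Hle : ∀ x ∈ F.Hn, ∀ s ∈ F.S, s ≠ v0 → F.co s x ≤ 0 := by
    intro x hx s hs hs0
    have := hS.sp_le hν h hs (cz s hs hs0) (HV x hx)
    rw [Hu x hx] at this
    linarith
  have Hi : ∀ x ∈ F.Hn, ∀ s ∈ F.S, IsI (F.co s x) := fun x hx s hs => hInt x (hS.memL (HV x hx)) s hs
  -- sum identities
  have cnt : ∀ s ∈ F.S, F.co s (∑ x ∈ V, x) = ((F.S.filter fun t => σ t = s).card : ℝ) +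
      ∑ x ∈ F.Hn, F.co s x := by
    intro s hs
    have e1 : ∑ t ∈ F.S, F.co s (F.n t) = ∑ t ∈ F.S, F.co s (σ t - t) :=
      Finset.sum_congr rfl fun t ht => by rw [nσ t ht]
    rw [map_sum, hS.split F, hS.sum_H0 F (hS.sp_u hν h).2, e1, Finset.sum_congr rfl (fun x hx => F.co_eq hs hx),
      F.fib_sum _ (Finset.Subset.refl _) σ σS hs]
    simp [hs]
  have Hn0 : ∀ x ∈ F.Hn, F.co v0 x ≤ 0 := by
    intro x hx
    by_contra! hpos
    have h1 := (Hi x hx v0 hv0).pos hpos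
    have hu := Hu x hx
    rw [F.u_erase hv0] at hu
    have : ∃ z ∈ F.S.erase v0, F.co z x < 0 := by
      by_contra! hh
      have := Finset.sum_nonneg hh
      linarith
    obtain ⟨z, hz, hzx⟩ := this
    obtain ⟨hz0, hz⟩ := Finset.mem_erase.1 hz
    have aux : ∀ z ∈ F.S, z ≠ v0 → F.co z x < 0 → σ z = v0 ∧ ∃ y ∈ F.S, y ≠ z ∧ y ≠ v0 ∧ x = v0 - z - y := by
      intro z hz hz0 hzx
      obtain ⟨y, hy, hyz, e⟩ := hS.sp_R hν h hz (cz z hz hz0) (HV x hx) (Hu x hx) hzx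
      rw [nσ z hz] at e
      have e1 := h1
      rw [e, map_sub, map_sub, F.co_eq hv0 (σS z hz), F.co_eq hv0 hz, F.co_eq hv0 hy] at e1
      have e2 : v0 = σ z := by
        by_contra hh
        rw [if_neg hh] at e1
        split_ifs at e1 <;> norm_num at e1
      rw [if_pos e2, if_neg hz0.symm] at e1
      refine ⟨e2.symm, y, hy, hyz, ?_, by rw [e, ← e2]⟩
      rintro rfl
      norm_num at e1
    obtain ⟨s1, y, hy, hyz, hy0, ex⟩ := aux z hz hz0 hzx
    obtain ⟨s2, -⟩ := aux y hy hy0 (by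
      rw [ex, map_sub, map_sub, F.co_ne y hy _ hv0 hy0, F.co_ne y hy _ hz hyz, F.co_self y hy]
      norm_num)
    have c2 : (2:ℝ) ≤ (F.S.filter fun t => σ t = v0).card := by
      have : ({y, z} : Finset E) ⊆ F.S.filter fun t => σ t = v0 := by
        intro t ht
        simp only [Finset.mem_insert, Finset.mem_singleton] at ht
        rcases ht with rfl | rfl <;> simp [*]
      have := Finset.card_le_card this
      rw [Finset.card_pair hyz] at this
      exact_mod_cast this
    have c1 := cnt v0 hv0
    rw [c0, ← Finset.add_sum_erase _ _ hx] at c1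
    have c3 : -1 ≤ ∑ y ∈ F.Hn.erase x, F.co v0 y := by
      have k1 : ∀ y ∈ F.Hn.erase x, (-if -v0 = y then (1:ℝ) else 0) ≤ F.co v0 y := by
        intro y hy
        have hy := Finset.mem_of_mem_erase hy
        by_cases hneg : F.co v0 y < 0
        · have e1 := le_antisymm ((Hi y hy v0 hv0).lt_zero hneg) (Hge y hy v0 hv0)
          have hu := Hu y hy
          rw [F.u_erase hv0, e1] at hu
          obtain ⟨s, hs, rfl⟩ := F.form_neg (Hu y hy) (fun w hw => by
            by_cases e : w = v0
            · subst e; exact hneg.le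
            · exact Hle y hy w hw e) (Hi y hy)
          rw [map_neg, F.co_eq hv0 hs] at hneg
          split_ifs at hneg with hh
          · subst hh; simp [e1]
          · norm_num at hneg
        · split_ifs <;> linarith
      refine le_trans ?_ (Finset.sum_le_sum k1)
      rw [Finset.sum_neg_distrib, Finset.sum_ite_eq]
      split_ifs <;> norm_num
    linarith
  have Hneg : ∀ x ∈ F.Hn, ∃ s ∈ F.S, x = - s := by
    intro x hx
    refine F.form_neg (Hu x hx) (fun w hw => ?_) (Hi x hx)
    by_cases e : w = v0
    · subst e; exact Hn0 x hx
    · exact Hle x hx w hw e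
  have memHn : ∀ s ∈ F.S, (-s ∈ F.Hn ↔ -s ∈ V) := by
    intro s hs
    rw [hS.mem_Hn, map_neg, F.u_mem hs]; norm_num
  have fib : ∀ s ∈ F.S, (F.S.filter fun t => σ t = s).card = (if -s ∈ V then 1 else 0) + if s = v0 then 1 else 0 := by
    intro s hs
    have := cnt s hs
    rw [F.co_neg_sum _ Hneg hs] at this
    have e : F.co s (∑ x ∈ V, x) = if s = v0 then 1 else 0 := by
      split_ifs with hh
      · rw [hh]; exact c0
      · exact cz s hs hh
    rw [e] at this
    simp only [memHn s hs] at this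
    have h2 : ((F.S.filter fun t => σ t = s).card : ℝ) = ((if -s ∈ V then 1 else 0) + if s = v0 then 1 else 0 : ℕ) := by
      push_cast; linarith
    exact_mod_cast h2
  have fib1 : ∀ s ∈ F.S, s ≠ v0 → ∀ x ∈ F.S, ∀ y ∈ F.S, σ x = s → σ y = s → x = y := by
    intro s hs hs0 x hx y hy ex ey
    have h1 := fib s hs
    rw [if_neg hs0] at h1
    have h2 : (F.S.filter fun t => σ t = s).card ≤ 1 := by rw [h1]; split_ifs <;> norm_num
    rw [Finset.card_le_one] at h2
    exact h2 x (by simp [*]) y (by simp [*])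
  have hp := σS v0 hv0
  have hp0 := σne v0 hv0
  have σp : σ (σ v0) = v0 := by
    rcases star v0 hv0 hp0 with h | h <;> exact h
  have hcardHn : F.Hn.card + 1 = d := by
    have := hS.card_split F
    rw [(hS.sp_u hν h).2] at this
    omega
  by_cases hε : -v0 ∈ V
  swap
  · exfalso
    have inj : ∀ x ∈ F.S, ∀ y ∈ F.S, σ x = σ y → x = y := by
      intro x hx y hy e
      by_cases h0 : σ x = v0
      · have h1 := fib v0 hv0
        rw [if_neg hε, if_pos rfl] at h1
        have h2 : (F.S.filter fun t => σ t = v0).card ≤ 1 := by omega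
        rw [Finset.card_le_one] at h2
        exact h2 x (Finset.mem_filter.2 ⟨hx, h0⟩) y (Finset.mem_filter.2 ⟨hy, e.symm.trans h0⟩)
      · exact fib1 (σ x) (σS x hx) h0 x hx y hy rfl e.symm
    have := evencard σ F.S σS (fun y hy => by
      by_cases h0 : σ y = v0
      · have : y = σ v0 := inj y hy _ hp (by rw [h0, σp])
        rw [h0, this]
      · rcases star y hy h0 with h1 | h1
        · exact h1
        · have : σ y = σ v0 := inj _ (σS y hy) _ hp (by rw [h1, σp])
          have := inj _ hy _ hv0 this
          rw [this, σp]) σne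
    rw [F.card] at this
    exact (Nat.not_even_iff_odd.2 hdo) this
  -- eps = 1
  have h2 := fib v0 hv0
  rw [if_pos hε, if_pos rfl] at h2
  have hpf : σ v0 ∈ F.S.filter fun t => σ t = v0 := by simp [hp, σp]
  have h3 := Finset.card_erase_add_one hpf
  have h4 : ((F.S.filter fun t => σ t = v0).erase (σ v0)).card = 1 := by omega
  obtain ⟨q, hq⟩ := Finset.card_eq_one.1 h4
  have hq' : q ∈ (F.S.filter fun t => σ t = v0).erase (σ v0) := by rw [hq]; simp
  simp only [Finset.mem_erase, Finset.mem_filter] at hq'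
  obtain ⟨hqp, hqS, σq⟩ := hq'
  have fib0 : ∀ x ∈ F.S, σ x = v0 → x = σ v0 ∨ x = q := by
    intro x hx e
    by_cases h5 : x = σ v0
    · exact Or.inl h5
    · right
      have : x ∈ (F.S.filter fun t => σ t = v0).erase (σ v0) :=
        Finset.mem_erase.2 ⟨h5, Finset.mem_filter.2 ⟨hx, e⟩⟩
      rw [hq] at this; simpa using this
  have hqv : q ≠ v0 := by rintro rfl; exact hp0 σq
  by_cases hw : ∃ w ∈ F.S, σ w = q
  · exfalso
    obtain ⟨w, hw, σw⟩ := hw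
    have hwv : w ≠ v0 := by rintro rfl; exact hqp σw.symm
    have hwp : w ≠ σ v0 := by rintro rfl; rw [σp] at σw; exact hqv σw.symm
    have hwq : w ≠ q := by rintro rfl; exact σne _ hw σw
    set T := (((F.S.erase v0).erase (σ v0)).erase q).erase w with hT
    have memT : ∀ t, t ∈ T ↔ t ∈ F.S ∧ t ≠ v0 ∧ t ≠ σ v0 ∧ t ≠ q ∧ t ≠ w := by
      intro t; simp only [hT, Finset.mem_erase]; tauto
    have mapsT : ∀ t ∈ T, σ t ∈ T := by
      intro y hy
      obtain ⟨a1, a2, a3, a4, a5⟩ := (memT y).1 hy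
      refine (memT _).2 ⟨σS y a1, ?_, ?_, ?_, ?_⟩
      · intro e
        rcases fib0 y a1 e with e | e
        · exact a3 e
        · exact a4 e
      · intro e
        exact a2 (fib1 _ hp hp0 y a1 v0 hv0 e rfl)
      · intro e
        exact a5 (fib1 _ hqS hqv y a1 w hw e σw)
      · intro e
        rcases star y a1 (by rw [e]; exact hwv) with e1 | e1
        · rw [e, σw] at e1; exact a4 e1.symm
        · rw [e, σw] at e1; exact hqv e1
    have := evencard σ T mapsT (fun y hy => by
      obtain ⟨a1, a2, a3, a4, a5⟩ := (memT y).1 hy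
      obtain ⟨b1, b2, b3, b4, b5⟩ := (memT _).1 (mapsT y hy)
      rcases star y a1 b2 with e | e
      · exact e
      · rcases fib0 _ b1 e with e | e
        · exact absurd e b3
        · exact absurd e b4) (fun y hy => σne y ((memT y).1 hy).1)
    have c1 := Finset.card_erase_add_one hv0
    have c2 : ((F.S.erase v0).erase (σ v0)).card + 1 = _ :=
      Finset.card_erase_add_one (Finset.mem_erase.2 ⟨hp0, hp⟩)
    have c3 : (((F.S.erase v0).erase (σ v0)).erase q).card + 1 = _ :=
      Finset.card_erase_add_one (by simp [*])
    have c4 : ((((F.S.erase v0).erase (σ v0)).erase q).erase w).card + 1 = _ :=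
      Finset.card_erase_add_one (by simp [*])
    rw [← hT] at c4
    rw [F.card] at c1
    obtain ⟨r, hr⟩ := hdo
    obtain ⟨r', hr'⟩ := this
    omega
  · push Not at hw
    have hqV : -q ∉ V := by
      intro hh
      have h1 := fib q hqS
      rw [if_pos hh, if_neg hqv] at h1
      have : 0 < (F.S.filter fun t => σ t = q).card := by omega
      obtain ⟨w, hw'⟩ := Finset.card_pos.1 this
      simp only [Finset.mem_filter] at hw'
      exact hw w hw'.1 hw'.2
    have memT : ∀ t, t ∈ (((F.S.erase v0).erase (σ v0)).erase q) ↔ t ∈ F.S ∧ t ≠ v0 ∧ t ≠ σ v0 ∧ t ≠ q := by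
      intro t; simp only [Finset.mem_erase]; tauto
    have mapsT : ∀ t ∈ (((F.S.erase v0).erase (σ v0)).erase q), σ t ∈ (((F.S.erase v0).erase (σ v0)).erase q) := by
      intro y hy
      obtain ⟨a1, a2, a3, a4⟩ := (memT y).1 hy
      refine (memT _).2 ⟨σS y a1, ?_, ?_, ?_⟩
      · intro e
        rcases fib0 y a1 e with e | e
        · exact a3 e
        · exact a4 e
      · intro e
        exact a2 (fib1 _ hp hp0 y a1 v0 hv0 e rfl)
      · exact hw y a1
    -- negatives
    have hHn : F.Hn = (F.S.erase q).image fun s => -s := by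
      apply Finset.eq_of_subset_of_card_le
      · intro x hx
        obtain ⟨s, hs, rfl⟩ := Hneg x hx
        refine Finset.mem_image_of_mem _ (Finset.mem_erase.2 ⟨?_, hs⟩)
        rintro rfl
        exact hqV (HV _ hx)
      · refine Finset.card_image_le.trans ?_
        have := Finset.card_erase_add_one hqS
        rw [F.card] at this
        omega
    have negV : ∀ s ∈ F.S, s ≠ q → -s ∈ V := by
      intro s hs hsq
      apply HV
      rw [hHn]
      exact Finset.mem_image_of_mem _ (Finset.mem_erase.2 ⟨hsq, hs⟩)
    have nV : ∀ s ∈ F.S, σ s - s ∈ V := fun s hs => by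
      rw [← nσ s hs]; exact hS.n_memV F hs
    refine ⟨v0, σ v0, q, σ, ⟨hInt, hv0, hp, hqS, hp0.symm, hqv.symm, hqp.symm, mapsT, ?_, ?_, ?_⟩⟩
    · intro y hy
      obtain ⟨a1, a2, a3, a4⟩ := (memT y).1 hy
      obtain ⟨b1, b2, b3, b4⟩ := (memT _).1 (mapsT y hy)
      rcases star y a1 b2 with e | e
      · exact e
      · rcases fib0 _ b1 e with e | e
        · exact absurd e b3
        · exact absurd e b4
    · exact fun y hy => σne y ((memT y).1 hy).1
    · intro x
      constructor
      · intro hx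
        by_cases hxS : x ∈ F.S
        · by_cases e1 : x = v0
          · simp [e1]
          by_cases e2 : x = σ v0
          · simp [e2]
          by_cases e3 : x = q
          · simp [e3]
          exact Or.inr ⟨x, (memT x).2 ⟨hxS, e1, e2, e3⟩, Or.inl rfl⟩
        rcases (hS.u_le_zero F hx hxS).lt_or_eq with hu | hu
        · have hxn : x ∈ F.Hn := (hS.mem_Hn F).2 ⟨hx, hu⟩
          rw [hHn] at hxn
          obtain ⟨s, hs, rfl⟩ := Finset.mem_image.1 hxn
          obtain ⟨hsq, hs⟩ := Finset.mem_erase.1 hs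
          by_cases e1 : s = v0
          · simp [e1]
          by_cases e2 : s = σ v0
          · simp [e2]
          exact Or.inr ⟨s, (memT s).2 ⟨hs, e1, e2, hsq⟩, Or.inr (Or.inl rfl)⟩
        · obtain ⟨s, hs, rfl⟩ := Finset.mem_image.1 (hS.H0_sub F ((hS.mem_H0 F).2 ⟨hx, hu⟩))
          rw [nσ s hs]
          by_cases e1 : s = v0
          · simp [e1]
          by_cases e2 : s = σ v0
          · rw [e2, σp]; simp
          by_cases e3 : s = q
          · rw [e3, σq]; simp
          exact Or.inr ⟨s, (memT s).2 ⟨hs, e1, e2, e3⟩, Or.inr (Or.inr rfl)⟩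
      · rintro ((rfl | rfl | rfl | rfl | rfl | rfl | rfl | rfl) | ⟨t, ht, (rfl | rfl | rfl)⟩)
        · exact F.sub hv0
        · exact negV v0 hv0 hqv.symm
        · exact nV v0 hv0
        · have := nV _ hp; rwa [σp] at this
        · exact F.sub hp
        · exact negV _ hp hqp.symm
        · exact F.sub hqS
        · have := nV _ hqS; rwa [σq] at this
        · exact F.sub ((memT _).1 ht).1
        · exact negV t ((memT _).1 ht).1 ((memT _).1 ht).2.2.2
        · exact nV t ((memT _).1 ht).1

/-- Case I -/
theorem case_nz (hS : Sys V L d) (hν : (∑ x ∈ V, x) ≠ 0) (hdo : Odd d) : ∃ (F : Fct V L d) (a b c : E) (τ : E → E), Out F a b c (a - c) τ := by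
  obtain ⟨F, hF⟩ := hS.cone (∑ x ∈ V, x)
  refine ⟨F, hS.sp_case_b hν hdo hF fun w hw => ?_⟩
  by_contra hk
  exact hS.sp_case_a hν hdo hF hw hk

end nz
end Sys
end abstractpart3

section abstractpart4
set_option linter.unusedSectionVars false
variable {E : Type*} [AddCommGroup E] [Module ℝ E] [DecidableEq E]
  {V : Finset E} {L : AddSubgroup E} {d : ℕ}
open Fct

namespace Fct
/-- type II -/
def TII (F : Fct V L d) : Prop := F.H0.card + 1 = d
/-- type III -/
def TIII (F : Fct V L d) : Prop := F.H0.card = d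
/-- unimodular facet -/
def Unim (F : Fct V L d) : Prop := ∀ x ∈ L, ∀ v ∈ F.S, IsI (F.co v x)
/-- collision -/
def Col (F : Fct V L d) (p q : E) : Prop := p ∈ F.S ∧ q ∈ F.S ∧ p ≠ q ∧ F.n p = F.n q

theorem Col.symm {F : Fct V L d} {p q : E} (h : F.Col p q) : F.Col q p :=
  ⟨h.2.1, h.1, h.2.2.1.symm, h.2.2.2.symm⟩
end Fct

namespace Sys

theorem H0_cover (hS : Sys V L d) (F : Fct V L d) (T : Finset E)
    (h : ∀ s ∈ F.S, s ∉ T → F.u (F.n s) = 0 → ∃ t ∈ T, F.n t = F.n s) : F.H0.card ≤ T.card := by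
  have : F.H0 ⊆ T.image F.n := by
    intro x hx
    obtain ⟨s, hs, rfl⟩ := Finset.mem_image.1 (hS.H0_sub F hx)
    by_cases hsT : s ∈ T
    · exact Finset.mem_image_of_mem _ hsT
    · obtain ⟨t, ht, e⟩ := h s hs hsT ((hS.mem_H0 F).1 hx).2
      rw [← e]; exact Finset.mem_image_of_mem _ ht
  exact (Finset.card_le_card this).trans Finset.card_image_le

theorem ex_facet (hS : Sys V L d) {x : E} (hx : x ∈ V) : ∃ F : Fct V L d, F.u x = 1 := by
  obtain ⟨F, hF⟩ := hS.cone x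
  refine ⟨F, ?_⟩
  by_contra h
  have h1 := hS.u_le_zero F hx (hS.notmem_of_u F h)
  obtain ⟨v, hv, hc⟩ := hS.exists_neg F hx h1
  linarith [hF v hv]

theorem neg_two_notmem (hS : Sys V L d) {c : E} (hc : c ∈ V) : -c - c ∉ V := by
  intro h
  obtain ⟨F, hF⟩ := hS.ex_facet h
  rw [map_sub, map_neg] at hF
  obtain ⟨m, hm⟩ := hS.u_int F hc
  rw [hm] at hF
  have : -m - m = 1 := by exact_mod_cast hF
  omega

theorem n_data (hS : Sys V L d) (F : Fct V L d) (hU : F.Unim) {v : E} (hv : v ∈ F.S) (h0 : F.u (F.n v) = 0) :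
    F.k v = 1 ∧ F.co v (F.n v) = -1 := by
  have h1 := hS.k_co_n F hv
  rw [h0] at h1
  have h2 := (hU _ (hS.memL (hS.n_memV F hv)) v hv).lt_zero (hS.co_n_neg F hv)
  have h3 := hS.k_pos F hv
  have h4 : F.k v = 1 := by nlinarith
  rw [h4] at h1
  exact ⟨h4, by linarith⟩

theorem unim_N (hS : Sys V L d) (F : Fct V L d) (hU : F.Unim) {v : E} (hv : v ∈ F.S) (h0 : F.co v (F.n v) = -1) :
    (F.N v).Unim := by
  intro x hx w hw
  have e := hS.co_N_self F hv x
  rw [h0] at e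
  have e1 : (F.N v).co (F.n v) x = - F.co v x := by linarith
  have i1 : IsI ((F.N v).co (F.n v) x) := by rw [e1]; exact (hU x hx v hv).neg
  rcases hS.of_mem_N F hv hw with rfl | ⟨hw, hwv⟩
  · exact i1
  · have e2 := hS.co_N F hv hw hwv x
    have e3 : (F.N v).co w x = F.co w x - (F.N v).co (F.n v) x * F.co w (F.n v) := by linarith
    rw [e3]
    exact (hU x hx w hw).sub (i1.mul (hU _ (hS.memL (hS.n_memV F hv)) w hw))

theorem co_N_pivot (hS : Sys V L d) (F : Fct V L d) {v : E} (hv : v ∈ F.S) (h0 : F.co v (F.n v) = -1) (x : E) :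
    (F.N v).co (F.n v) x = - F.co v x := by
  have e := hS.co_N_self F hv x
  rw [h0] at e
  linarith

section z

theorem ty (hS : Sys V L d) (hν : (∑ x ∈ V, x) = 0) (F : Fct V L d) : F.TII ∨ F.TIII := by
  have h1 := hS.level_nonneg F
  rw [hν, map_zero] at h1
  have h2 := hS.H0_le F
  have h3 : (d : ℝ) ≤ F.H0.card + 1 := by linarith
  have h4 : d ≤ F.H0.card + 1 := by exact_mod_cast h3
  unfold Fct.TII Fct.TIII
  omega

theorem ge2 (hS : Sys V L d) (hν : (∑ x ∈ V, x) = 0) (F : Fct V L d) {x : E} (hx : x ∈ V) : -2 ≤ F.u x := by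
  have h1 := hS.level_ge F hx
  rw [hν, map_zero] at h1
  have h2 : (F.H0.card : ℝ) ≤ d := by exact_mod_cast hS.H0_le F
  linarith

theorem ge1 (hS : Sys V L d) (hν : (∑ x ∈ V, x) = 0) {F : Fct V L d} (h : F.TII) {x : E} (hx : x ∈ V) : -1 ≤ F.u x := by
  have h1 := hS.level_ge F hx
  rw [hν, map_zero] at h1
  have h2 : (F.H0.card : ℝ) + 1 = d := by exact_mod_cast h
  linarith

theorem tII_Hn (hS : Sys V L d) (hν : (∑ x ∈ V, x) = 0) {F : Fct V L d} (h : F.TII) {x : E} (hx : x ∈ F.Hn) : F.u x = -1 :=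
  le_antisymm (hS.Hn_le F hx) (hS.ge1 hν h ((hS.mem_Hn F).1 hx).1)

theorem tII_card (hS : Sys V L d) (hν : (∑ x ∈ V, x) = 0) {F : Fct V L d} (h : F.TII) : F.Hn.card = d := by
  have := hS.card_split F
  unfold Fct.TII at h
  omega

theorem tIII_of (hS : Sys V L d) (hν : (∑ x ∈ V, x) = 0) {F : Fct V L d} {x : E} (hx : x ∈ V) (h : F.u x = -2) : F.TIII := by
  rcases hS.ty hν F with h1 | h1
  · have := hS.ge1 hν h1 hx
    linarith
  · exact h1

theorem tIII_ex (hS : Sys V L d) (hν : (∑ x ∈ V, x) = 0) {F : Fct V L d} (h : F.TIII) : ∃ x ∈ V, F.u x = -2 ∧ ∀ y ∈ V, F.u y = -2 → y = x := by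
  have h1 := hS.level F
  rw [hν, map_zero, show F.H0.card = d from h] at h1
  obtain ⟨x, hx, hx1, hx2⟩ := sum_one F.Hn (fun x => - F.u x - 1)
    (fun x hx => by have := hS.Hn_le F hx; linarith)
    (fun x hx => (hS.u_int F ((hS.mem_Hn F).1 hx).1).neg.sub IsI.one) (by rw [h1]; ring)
  refine ⟨x, ((hS.mem_Hn F).1 hx).1, by linarith, fun y hy hyu => ?_⟩
  by_contra hne
  have := hx2 y ((hS.mem_Hn F).2 ⟨hy, by linarith⟩) hne
  linarith

theorem two_unique (hS : Sys V L d) (hν : (∑ x ∈ V, x) = 0) (F : Fct V L d) {x y : E} (hx : x ∈ V) (hy : y ∈ V) (hxu : F.u x = -2)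
    (hyu : F.u y = -2) : x = y := by
  obtain ⟨z, -, -, hz⟩ := hS.tIII_ex hν (hS.tIII_of hν hx hxu)
  rw [hz x hx hxu, hz y hy hyu]

theorem k_le_two (hS : Sys V L d) (hν : (∑ x ∈ V, x) = 0) (F : Fct V L d) {v : E} (hv : v ∈ F.S) : F.k v ≤ 2 := by
  by_cases h : F.k v = 1
  · linarith
  · have := hS.M F hv h
    rw [hν, map_zero, map_zero] at this
    linarith

theorem tIII_n (hS : Sys V L d) (hν : (∑ x ∈ V, x) = 0) {F : Fct V L d} (h : F.TIII) {v : E} (hv : v ∈ F.S) : F.u (F.n v) = 0 :=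
  hS.H0_full F h hv

theorem tIII_N_k (hS : Sys V L d) (hν : (∑ x ∈ V, x) = 0) {F : Fct V L d} {v : E} (hv : v ∈ F.S) (h : (F.N v).TIII) : F.k v = 1 := by
  have h1 := hS.tIII_n hν h (hS.n_memN F hv)
  rw [hS.n_N F hv, hS.N_u_self] at h1
  linarith

theorem two_bad (hS : Sys V L d) (hν : (∑ x ∈ V, x) = 0) (F : Fct V L d) {a b : E} (ha : a ∈ F.S) (hb : b ∈ F.S) (hab : a ≠ b)
    (hua : F.u (F.n a) ≠ 0) (hub : F.u (F.n b) ≠ 0) : False := by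
  have h := hS.H0_cover F ((F.S.erase a).erase b) (by
    intro s hs hsT hu
    exfalso
    apply hsT
    simp only [Finset.mem_erase]
    exact ⟨by rintro rfl; exact hub hu, by rintro rfl; exact hua hu, hs⟩)
  have c1 := Finset.card_erase_add_one ha
  have c2 : ((F.S.erase a).erase b).card + 1 = _ :=
    Finset.card_erase_add_one (Finset.mem_erase.2 ⟨hab.symm, hb⟩)
  rw [F.card] at c1
  rcases hS.ty hν F with h1 | h1 <;> simp only [Fct.TII, Fct.TIII] at h1 <;> omega

theorem exists_unim (hS : Sys V L d) (hν : (∑ x ∈ V, x) = 0) : ∃ F : Fct V L d, F.Unim := by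
  obtain ⟨F, hF⟩ := hS.vmin
  refine ⟨F, ?_⟩
  have hk : ∀ v ∈ F.S, F.u (F.n v) = 0 → F.k v = 1 := by
    intro v hv h0
    have h1 := hF v hv _ _ (hS.isNb F hv)
    have h2 := hS.k_co_n F hv
    have h3 := hS.k_pos F hv
    rw [abs_of_neg (hS.co_n_neg F hv)] at h1
    rw [h0] at h2
    nlinarith
  have hi : ∀ v ∈ F.S, F.u (F.n v) = 0 → ∀ x ∈ L, IsI (F.co v x) := by
    intro v hv h0 x hx
    have := hS.k_co_int F hv hx
    rwa [hk v hv h0, one_mul] at this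
  intro x hx v hv
  by_cases h0 : F.u (F.n v) = 0
  · exact hi v hv h0 x hx
  · have e := F.u_erase hv x
    have : F.co v x = F.u x - ∑ w ∈ F.S.erase v, F.co w x := by linarith
    rw [this]
    refine (F.u_int hx).sub (IsI.sum _ _ fun w hw => ?_)
    obtain ⟨hwv, hw⟩ := Finset.mem_erase.1 hw
    refine hi w hw ?_ x hx
    by_contra h1
    exact hS.two_bad hν F hw hv hwv h1 h0

theorem III0 (hS : Sys V L d) (hν : (∑ x ∈ V, x) = 0) {F : Fct V L d} (hU : F.Unim) (h : F.TIII) {x w : E} (hx : x ∈ V) (hu : F.u x = -2)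
    (hw : w ∈ F.S) : F.co w x ≤ 0 := by
  by_contra! hh
  have h1 := hS.ge2 hν (F.N w) hx
  rw [hS.N_u F hw, (hS.n_data F hU hw (hS.tIII_n hν h hw)).1, hu] at h1
  linarith

/-! ### collisions -/

theorem col_cover (hS : Sys V L d) (hν : (∑ x ∈ V, x) = 0) {F : Fct V L d} {p q : E} (h : F.Col p q) {r : E} (hr : r ∈ F.S)
    (hrp : r ≠ p) (hrq : r ≠ q)
    (hh : F.u (F.n r) = 0 → ∃ t ∈ F.S, t ≠ r ∧ t ≠ q ∧ F.n t = F.n r) : False := by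
  obtain ⟨hp, hq, hpq, e⟩ := h
  have hc := hS.H0_cover F ((F.S.erase q).erase r) (by
    intro s hs hsT hu
    by_cases e1 : s = q
    · exact ⟨p, by simp only [Finset.mem_erase]; exact ⟨hrp.symm, hpq, hp⟩, by rw [e1, e]⟩
    by_cases e2 : s = r
    · subst e2
      obtain ⟨t, ht, h1, h2, h3⟩ := hh hu
      exact ⟨t, by simp only [Finset.mem_erase]; exact ⟨h1, h2, ht⟩, h3⟩
    · exfalso; apply hsT; simp only [Finset.mem_erase]; exact ⟨e2, e1, hs⟩)
  have c1 := Finset.card_erase_add_one hq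
  have c2 : ((F.S.erase q).erase r).card + 1 = _ :=
    Finset.card_erase_add_one (Finset.mem_erase.2 ⟨hrq, hr⟩)
  rw [F.card] at c1
  rcases hS.ty hν F with h1 | h1 <;> simp only [Fct.TII, Fct.TIII] at h1 <;> omega

theorem col_u (hS : Sys V L d) (hν : (∑ x ∈ V, x) = 0) {F : Fct V L d} {p q : E} (h : F.Col p q) : F.u (F.n p) = 0 := by
  by_contra hh
  exact hS.two_bad hν F h.1 h.2.1 h.2.2.1 hh (by rw [← h.2.2.2]; exact hh)

theorem col_II (hS : Sys V L d) (hν : (∑ x ∈ V, x) = 0) {F : Fct V L d} {p q : E} (h : F.Col p q) : F.TII := by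
  have := hS.H0_lt_of_col F h.1 h.2.1 h.2.2.1 h.2.2.2
  rcases hS.ty hν F with h1 | h1
  · exact h1
  · simp only [Fct.TIII] at h1; omega

theorem col_ur (hS : Sys V L d) (hν : (∑ x ∈ V, x) = 0) {F : Fct V L d} {p q : E} (h : F.Col p q) {r : E} (hr : r ∈ F.S) :
    F.u (F.n r) = 0 := by
  by_cases e1 : r = p
  · rw [e1]; exact hS.col_u hν h
  by_cases e2 : r = q
  · rw [e2]; exact hS.col_u hν h.symm
  by_contra hh
  exact hS.col_cover hν h hr e1 e2 (fun h => absurd h hh)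

theorem col_inj (hS : Sys V L d) (hν : (∑ x ∈ V, x) = 0) {F : Fct V L d} {p q : E} (h : F.Col p q) {r t : E} (hr : r ∈ F.S) (ht : t ∈ F.S)
    (hrp : r ≠ p) (hrq : r ≠ q) (e : F.n t = F.n r) : t = r := by
  by_contra hh
  by_cases e2 : t = q
  · exact hS.col_cover hν h hr hrp hrq fun _ =>
      ⟨p, h.1, hrp.symm, h.2.2.1, by rw [h.2.2.2, ← e2, e]⟩
  · exact hS.col_cover hν h hr hrp hrq fun _ => ⟨t, ht, hh, e2, e⟩

theorem col_form (hS : Sys V L d) (hν : (∑ x ∈ V, x) = 0) {F : Fct V L d} (hU : F.Unim) {p q : E} (h : F.Col p q) {r : E} (hr : r ∈ F.S)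
    (hrp : r ≠ p) (hrq : r ≠ q) : ∃ s ∈ F.S, s ≠ r ∧ F.n r = s - r := by
  have hu := hS.col_ur hν h hr
  refine F.form_sub hr hu (hS.n_data F hU hr hu).2 (fun w hw hwr => ?_)
    (fun w hw => hU _ (hS.memL (hS.n_memV F hr)) w hw)
  by_contra! hh
  have := hS.eq_n F hw (hS.n_memV F hr) hu hh
  exact hwr (hS.col_inj hν h hr hw hrp hrq this.symm)

theorem col_H0 (hS : Sys V L d) (hν : (∑ x ∈ V, x) = 0) {F : Fct V L d} (hU : F.Unim) {p q : E} (h : F.Col p q) {y : E} (hy : y ∈ V)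
    (hu : F.u y = 0) (hyp : y ≠ F.n p) :
    ∃ r ∈ F.S, ∃ s ∈ F.S, r ≠ p ∧ r ≠ q ∧ s ≠ r ∧ y = s - r := by
  obtain ⟨r, hr, rfl⟩ := Finset.mem_image.1 (hS.H0_sub F ((hS.mem_H0 F).2 ⟨hy, hu⟩))
  have hrp : r ≠ p := by rintro rfl; exact hyp rfl
  have hrq : r ≠ q := by rintro rfl; exact hyp h.2.2.2.symm
  obtain ⟨s, hs, hsr, e⟩ := hS.col_form hν hU h hr hrp hrq
  exact ⟨r, hr, s, hs, hrp, hrq, hsr, e⟩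

theorem col_x (hS : Sys V L d) (hν : (∑ x ∈ V, x) = 0) {F : Fct V L d} (hU : F.Unim) {p q : E} (h : F.Col p q) :
    ∃ t ∈ F.S, ∃ s ∈ F.S, t ≠ p ∧ t ≠ q ∧ s ≠ p ∧ s ≠ q ∧ F.n p = t + s - p - q := by
  have hu := hS.col_u hν h
  have hx := hS.n_memV F h.1
  have cp := (hS.n_data F hU h.1 hu).2
  have cq := (hS.n_data F hU h.2.1 (hS.col_u hν h.symm)).2
  rw [← h.2.2.2] at cq
  have hqe : q ∈ F.S.erase p := Finset.mem_erase.2 ⟨h.2.2.1.symm, h.2.1⟩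
  have e := hu
  rw [F.u_erase h.1, ← Finset.add_sum_erase _ _ hqe, cp, cq] at e
  have mem : ∀ w, w ∈ (F.S.erase p).erase q ↔ w ∈ F.S ∧ w ≠ p ∧ w ≠ q := by
    intro w; simp only [Finset.mem_erase]; tauto
  obtain ⟨t, ht, s, hs, hts⟩ := sum_two ((F.S.erase p).erase q) (fun w => F.co w (F.n p))
    (fun w hw => by
      obtain ⟨a, b, c⟩ := (mem w).1 hw
      by_contra! hh
      have := hS.eq_n F a hx hu hh
      exact b (hS.col_inj hν h a h.1 b c this).symm)
    (fun w hw => hU _ (hS.memL hx) w ((mem w).1 hw).1) (by linarith)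
  obtain ⟨t1, t2, t3⟩ := (mem t).1 ht
  obtain ⟨s1, s2, s3⟩ := (mem s).1 hs
  refine ⟨t, t1, s, s1, t2, t3, s2, s3, F.ext' fun w hw => ?_⟩
  rw [map_sub, map_sub, map_add, F.co_eq hw t1, F.co_eq hw s1, F.co_eq hw h.1, F.co_eq hw h.2.1]
  by_cases e1 : w = p
  · subst e1; rw [cp]; simp [t2.symm, s2.symm, h.2.2.1]
  by_cases e2 : w = q
  · subst e2; rw [cq]; simp [t3.symm, s3.symm, h.2.2.1.symm]
  rw [if_neg e1, if_neg e2]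
  have := hts w ((mem w).2 ⟨hw, e1, e2⟩)
  linarith

theorem col_a (hS : Sys V L d) (hν : (∑ x ∈ V, x) = 0) {F : Fct V L d} (hU : F.Unim) {p q : E} (h : F.Col p q) :
    (F.N p).Col (F.n p) q ∧ (F.N p).Unim := by
  have hu := hS.col_u hν h
  obtain ⟨hk, hc⟩ := hS.n_data F hU h.1 hu
  have hq := hS.mem_N F h.1 h.2.1 h.2.2.1.symm
  refine ⟨⟨hS.n_memN F h.1, hq, (hS.n_ne F h.1 h.2.1).symm, ?_⟩, hS.unim_N F hU h.1 hc⟩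
  rw [hS.n_N F h.1]
  obtain ⟨t, ht, s, hs, t2, t3, s2, s3, e⟩ := hS.col_x hν hU h
  apply hS.eq_n _ hq (F.sub h.1)
  · rw [hS.N_u_self, hk]; norm_num
  · have e2 : p = t + s - F.n p - q := by rw [e]; abel
    have e3 : (F.N p).co q p = (F.N p).co q (t + s - F.n p - q) := by rw [← e2]
    rw [e3, map_sub, map_sub, map_add, co_self _ q hq, co_ne _ q hq _ (hS.mem_N F h.1 ht t2) t3.symm,
      co_ne _ q hq _ (hS.mem_N F h.1 hs s2) s3.symm,
      co_ne _ q hq _ (hS.n_memN F h.1) (hS.n_ne F h.1 h.2.1)]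
    norm_num

theorem col_b (hS : Sys V L d) (hν : (∑ x ∈ V, x) = 0) {F : Fct V L d} (hU : F.Unim) {p q : E} (h : F.Col p q) {r : E} (hr : r ∈ F.S)
    (hrp : r ≠ p) (hrq : r ≠ q) (h0 : F.co r (F.n p) = 0) :
    (F.N r).Col p q ∧ (F.N r).Unim ∧ (F.N r).n p = F.n p := by
  have hu := hS.col_u hν h
  have hx := hS.n_memV F h.1
  obtain ⟨hk, hc⟩ := hS.n_data F hU hr (hS.col_ur hν h hr)
  have e1 := hS.co_N_pivot F hr hc (F.n p)
  rw [h0, neg_zero] at e1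
  have hp := hS.mem_N F hr h.1 hrp.symm
  have hq := hS.mem_N F hr h.2.1 hrq.symm
  have uG : (F.N r).u (F.n p) = 0 := by rw [hS.N_u F hr, hu, h0]; ring
  have gp := hS.co_N F hr h.1 hrp.symm (F.n p)
  have gq := hS.co_N F hr h.2.1 hrq.symm (F.n p)
  rw [e1, zero_mul, add_zero] at gp gq
  have np := hS.eq_n _ hp hx uG (by rw [← gp]; exact hS.co_n_neg F h.1)
  have nq := hS.eq_n _ hq hx uG (by rw [← gq, h.2.2.2]; exact hS.co_n_neg F h.2.1)
  exact ⟨⟨hp, hq, h.2.2.1, by rw [← np, ← nq]⟩, hS.unim_N F hU hr hc, np.symm⟩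

theorem col_c (hS : Sys V L d) (hν : (∑ x ∈ V, x) = 0) {F : Fct V L d} (hU : F.Unim) {p q : E} (h : F.Col p q) {t : E} (ht : t ∈ F.S)
    (htp : t ≠ p) (htq : t ≠ q) (e : F.n p = t + t - p - q) : False := by
  have hu := hS.col_u hν h
  have hx := hS.n_memV F h.1
  obtain ⟨hk, hc⟩ := hS.n_data F hU ht (hS.col_ur hν h ht)
  have c2 : F.co t (F.n p) = 2 := by
    rw [e, map_sub, map_sub, map_add, F.co_self t ht, F.co_ne t ht p h.1 htp, F.co_ne t ht q h.2.1 htq]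
    norm_num
  have uG : (F.N t).u (F.n p) = -2 := by rw [hS.N_u F ht, hu, hk, c2]; norm_num
  obtain ⟨s, hs, hst, e2⟩ := hS.col_form hν hU h ht htp htq
  have hsG := hS.mem_N F ht hs hst
  have h3 := hS.III0 hν (hS.unim_N F hU ht hc) (hS.tIII_of hν hx uG) hx uG hsG
  have e3 : F.n p = (s - F.n t) + (s - F.n t) - p - q := by rw [e2, e]; abel
  rw [e3, map_sub, map_sub, map_add, map_sub, co_self _ s hsG,
    co_ne _ s hsG _ (hS.n_memN F ht) (hS.n_ne F ht hs),
    co_eq _ hsG (hS.mem_N F ht h.1 htp.symm), co_eq _ hsG (hS.mem_N F ht h.2.1 htq.symm)] at h3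
  by_cases e4 : s = p
  · subst e4
    rw [if_pos rfl, if_neg h.2.2.1] at h3; norm_num at h3
  · rw [if_neg e4] at h3
    split_ifs at h3 <;> norm_num at h3

end z
end Sys
end abstractpart4

section abstractpart5
set_option linter.unusedSectionVars false
variable {E : Type*} [AddCommGroup E] [Module ℝ E] [DecidableEq E]
  {V : Finset E} {L : AddSubgroup E} {d : ℕ}
open Fct

namespace Sys

theorem co_ge (hS : Sys V L d) {F : Fct V L d} (hU : F.Unim) {v y : E} (hv : v ∈ F.S) (h0 : F.u (F.n v) = 0)
    (hy : y ∈ V) (hu : F.u y = -1) : -1 ≤ F.co v y := by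
  have h1 := hS.u_le_kco F hv hy (hS.notmem_of_u F (by rw [hu]; norm_num))
    (by rintro rfl; rw [h0] at hu; norm_num at hu)
  rw [(hS.n_data F hU hv h0).1, hu] at h1
  linarith

section z

theorem co_le (hS : Sys V L d) (hν : (∑ x ∈ V, x) = 0) {F : Fct V L d} (hU : F.Unim) {v y : E} (hv : v ∈ F.S) (h0 : F.u (F.n v) = 0)
    (hT : (F.N v).TII) (hy : y ∈ V) : F.co v y ≤ F.u y + 1 := by
  have h1 := hS.ge1 hν hT hy
  rw [hS.N_u F hv, (hS.n_data F hU hv h0).1] at h1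
  linarith

theorem no_col (hS : Sys V L d) (hν : (∑ x ∈ V, x) = 0) {F : Fct V L d} (hU : F.Unim) {p q : E} (h : F.Col p q) : False := by
  obtain ⟨t, ht, s, hs, tp, tq, sp, sq, ex⟩ := hS.col_x hν hU h
  have hts : t ≠ s := by
    rintro rfl
    exact hS.col_c hν hU h ht tp tq ex
  have hp := h.1
  have hq := h.2.1
  have hpq := h.2.2.1
  have hII := hS.col_II hν h
  have hx := hS.n_memV F hp
  have ux := hS.col_u hν h
  have ur : ∀ r ∈ F.S, F.u (F.n r) = 0 := fun r hr => hS.col_ur hν h hr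
  have cox : ∀ z ∈ F.S, z ≠ t → z ≠ s → z ≠ p → z ≠ q → F.co z (F.n p) = 0 := by
    intro z hz h1 h2 h3 h4
    rw [ex, map_sub, map_sub, map_add, F.co_ne z hz t ht h1, F.co_ne z hz s hs h2,
      F.co_ne z hz p hp h3, F.co_ne z hz q hq h4]
    norm_num
  have hzII : ∀ z ∈ F.S, z ≠ t → z ≠ s → (F.N z).TII := by
    intro z hz h1 h2
    by_cases h3 : z = p
    · rw [h3]; exact hS.col_II hν (hS.col_a hν hU h).1
    by_cases h4 : z = q
    · rw [h4]; exact hS.col_II hν (hS.col_a hν hU h.symm).1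
    exact hS.col_II hν (hS.col_b hν hU h hz h3 h4 (cox z hz h1 h2 h3 h4)).1
  have hle : ∀ z ∈ F.S, z ≠ t → z ≠ s → ∀ y ∈ V, F.co z y ≤ F.u y + 1 := fun z hz h1 h2 y hy =>
    hS.co_le hν hU hz (ur z hz) (hzII z hz h1 h2) hy
  -- the functional b
  obtain ⟨b, hb⟩ : ∃ b : E →ₗ[ℝ] ℝ, ∀ y, b y = F.u y - F.co t y - F.co s y :=
    ⟨F.u - F.co t - F.co s, fun y => by simp⟩
  have hse : s ∈ F.S.erase t := Finset.mem_erase.2 ⟨hts.symm, hs⟩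
  have memZ : ∀ w, w ∈ (F.S.erase t).erase s ↔ w ∈ F.S ∧ w ≠ t ∧ w ≠ s := by
    intro w; simp only [Finset.mem_erase]; tauto
  have hb2 : ∀ y, b y = ∑ z ∈ (F.S.erase t).erase s, F.co z y := by
    intro y
    rw [hb, F.u_erase ht, ← Finset.add_sum_erase _ _ hse]; ring
  have bS : ∀ r ∈ F.S, b r = 1 - (if r = t then 1 else 0) - (if r = s then 1 else 0) := by
    intro r hr
    rw [hb, F.u_mem hr, F.co_eq ht hr, F.co_eq hs hr]
    simp only [eq_comm]
  have bSle : ∀ r ∈ F.S, b r ≤ 1 := by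
    intro r hr
    rw [bS r hr]; split_ifs <;> norm_num
  have sumS : ∑ r ∈ F.S, b r = (d : ℝ) - 1 - 1 := by
    rw [Finset.sum_congr rfl bS]
    simp [Finset.sum_sub_distrib, F.card, ht, hs]
  have inj : Set.InjOn F.n (F.S.erase q : Finset E) := by
    intro r hr r' hr' e
    obtain ⟨hr1, hr⟩ := Finset.mem_erase.1 hr
    obtain ⟨hr1', hr'⟩ := Finset.mem_erase.1 hr'
    by_cases e1 : r = p
    · by_cases e2 : r' = p
      · rw [e1, e2]
      · exact hS.col_inj hν h hr' hr e2 hr1' e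
    · exact (hS.col_inj hν h hr hr' e1 hr1 e.symm).symm
  have H0e : F.H0 = (F.S.erase q).image F.n := by
    ext y
    rw [hS.mem_H0, Finset.mem_image]
    constructor
    · rintro ⟨h1, h2⟩
      obtain ⟨r, hr, rfl⟩ := Finset.mem_image.1 (hS.H0_sub F ((hS.mem_H0 F).2 ⟨h1, h2⟩))
      by_cases e : r = q
      · exact ⟨p, Finset.mem_erase.2 ⟨hpq, hp⟩, by rw [e, h.2.2.2]⟩
      · exact ⟨r, Finset.mem_erase.2 ⟨e, hr⟩, rfl⟩
    · rintro ⟨r, hr, rfl⟩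
      have hr := Finset.mem_of_mem_erase hr
      exact ⟨hS.n_memV F hr, ur r hr⟩
  have sumH0 : ∑ y ∈ F.H0, b y = ∑ r ∈ F.S.erase q, b (F.n r) := by
    rw [H0e, Finset.sum_image inj]
  have sumV : ∑ y ∈ V, b y = 0 := by rw [← map_sum, hν, map_zero]
  rw [hS.split F, sumS, sumH0] at sumV
  have bx : b (F.n p) = -2 := by
    rw [ex, map_sub, map_sub, map_add, bS t ht, bS s hs, bS p hp, bS q hq]
    simp [hts, hts.symm, tp.symm, sp.symm, tq.symm, sq.symm]
    norm_num
  have bn : ∀ r ∈ F.S.erase q, 0 ≤ (if t = r then (1:ℝ) else 0) + (if s = r then 1 else 0)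
      - (if p = r then 2 else 0) - b (F.n r) := by
    intro r hr
    obtain ⟨hr1, hr⟩ := Finset.mem_erase.1 hr
    by_cases e1 : r = p
    · subst e1
      rw [bx]; simp [tp, sp]
    obtain ⟨s', hs', -, e⟩ := hS.col_form hν hU h hr e1 hr1
    rw [e, map_sub, bS r hr, if_neg (Ne.symm e1)]
    have := bSle s' hs'
    simp only [eq_comm] at this ⊢
    linarith
  have sumbn : ∑ r ∈ F.S.erase q, ((if t = r then (1:ℝ) else 0) + (if s = r then 1 else 0)
      - (if p = r then 2 else 0) - b (F.n r)) = - ∑ r ∈ F.S.erase q, b (F.n r) := by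
    rw [Finset.sum_sub_distrib, Finset.sum_sub_distrib, Finset.sum_add_distrib,
      Finset.sum_ite_eq, Finset.sum_ite_eq, Finset.sum_ite_eq]
    simp [ht, hs, hp, tq, sq, hpq]
    norm_num
  have H1 : ∑ r ∈ F.S.erase q, b (F.n r) ≤ 0 := by
    have := Finset.sum_nonneg bn
    linarith
  -- Hn
  have hn1 : ∀ y ∈ F.Hn, y ∈ V ∧ F.u y = -1 := fun y hy =>
    ⟨((hS.mem_Hn F).1 hy).1, hS.tII_Hn hν hII hy⟩
  have cole : ∀ y ∈ F.Hn, ∀ z ∈ F.S, z ≠ t → z ≠ s → F.co z y ≤ 0 := by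
    intro y hy z hz h1 h2
    have := hle z hz h1 h2 y (hn1 y hy).1
    rw [(hn1 y hy).2] at this
    linarith
  have coge : ∀ y ∈ F.Hn, ∀ z ∈ F.S, -1 ≤ F.co z y := fun y hy z hz =>
    hS.co_ge hU hz (ur z hz) (hn1 y hy).1 (hn1 y hy).2
  have coI : ∀ y ∈ F.Hn, ∀ z ∈ F.S, IsI (F.co z y) := fun y hy z hz =>
    hU y (hS.memL (hn1 y hy).1) z hz
  have ble : ∀ y ∈ F.Hn, b y ≤ 0 := fun y hy => by
    rw [hb2]
    exact Finset.sum_nonpos fun z hz => by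
      obtain ⟨h1, h2, h3⟩ := (memZ z).1 hz
      exact cole y hy z h1 h2 h3
  have b0 : ∀ y ∈ F.Hn, b y = 0 → y = -t ∨ y = -s := by
    intro y hy h0
    have hz0 : ∀ z ∈ F.S, z ≠ t → z ≠ s → F.co z y = 0 := by
      intro z hz h1 h2
      rw [hb2] at h0
      exact (Finset.sum_eq_zero_iff_of_nonpos (fun z hz => by
        obtain ⟨h1, h2, h3⟩ := (memZ z).1 hz
        exact cole y hy z h1 h2 h3)).1 h0 z ((memZ z).2 ⟨hz, h1, h2⟩)
    have e := hb y
    rw [h0, (hn1 y hy).2] at e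
    have c1 := coge y hy t ht
    have c2 := coge y hy s hs
    have fin : ∀ a ∈ F.S, ∀ a' ∈ F.S, F.co a y = -1 → F.co a' y = 0 →
        (∀ z ∈ F.S, z ≠ a → z ≠ a' → F.co z y = 0) → y = -a := by
      intro a ha a' ha' e1 e2 e3
      refine F.ext' fun z hz => ?_
      rw [map_neg, F.co_eq hz ha]
      by_cases f1 : z = a
      · rw [if_pos f1, f1, e1]
      by_cases f2 : z = a'
      · rw [if_neg f1, f2, e2]; norm_num
      rw [if_neg f1, e3 z hz f1 f2]; norm_num
    by_cases f : F.co t y = -1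
    · left
      exact fin t ht s hs f (by linarith) hz0
    · right
      have f1 := (coI y hy t ht).gt_neg_one (lt_of_le_of_ne c1 (Ne.symm f))
      exact fin s hs t ht (by linarith) (by linarith) fun z hz a b => hz0 z hz b a
  have gn : ∀ y ∈ F.Hn, 0 ≤ - b y - 1 + (if -t = y then (1:ℝ) else 0) + (if -s = y then 1 else 0) := by
    intro y hy
    have h1 := ble y hy
    by_cases e1 : y = -t
    · rw [if_pos e1.symm]; split_ifs <;> linarith
    by_cases e2 : y = -s
    · rw [if_pos e2.symm]; split_ifs <;> linarith
    rw [if_neg (Ne.symm e1), if_neg (Ne.symm e2)]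
    have h2 : IsI (b y) := by
      rw [hb2]
      exact IsI.sum _ _ fun z hz => coI y hy z ((memZ z).1 hz).1
    have := h2.lt_zero (lt_of_le_of_ne h1 fun h0 => by
      rcases b0 y hy h0 with h | h
      · exact e1 h
      · exact e2 h)
    linarith
  have sumgn : ∑ y ∈ F.Hn, (- b y - 1 + (if -t = y then (1:ℝ) else 0) + (if -s = y then 1 else 0))
      ≤ - ∑ y ∈ F.Hn, b y - d + 2 := by
    rw [Finset.sum_add_distrib, Finset.sum_add_distrib, Finset.sum_sub_distrib,
      Finset.sum_ite_eq, Finset.sum_ite_eq, Finset.sum_neg_distrib, Finset.sum_const,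
      hS.tII_card hν hII]
    simp only [nsmul_eq_mul, mul_one]
    split_ifs <;> linarith
  have G0 := Finset.sum_nonneg gn
  have G1 : ∑ r ∈ F.S.erase q, b (F.n r) = 0 := by linarith
  have G2 := (Finset.sum_eq_zero_iff_of_nonneg gn).1 (by linarith)
  have G3 := (Finset.sum_eq_zero_iff_of_nonneg bn).1 (by linarith)
  have bge : ∀ y ∈ F.Hn, -1 ≤ b y := by
    intro y hy
    have := G2 y hy
    have i1 : (0:ℝ) ≤ if -t = y then 1 else 0 := by split_ifs <;> norm_num
    have i2 : (0:ℝ) ≤ if -s = y then 1 else 0 := by split_ifs <;> norm_num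
    linarith
  have pq0 : ∀ p' q', F.Col p' q' → p' ≠ t → p' ≠ s → q' ≠ t → q' ≠ s → ∀ y ∈ F.Hn,
      F.co p' y < 0 → False := by
    intro p q h p1 p2 q1 q2 y hy hc
    have hu := hS.col_u hν h
    obtain ⟨hk, hcn⟩ := hS.n_data F hU h.1 hu
    have hc1 : F.co p y = -1 :=
      le_antisymm ((coI y hy p h.1).lt_zero hc) (coge y hy p h.1)
    obtain ⟨hG, hGU⟩ := hS.col_a hν hU h
    obtain ⟨r, hr, s', hs', r1, r2, r3, e⟩ := hS.col_H0 hν hGU hG (hn1 y hy).1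
      (by rw [hS.N_u F h.1, (hn1 y hy).2, hk, hc1]; norm_num)
      (by rw [hS.n_N F h.1]; rintro rfl
          have := F.co_self _ h.1
          linarith)
    rcases hS.of_mem_N F h.1 hr with h1 | ⟨hr, h1⟩
    · exact r1 h1
    rcases hS.of_mem_N F h.1 hs' with h2 | ⟨hs', h2⟩
    · have hcq : F.co q y = -1 := by
        rw [e, map_sub, h2, h.2.2.2, (hS.n_data F hU h.2.1 (hS.col_u hν h.symm)).2,
          F.co_ne q h.2.1 r hr r2.symm]
        norm_num
      have hpm := (memZ p).2 ⟨h.1, p1, p2⟩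
      have hqm : q ∈ ((F.S.erase t).erase s).erase p :=
        Finset.mem_erase.2 ⟨h.2.2.1.symm, (memZ q).2 ⟨h.2.1, q1, q2⟩⟩
      have e1 := hb2 y
      rw [← Finset.add_sum_erase _ _ hpm, ← Finset.add_sum_erase _ _ hqm, hc1, hcq] at e1
      have e2 : ∑ z ∈ (((F.S.erase t).erase s).erase p).erase q, F.co z y ≤ 0 :=
        Finset.sum_nonpos fun z hz => by
          obtain ⟨h1, h2, h3⟩ := (memZ z).1 (Finset.mem_of_mem_erase (Finset.mem_of_mem_erase hz))
          exact cole y hy z h1 h2 h3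
      have := bge y hy
      linarith
    · rw [e, map_sub, F.co_ne p h.1 _ hs' h2.symm, F.co_ne p h.1 r hr h1.symm] at hc1
      norm_num at hc1
  have zz : ∀ z ∈ F.S, z ≠ t → z ≠ s → z ≠ p → z ≠ q → ∀ y ∈ F.Hn, F.co z y < 0 → y = -z := by
    intro z hz z1 z2 z3 z4 y hy hc
    obtain ⟨hk, hcn⟩ := hS.n_data F hU hz (ur z hz)
    have hc1 : F.co z y = -1 :=
      le_antisymm ((coI y hy z hz).lt_zero hc) (coge y hy z hz)
    obtain ⟨hG, hGU, hGn⟩ := hS.col_b hν hU h hz z3 z4 (cox z hz z1 z2 z3 z4)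
    obtain ⟨r, hr, s', hs', r1, r2, r3, e⟩ := hS.col_H0 hν hGU hG (hn1 y hy).1
      (by rw [hS.N_u F hz, (hn1 y hy).2, hk, hc1]; norm_num)
      (by rw [hGn]; rintro rfl
          have := (hn1 _ hy).2
          linarith)
    obtain ⟨s2, hs2, s2z, e2⟩ := hS.col_form hν hU h hz z3 z4
    have e3 := G3 z (Finset.mem_erase.2 ⟨z4, hz⟩)
    rw [if_neg z1.symm, if_neg z2.symm, if_neg z3.symm, e2, map_sub, bS z hz, if_neg z1, if_neg z2,
      bS s2 hs2] at e3
    have s2t : s2 ≠ t := by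
      intro hh; rw [if_pos hh] at e3
      split_ifs at e3 <;> norm_num at e3
    have s2s : s2 ≠ s := by
      intro hh; rw [if_pos hh] at e3
      split_ifs at e3 <;> norm_num at e3
    rcases hS.of_mem_N F hz hs' with h2 | ⟨hs', h2⟩
    · rcases hS.of_mem_N F hz hr with h1 | ⟨hr, h1⟩
      · exact absurd (h2.trans h1.symm) r3
      · by_cases e4 : r = s2
        · rw [e, h2, e2, e4]; abel
        · have := cole y hy s2 hs2 s2t s2s
          rw [e, h2, e2, map_sub, map_sub, F.co_self _ hs2, F.co_ne s2 hs2 z hz s2z,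
            F.co_ne s2 hs2 r hr (Ne.symm e4)] at this
          norm_num at this
    · rcases hS.of_mem_N F hz hr with h1 | ⟨hr, h1⟩
      · rw [e, h1, map_sub, hcn, F.co_ne z hz _ hs' h2.symm] at hc1
        norm_num at hc1
      · rw [e, map_sub, F.co_ne z hz _ hs' h2.symm, F.co_ne z hz r hr h1.symm] at hc1
        norm_num at hc1
  have sub : F.Hn ⊆ ((F.S.erase p).erase q).image (fun z => -z) := by
    intro y hy
    rw [Finset.mem_image]
    by_cases hh : ∃ z ∈ F.S, z ≠ t ∧ z ≠ s ∧ F.co z y < 0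
    · obtain ⟨z, hz, z1, z2, hc⟩ := hh
      have z3 : z ≠ p := by
        rintro rfl; exact pq0 z q h tp.symm sp.symm tq.symm sq.symm y hy hc
      have z4 : z ≠ q := by
        rintro rfl; exact pq0 z p h.symm tq.symm sq.symm tp.symm sp.symm y hy hc
      exact ⟨z, by simp [z3, z4, hz], (zz z hz z1 z2 z3 z4 y hy hc).symm⟩
    · push Not at hh
      have : b y = 0 := by
        refine le_antisymm (ble y hy) ?_
        rw [hb2]
        exact Finset.sum_nonneg fun z hz => by
          obtain ⟨h1, h2, h3⟩ := (memZ z).1 hz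
          exact hh z h1 h2 h3
      rcases b0 y hy this with e | e
      · exact ⟨t, by simp [tp, tq, ht], e.symm⟩
      · exact ⟨s, by simp [sp, sq, hs], e.symm⟩
  have c0 := (Finset.card_le_card sub).trans Finset.card_image_le
  rw [hS.tII_card hν hII] at c0
  have c1 := Finset.card_erase_add_one hp
  have c2 : ((F.S.erase p).erase q).card + 1 = _ :=
    Finset.card_erase_add_one (Finset.mem_erase.2 ⟨hpq.symm, hq⟩)
  rw [F.card] at c1
  omega

end z
end Sys
end abstractpart5

section abstractpart6
set_option linter.unusedSectionVars false
variable {E : Type*} [AddCommGroup E] [Module ℝ E] [DecidableEq E]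
  {V : Finset E} {L : AddSubgroup E} {d : ℕ}
open Fct

namespace Fct
theorem form_two (F : Fct V L d) {x : E} (hu : F.u x = -2)
    (h0 : ∀ w ∈ F.S, F.co w x ≤ 0) (hi : ∀ w ∈ F.S, IsI (F.co w x)) :
    ∃ p ∈ F.S, ∃ q ∈ F.S, x = - p - q := by
  rw [F.u_apply] at hu
  obtain ⟨p, hp, q, hq, h⟩ := sum_two F.S (fun s => - F.co s x)
      (fun s hs => by have := h0 s hs; linarith)
      (fun s hs => (hi s hs).neg) (by rw [Finset.sum_neg_distrib]; linarith)
  refine ⟨p, hp, q, hq, F.ext' fun s hs => ?_⟩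
  rw [map_sub, map_neg, F.co_eq hs hp, F.co_eq hs hq]
  have := h s hs
  linarith

/-- the partner map -/
noncomputable def sg (F : Fct V L d) (v : E) : E := F.n v + v

/-- data of a unimodular facet of type II -/
structure UD (F : Fct V L d) (c : E) : Prop where
  U : F.Unim
  II : F.TII
  hc : c ∈ F.S
  uc : F.u (F.n c) = -1
  un : ∀ v ∈ F.S, v ≠ c → F.u (F.n v) = 0
end Fct

namespace Sys

section z

theorem U0n (hS : Sys V L d) (hν : (∑ x ∈ V, x) = 0) {F : Fct V L d} (hU : F.Unim) {v : E} (hv : v ∈ F.S) (hu : F.u (F.n v) = 0) :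
    ∃ s ∈ F.S, s ≠ v ∧ F.n v = s - v := by
  refine F.form_sub hv hu (hS.n_data F hU hv hu).2 (fun w hw hwv => ?_)
    (fun w hw => hU _ (hS.memL (hS.n_memV F hv)) w hw)
  by_contra! hh
  have := hS.eq_n F hw (hS.n_memV F hv) hu hh
  exact hS.no_col hν hU ⟨hv, hw, hwv.symm, this⟩

theorem U0 (hS : Sys V L d) (hν : (∑ x ∈ V, x) = 0) {F : Fct V L d} (hU : F.Unim) {y : E} (hy : y ∈ V) (hu : F.u y = 0) :
    ∃ q ∈ F.S, ∃ p ∈ F.S, p ≠ q ∧ F.n q = y ∧ y = p - q := by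
  obtain ⟨q, hq, rfl⟩ := Finset.mem_image.1 (hS.H0_sub F ((hS.mem_H0 F).2 ⟨hy, hu⟩))
  obtain ⟨s, hs, h1, h2⟩ := hS.U0n hν hU hq hu
  exact ⟨q, hq, s, hs, h1, rfl, h2⟩

theorem R' (hS : Sys V L d) (hν : (∑ x ∈ V, x) = 0) {F : Fct V L d} (hU : F.Unim) {v y : E} (hv : v ∈ F.S) (h0 : F.u (F.n v) = 0)
    (hy : y ∈ V) (hu : F.u y = -1) (hc : F.co v y < 0) : ∃ r ∈ F.S, r ≠ v ∧ y = F.n v - r := by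
  have hc1 : F.co v y = -1 :=
    le_antisymm ((hU y (hS.memL hy) v hv).lt_zero hc) (hS.co_ge hU hv h0 hy hu)
  obtain ⟨hk, hcn⟩ := hS.n_data F hU hv h0
  obtain ⟨r, hr, p, hp, hpr, -, e⟩ := hS.U0 hν (hS.unim_N F hU hv hcn) hy
    (by rw [hS.N_u F hv, hu, hk, hc1]; norm_num)
  rcases hS.of_mem_N F hv hp with h1 | ⟨hp, h1⟩
  · rcases hS.of_mem_N F hv hr with h2 | ⟨hr, h2⟩
    · exact absurd (h1.trans h2.symm) hpr
    · exact ⟨r, hr, h2, by rw [e, h1]⟩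
  · rcases hS.of_mem_N F hv hr with h2 | ⟨hr, h2⟩
    · rw [e, map_sub, h2, hcn, F.co_ne v hv p hp h1.symm] at hc1
      norm_num at hc1
    · rw [e, map_sub, F.co_ne v hv r hr h2.symm, F.co_ne v hv p hp h1.symm] at hc1
      norm_num at hc1

theorem X (hS : Sys V L d) (hν : (∑ x ∈ V, x) = 0) {F : Fct V L d} (hU : F.Unim) {p q s : E} (hp : p ∈ F.S) (hq : q ∈ F.S) (hs : s ∈ F.S)
    (h0 : F.u (F.n s) = 0)
    (sp : s ≠ p) (sq : s ≠ q) (h1 : -p - q ∈ V) (h2 : s - p - q ∈ V) : False := by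
  have hk := (hS.n_data F hU hs h0).1
  have := hS.two_unique hν (F.N s) h1 h2
    (by rw [hS.N_u F hs, map_sub, map_neg, map_sub, map_neg, F.u_mem hp, F.u_mem hq,
          F.co_ne s hs p hp sp, F.co_ne s hs q hq sq]; norm_num)
    (by rw [hS.N_u F hs, map_sub, map_sub, map_sub, map_sub, F.u_mem hp, F.u_mem hq, F.u_mem hs,
          F.co_ne s hs p hp sp, F.co_ne s hs q hq sq, F.co_self s hs, hk]; norm_num)
  have h3 : s = 0 := by
    have e : s = (s - p - q) - (-p - q) := by abel
    rw [e, ← this, sub_self]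
  exact hS.zero (h3 ▸ F.sub hs)

theorem III_form2 (hS : Sys V L d) (hν : (∑ x ∈ V, x) = 0) {F : Fct V L d} (hU : F.Unim) (h : F.TIII) : ∃ p ∈ F.S, ∃ q ∈ F.S, p ≠ q ∧
    -p - q ∈ V := by
  obtain ⟨x, hx, hu, -⟩ := hS.tIII_ex hν h
  obtain ⟨p, hp, q, hq, e⟩ := F.form_two hu (fun w hw => hS.III0 hν hU h hx hu hw)
    (fun w hw => hU x (hS.memL hx) w hw)
  refine ⟨p, hp, q, hq, ?_, e ▸ hx⟩
  rintro rfl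
  exact hS.neg_two_notmem (F.sub hp) (e ▸ hx)

theorem exists_UII (hS : Sys V L d) (hν : (∑ x ∈ V, x) = 0) : ∃ F : Fct V L d, F.Unim ∧ F.TII := by
  by_contra! hcon
  have hIII : ∀ F : Fct V L d, F.Unim → F.TIII := fun F hF =>
    (hS.ty hν F).resolve_left (hcon F hF)
  obtain ⟨F, hU⟩ := hS.exists_unim hν
  obtain ⟨v, hv, w, hw, hvw, hx⟩ := hS.III_form2 hν hU (hIII F hU)
  have hv0 := hS.tIII_n hν (hIII F hU) hv
  obtain ⟨s, hs, hsv, e⟩ := hS.U0n hν hU hv hv0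
  obtain ⟨hk, hcn⟩ := hS.n_data F hU hv hv0
  have hGU := hS.unim_N F hU hv hcn
  have hGI := hIII _ hGU
  have hwG := hS.mem_N F hv hw hvw.symm
  have hsG := hS.mem_N F hv hs hsv
  have hnG := hS.n_memN F hv
  have ex : -v - w = F.n v - s - w := by rw [e]; abel
  have uG : (F.N v).u (-v - w) = -1 := by
    rw [ex, map_sub, map_sub, u_mem _ hwG, u_mem _ hsG, u_mem _ hnG]; norm_num
  have hw0 := hS.tIII_n hν hGI hwG
  by_cases hsw : s = w
  · have := hS.co_ge hGU hwG hw0 hx uG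
    rw [ex, hsw, map_sub, map_sub, co_self _ _ hwG, co_ne _ _ hwG _ hnG (hS.n_ne F hv hw)] at this
    norm_num at this
  · have hcw : (F.N v).co w (-v - w) = -1 := by
      rw [ex, map_sub, map_sub, co_self _ _ hwG, co_ne _ _ hwG _ hnG (hS.n_ne F hv hw),
        co_ne _ _ hwG _ hsG (Ne.symm hsw)]
      norm_num
    obtain ⟨r, hr, hrw, e1⟩ := hS.R' hν hGU hwG hw0 hx uG (by rw [hcw]; norm_num)
    obtain ⟨g, hg, hgw, e2⟩ := hS.U0n hν hGU hwG hw0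
    have e3 : F.n v = g - r + s := by
      have : F.n v = (-v - w) + s + w := by rw [ex]; abel
      rw [this, e1, e2]; abel
    have e4 : (F.N v).co (F.n v) (F.n v) = (F.N v).co (F.n v) (g - r + s) := by rw [← e3]
    rw [co_self _ _ hnG, map_add, map_sub, co_eq _ hnG hg, co_eq _ hnG hr,
      co_ne _ _ hnG _ hsG (hS.n_ne F hv hs).symm] at e4
    have hgn : F.n v = g := by
      by_contra hh
      rw [if_neg hh] at e4
      split_ifs at e4 <;> norm_num at e4
    have hm := hS.n_memV _ hwG
    rw [e2, ← hgn, e] at hm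
    exact hS.X hν hU hv hw hs (hS.tIII_n hν (hIII F hU) hs) hsv hsw hx hm

theorem exists_UD (hS : Sys V L d) (hν : (∑ x ∈ V, x) = 0) : ∃ (F : Fct V L d) (c : E), F.UD c := by
  obtain ⟨F, hU, hI⟩ := hS.exists_UII hν
  have : ∃ c ∈ F.S, F.u (F.n c) ≠ 0 := by
    by_contra! hh
    have h1 : F.S.image F.n ⊆ F.H0 := by
      intro y hy
      obtain ⟨r, hr, rfl⟩ := Finset.mem_image.1 hy
      exact (hS.mem_H0 F).2 ⟨hS.n_memV F hr, hh r hr⟩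
    have h2 := Finset.card_le_card h1
    rw [Finset.card_image_of_injOn, F.card] at h2
    · unfold Fct.TII at hI; omega
    · intro r hr r' hr' e
      by_contra hne
      exact hS.no_col hν hU ⟨hr, hr', hne, e⟩
  obtain ⟨c, hc, h0⟩ := this
  refine ⟨F, c, hU, hI, hc, ?_, ?_⟩
  · refine hS.tII_Hn hν hI ((hS.mem_Hn F).2 ⟨hS.n_memV F hc, ?_⟩)
    exact lt_of_le_of_ne (hS.u_le_zero F (hS.n_memV F hc) (hS.n_notmem F hc)) h0
  · intro v hv hvc
    by_contra h1
    exact hS.two_bad hν F hv hc hvc h1 h0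

theorem ud_mk (hS : Sys V L d) (hν : (∑ x ∈ V, x) = 0) {F : Fct V L d} (hU : F.Unim) {c : E} (hI : F.TII) (hc : c ∈ F.S)
    (h0 : F.u (F.n c) ≠ 0) : F.UD c := by
  refine ⟨hU, hI, hc, ?_, ?_⟩
  · refine hS.tII_Hn hν hI ((hS.mem_Hn F).2 ⟨hS.n_memV F hc, ?_⟩)
    exact lt_of_le_of_ne (hS.u_le_zero F (hS.n_memV F hc) (hS.n_notmem F hc)) h0
  · intro v hv hvc
    by_contra h1
    exact hS.two_bad hν F hv hc hvc h1 h0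

theorem ud_sg (hS : Sys V L d) (hν : (∑ x ∈ V, x) = 0) {F : Fct V L d} {c : E} (h : F.UD c) {v : E} (hv : v ∈ F.S) (hvc : v ≠ c) :
    F.sg v ∈ F.S ∧ F.sg v ≠ v ∧ F.n v = F.sg v - v := by
  obtain ⟨s, hs, hsv, e⟩ := hS.U0n hν h.U hv (h.un v hv hvc)
  have : F.sg v = s := by rw [Fct.sg, e]; abel
  rw [this]; exact ⟨hs, hsv, e⟩

theorem ud_kc (hS : Sys V L d) (hν : (∑ x ∈ V, x) = 0) {F : Fct V L d} {c : E} (h : F.UD c) :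
    (F.k c = 2 ∧ F.co c (F.n c) = -1) ∨ (F.k c = 1 ∧ F.co c (F.n c) = -2) := by
  have h1 := hS.k_co_n F h.hc
  rw [h.uc] at h1
  have h2 := hS.k_pos F h.hc
  have h3 := hS.k_le_two hν F h.hc
  by_cases e : F.k c = 1
  · right; rw [e] at h1; exact ⟨e, by linarith⟩
  · left
    have h4 := (hS.k_int F h.hc).gt_one (lt_of_le_of_ne h2 (Ne.symm e))
    have h5 : F.k c = 2 := by linarith
    rw [h5] at h1
    exact ⟨h5, by linarith⟩

theorem ud_sum (hS : Sys V L d) (hν : (∑ x ∈ V, x) = 0) {F : Fct V L d} {c : E} (h : F.UD c) {z : E} (hz : z ∈ F.S) :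
    (((F.S.erase c).filter fun s => F.sg s = z).card : ℝ) + (if z = c then 1 else 0)
      + ∑ y ∈ F.Hn, F.co z y = 0 := by
  have inj : Set.InjOn F.n (F.S.erase c : Finset E) := by
    intro r hr r' hr' e
    by_contra hne
    exact hS.no_col hν h.U ⟨Finset.mem_of_mem_erase hr, Finset.mem_of_mem_erase hr', hne, e⟩
  have H0e : F.H0 = (F.S.erase c).image F.n := by
    ext y
    rw [hS.mem_H0, Finset.mem_image]
    constructor
    · rintro ⟨h1, h2⟩
      obtain ⟨r, hr, rfl⟩ := Finset.mem_image.1 (hS.H0_sub F ((hS.mem_H0 F).2 ⟨h1, h2⟩))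
      refine ⟨r, Finset.mem_erase.2 ⟨?_, hr⟩, rfl⟩
      rintro rfl
      rw [h.uc] at h2; norm_num at h2
    · rintro ⟨r, hr, rfl⟩
      obtain ⟨hrc, hr⟩ := Finset.mem_erase.1 hr
      exact ⟨hS.n_memV F hr, h.un r hr hrc⟩
  have e0 : ∑ x ∈ V, F.co z x = 0 := by rw [← map_sum, hν, map_zero]
  rw [hS.split F, H0e, Finset.sum_image inj] at e0
  have e1 : ∑ s ∈ F.S.erase c, F.co z (F.n s) = ∑ s ∈ F.S.erase c, F.co z (F.sg s - s) :=
    Finset.sum_congr rfl fun s hs => by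
      obtain ⟨hsc, hs⟩ := Finset.mem_erase.1 hs
      rw [← (hS.ud_sg hν h hs hsc).2.2]
  rw [e1, F.fib_sum (F.S.erase c) (Finset.erase_subset _ _) F.sg (fun s hs => by
      obtain ⟨hsc, hs⟩ := Finset.mem_erase.1 hs
      exact (hS.ud_sg hν h hs hsc).1) hz] at e0
  have e2 : ∑ x ∈ F.S, F.co z x = 1 := by
    rw [Finset.sum_congr rfl (fun w hw => F.co_eq hz hw)]
    simp [hz]
  rw [e2] at e0
  by_cases hzc : z = c
  · simp [hzc] at e0 ⊢; linarith
  · simp [hzc, hz] at e0 ⊢; linarith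

theorem ud_Hn (hS : Sys V L d) (hν : (∑ x ∈ V, x) = 0) {F : Fct V L d} {c : E} (h : F.UD c) {y : E} (hy : y ∈ F.Hn) :
    y ∈ V ∧ F.u y = -1 := ⟨((hS.mem_Hn F).1 hy).1, hS.tII_Hn hν h.II hy⟩

theorem ud_coc (hS : Sys V L d) (hν : (∑ x ∈ V, x) = 0) {F : Fct V L d} {c : E} (h : F.UD c) {y : E} (hy : y ∈ V) (hyu : F.u y = -1)
    (hyc : y ≠ F.n c) : -1 ≤ F.k c * F.co c y := by
  have := hS.u_le_kco F h.hc hy (hS.notmem_of_u F (by rw [hyu]; norm_num)) hyc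
  linarith

theorem ud_III (hS : Sys V L d) (hν : (∑ x ∈ V, x) = 0) {F : Fct V L d} {c : E} (h : F.UD c) {v : E} (hv : v ∈ F.S) (hvc : v ≠ c)
    (hG : (F.N v).TIII) : ∃ q ∈ F.S, q ≠ v ∧ v - F.sg v - q ∈ V := by
  obtain ⟨hs, hsv, e⟩ := hS.ud_sg hν h hv hvc
  obtain ⟨hk, hcn⟩ := hS.n_data F h.U hv (h.un v hv hvc)
  have hGU := hS.unim_N F h.U hv hcn
  obtain ⟨a, ha, b, hb, hab, hm⟩ := hS.III_form2 hν hGU hG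
  have key : ∀ q ∈ (F.N v).S, F.n v ≠ q → -F.n v - q ∈ V → ∃ q ∈ F.S, q ≠ v ∧ v - F.sg v - q ∈ V := by
    intro q hq hne hm
    rcases hS.of_mem_N F hv hq with h1 | ⟨hq, h1⟩
    · exact absurd h1.symm hne
    · refine ⟨q, hq, h1, ?_⟩
      convert hm using 1
      rw [e]; abel
  rcases hS.of_mem_N F hv ha with h1 | ⟨ha', h1⟩
  · subst h1; exact key b hb hab hm
  rcases hS.of_mem_N F hv hb with h2 | ⟨hb', h2⟩
  · subst h2; exact key a ha hab.symm (by convert hm using 1; abel)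
  have := hS.ge1 hν h.II hm
  rw [map_sub, map_neg, F.u_mem ha', F.u_mem hb'] at this
  norm_num at this

end z
end Sys
end abstractpart6

section abstractpart7
set_option linter.unusedSectionVars false
variable {E : Type*} [AddCommGroup E] [Module ℝ E] [DecidableEq E]
  {V : Finset E} {L : AddSubgroup E} {d : ℕ}
open Fct

namespace Sys

section z

/-! ### Case A -/

theorem A_k (hS : Sys V L d) (hν : (∑ x ∈ V, x) = 0) {F : Fct V L d} {c : E} (h : F.UD c) (hA : F.co c (F.n c) = -1) : F.k c = 2 := by
  rcases hS.ud_kc hν h with h1 | h1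
  · exact h1.1
  · rw [hA] at h1; norm_num at h1

theorem A_le (hS : Sys V L d) (hν : (∑ x ∈ V, x) = 0) {F : Fct V L d} {c : E} (h : F.UD c) (hA : F.co c (F.n c) = -1) {y : E} (hy : y ∈ V)
    (hu : F.u y ≤ 0) : F.co c y ≤ 0 := by
  have hk := hS.A_k hν h hA
  have hI : (F.N c).TII := by
    rcases hS.ty hν (F.N c) with h1 | h1
    · exact h1
    · have := hS.tIII_N_k hν h.hc h1
      linarith
  have := hS.ge1 hν hI hy
  rw [hS.N_u F h.hc, hk] at this
  exact (h.U y (hS.memL hy) c h.hc).lt_one (by linarith)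

theorem A_sg (hS : Sys V L d) (hν : (∑ x ∈ V, x) = 0) {F : Fct V L d} {c : E} (h : F.UD c) (hA : F.co c (F.n c) = -1) {v : E}
    (hv : v ∈ F.S) (hvc : v ≠ c) : F.sg v ≠ c := by
  intro e
  obtain ⟨hs, hsv, en⟩ := hS.ud_sg hν h hv hvc
  have := hS.A_le hν h hA (hS.n_memV F hv) (h.un v hv hvc).le
  rw [en, map_sub, e, F.co_self c h.hc, F.co_ne c h.hc v hv hvc.symm] at this
  norm_num at this

theorem A_zero (hS : Sys V L d) (hν : (∑ x ∈ V, x) = 0) {F : Fct V L d} {c : E} (h : F.UD c) (hA : F.co c (F.n c) = -1) {y : E} (hy : y ∈ V)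
    (hu : F.u y = -1) (hyc : y ≠ F.n c) : F.co c y = 0 := by
  have h1 := hS.ud_coc hν h hy hu hyc
  rw [hS.A_k hν h hA] at h1
  exact le_antisymm (hS.A_le hν h hA hy (by rw [hu]; norm_num))
    ((h.U y (hS.memL hy) c h.hc).gt_neg_one (by linarith))

theorem A_tII (hS : Sys V L d) (hν : (∑ x ∈ V, x) = 0) {F : Fct V L d} {c : E} (h : F.UD c) (hA : F.co c (F.n c) = -1) {v : E}
    (hv : v ∈ F.S) (hvc : v ≠ c) : (F.N v).TII := by
  rcases hS.ty hν (F.N v) with hG | hG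
  · exact hG
  exfalso
  obtain ⟨hs, hsv, e⟩ := hS.ud_sg hν h hv hvc
  have hsc := hS.A_sg hν h hA hv hvc
  obtain ⟨hk, hcn⟩ := hS.n_data F h.U hv (h.un v hv hvc)
  have hGU := hS.unim_N F h.U hv hcn
  obtain ⟨q, hq, hqv, hm⟩ := hS.ud_III hν h hv hvc hG
  generalize F.sg v = s at *
  have hu : F.u (v - s - q) = -1 := by
    rw [map_sub, map_sub, F.u_mem hv, F.u_mem hs, F.u_mem hq]; norm_num
  have hqs : q ≠ s := by
    rintro rfl
    have := hS.co_ge h.U hq (h.un q hq hsc) hm hu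
    rw [map_sub, map_sub, F.co_self q hq, F.co_ne q hq v hv hqv] at this
    norm_num at this
  have hqG := hS.mem_N F hv hq hqv
  have hsG := hS.mem_N F hv hs hsv
  have hnG := hS.n_memN F hv
  have cc : F.co c (v - s - q) = - if c = q then 1 else 0 := by
    rw [map_sub, map_sub, F.co_ne c h.hc v hv hvc.symm, F.co_ne c h.hc s hs hsc.symm,
      F.co_eq h.hc hq]; ring
  by_cases hyc : v - s - q = F.n c
  · have hcq : c = q := by
      by_contra hh
      rw [hyc, hA, if_neg hh] at cc
      norm_num at cc
    subst hcq
    obtain ⟨g, hg, hgc, eg⟩ := hS.U0n hν hGU hqG (hS.tIII_n hν hG hqG)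
    have hgm := hS.n_memV _ hqG
    rw [eg] at hgm
    rcases hS.of_mem_N F hv hg with h1 | ⟨hg, h1⟩
    · rw [h1, e] at hgm
      have u1 : F.u (s - v - c) = -1 := by
        rw [map_sub, map_sub, F.u_mem hv, F.u_mem hs, F.u_mem hq]; norm_num
      have c1 : F.co c (s - v - c) = -1 := by
        rw [map_sub, map_sub, F.co_ne c hq v hv hvc.symm, F.co_ne c hq s hs hsc.symm,
          F.co_self c hq]; ring
      have e1 : s - v - c = F.n c := by
        by_contra hh
        have := hS.A_zero hν h hA hgm u1 hh
        linarith
      have e2 : F.co s (s - v - c) = F.co s (v - s - c) := by rw [e1, hyc]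
      rw [map_sub, map_sub, map_sub, map_sub, F.co_self s hs, F.co_ne s hs v hv hsv,
        F.co_ne s hs c hq hsc] at e2
      norm_num at e2
    · have := hS.eq_n F hq hgm (by rw [map_sub, F.u_mem hg, F.u_mem hq]; norm_num)
        (by rw [map_sub, F.co_self c hq, F.co_ne c hq g hg hgc.symm]; norm_num)
      have u1 := h.uc
      rw [← this, map_sub, F.u_mem hg, F.u_mem hq] at u1
      norm_num at u1
  · have c0 := hS.A_zero hν h hA hm hu hyc
    have hqc : q ≠ c := by
      rintro rfl
      rw [c0, if_pos rfl] at cc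
      norm_num at cc
    obtain ⟨r, hr, hrq, er⟩ := hS.R' hν h.U hq (h.un q hq hqc) hm hu
      (by rw [map_sub, map_sub, F.co_self q hq, F.co_ne q hq v hv hqv, F.co_ne q hq s hs hqs]
          norm_num)
    obtain ⟨hp, hpq, ep⟩ := hS.ud_sg hν h hq hqc
    have e1 : F.co v (v - s - q) = F.co v (F.sg q - q - r) := by rw [er, ep]
    rw [map_sub, map_sub, map_sub, map_sub, F.co_self v hv, F.co_ne v hv s hs hsv.symm,
      F.co_eq hv hp, F.co_eq hv hr] at e1
    have hpv : v = F.sg q := by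
      by_contra hh
      rw [if_neg hh] at e1
      split_ifs at e1 <;> linarith
    have hm2 := hS.n_memV F hq
    rw [ep, ← hpv] at hm2
    refine hS.X hν hGU hnG hqG hsG (hS.tIII_n hν hG hsG) (hS.n_ne F hv hs) hqs.symm
      (by convert hm using 1; rw [e]; abel) (by convert hm2 using 1; rw [e]; abel)

theorem A_Hn (hS : Sys V L d) (hν : (∑ x ∈ V, x) = 0) {F : Fct V L d} {c : E} (h : F.UD c) (hA : F.co c (F.n c) = -1) {y : E} (hy : y ∈ V)
    (hu : F.u y = -1) : ∃ s ∈ F.S, y = -s := by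
  refine F.form_neg hu (fun w hw => ?_) (fun w hw => h.U y (hS.memL hy) w hw)
  by_cases hwc : w = c
  · rw [hwc]; exact hS.A_le hν h hA hy (by rw [hu]; norm_num)
  · have := hS.co_le hν h.U hw (h.un w hw hwc) (hS.A_tII hν h hA hw hwc) hy
    rw [hu] at this; linarith

theorem A_neg (hS : Sys V L d) (hν : (∑ x ∈ V, x) = 0) {F : Fct V L d} {c : E} (h : F.UD c) (hA : F.co c (F.n c) = -1) {s : E}
    (hs : s ∈ F.S) : -s ∈ V := by
  have sub : F.Hn ⊆ F.S.image (fun z => -z) := by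
    intro y hy
    obtain ⟨h1, h2⟩ := hS.ud_Hn hν h hy
    obtain ⟨s, hs, e⟩ := hS.A_Hn hν h hA h1 h2
    exact Finset.mem_image.2 ⟨s, hs, e.symm⟩
  have := Finset.eq_of_subset_of_card_le sub (by
    rw [hS.tII_card hν h.II]; exact Finset.card_image_le.trans F.card.le)
  have h2 : -s ∈ F.Hn := by
    rw [this]; exact Finset.mem_image_of_mem (fun z => -z) hs
  exact (hS.ud_Hn hν h h2).1

theorem A_c (hS : Sys V L d) (hν : (∑ x ∈ V, x) = 0) {F : Fct V L d} {c : E} (h : F.UD c) (hA : F.co c (F.n c) = -1) : F.n c = -c := by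
  obtain ⟨s, hs, e⟩ := hS.A_Hn hν h hA (hS.n_memV F h.hc) h.uc
  rw [e, map_neg, F.co_eq h.hc hs] at hA
  have : c = s := by
    by_contra hh
    rw [if_neg hh] at hA; norm_num at hA
  rw [e, this]

theorem A_coge (hS : Sys V L d) (hν : (∑ x ∈ V, x) = 0) {F : Fct V L d} {c : E} (h : F.UD c) (hA : F.co c (F.n c) = -1) {y : E}
    (hy : y ∈ V) : -1 ≤ F.co c y := by
  have b : ∀ s ∈ F.S, 0 ≤ F.co c s ∧ F.co c s ≤ 1 := by
    intro s hs
    rw [F.co_eq h.hc hs]; split_ifs <;> norm_num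
  by_cases h1 : y ∈ F.S
  · linarith [b y h1]
  have h2 := hS.u_le_zero F hy h1
  by_cases h3 : F.u y = 0
  · obtain ⟨q, hq, p, hp, -, -, e⟩ := hS.U0 hν h.U hy h3
    rw [e, map_sub]
    linarith [b q hq, b p hp]
  · have h4 := hS.tII_Hn hν h.II ((hS.mem_Hn F).2 ⟨hy, lt_of_le_of_ne h2 h3⟩)
    obtain ⟨s, hs, e⟩ := hS.A_Hn hν h hA hy h4
    rw [e, map_neg]
    linarith [b s hs]

theorem A_invol (hS : Sys V L d) (hν : (∑ x ∈ V, x) = 0) {F : Fct V L d} {c : E} (h : F.UD c) (hA : F.co c (F.n c) = -1) {y : E}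
    (hy : y ∈ F.S) (hyc : y ≠ c) : F.sg (F.sg y) = y := by
  obtain ⟨hz, hzy, ey⟩ := hS.ud_sg hν h hy hyc
  have hzc := hS.A_sg hν h hA hy hyc
  obtain ⟨ht, htz, ez⟩ := hS.ud_sg hν h hz hzc
  have htc := hS.A_sg hν h hA hz hzc
  have hym := hS.n_memV F hy
  generalize F.sg y = z at *
  generalize F.sg z = t at *
  by_contra hty
  obtain ⟨hk, hcn⟩ := hS.n_data F h.U hz (h.un z hz hzc)
  have hGU := hS.unim_N F h.U hz hcn
  have hGI := hS.A_tII hν h hA hz hzc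
  have hcG := hS.mem_N F hz h.hc hzc.symm
  have htG := hS.mem_N F hz ht htz
  have hyG := hS.mem_N F hz hy hzy.symm
  have hnG := hS.n_memN F hz
  have ey2 : F.n y = t - F.n z - y := by rw [ey, ez]; abel
  have hcm := hS.A_neg hν h hA h.hc
  have key : (F.N z).n c = -c := by
    by_contra hne
    have u1 : (F.N z).u (-c) = -1 := by rw [map_neg, u_mem _ hcG]
    have k1 := hS.u_le_kco _ hcG hcm (hS.notmem_of_u _ (by rw [u1]; norm_num)) (Ne.symm hne)
    rw [u1, map_neg, co_self _ _ hcG] at k1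
    have k2 := hS.k_pos _ hcG
    have k3 : (F.N z).k c = 1 := by linarith
    have hg := hS.n_memV _ hcG
    by_cases u0 : (F.N z).u ((F.N z).n c) = 0
    · obtain ⟨p, hp, hpc, ep⟩ := hS.U0n hν hGU hcG u0
      rw [ep] at hg
      rcases hS.of_mem_N F hz hp with h1 | ⟨hp, h1⟩
      · rw [h1, ez] at hg
        obtain ⟨s', hs', e'⟩ := hS.A_Hn hν h hA hg
          (by rw [map_sub, map_sub, F.u_mem ht, F.u_mem hz, F.u_mem h.hc]; norm_num)
        have e2 : F.co t (t - z - c) = F.co t (-s') := by rw [e']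
        rw [map_sub, map_sub, map_neg, F.co_self t ht, F.co_ne t ht z hz htz,
          F.co_ne t ht c h.hc htc, F.co_eq ht hs'] at e2
        split_ifs at e2 <;> norm_num at e2
      · have := hS.eq_n F h.hc hg (by rw [map_sub, F.u_mem hp, F.u_mem h.hc]; norm_num)
          (by rw [map_sub, F.co_self c h.hc, F.co_ne c h.hc p hp hpc.symm]; norm_num)
        have u2 := h.uc
        rw [← this, map_sub, F.u_mem hp, F.u_mem h.hc] at u2
        norm_num at u2
    · have hud := hS.ud_mk hν hGU hGI hcG u0
      have k4 := hS.k_co_n _ hcG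
      rw [k3, hud.uc] at k4
      have e3 := hS.co_N F hz h.hc hzc.symm ((F.N z).n c)
      have e4 : F.co c (F.n z) = 0 := by
        rw [ez, map_sub, F.co_ne c h.hc t ht htc.symm, F.co_ne c h.hc z hz hzc.symm]; norm_num
      rw [e4] at e3
      have := hS.A_coge hν h hA hg
      linarith
  have hud : (F.N z).UD c := hS.ud_mk hν hGU hGI hcG (by
    rw [key, map_neg, u_mem _ hcG]; norm_num)
  have hA' : (F.N z).co c ((F.N z).n c) = -1 := by rw [key, map_neg, co_self _ _ hcG]
  have h2 := hS.co_le hν hGU htG (hud.un t htG htc) (hS.A_tII hν hud hA' htG htc) hym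
  rw [ey2, map_sub, map_sub, map_sub, map_sub, u_mem _ htG, u_mem _ hnG, u_mem _ hyG,
    co_self _ _ htG, co_ne _ _ htG _ hnG (hS.n_ne F hz ht), co_ne _ _ htG _ hyG hty] at h2
  norm_num at h2

theorem A_out (hS : Sys V L d) (hν : (∑ x ∈ V, x) = 0) {F : Fct V L d} {c : E} (hd : 2 ≤ d) (h : F.UD c) (hA : F.co c (F.n c) = -1) :
    ∃ a b τ, Out F a b c (-c) τ := by
  have : ∃ a ∈ F.S, a ≠ c := Finset.exists_mem_ne (by rw [F.card]; omega) c
  obtain ⟨a, ha, hac⟩ := this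
  have sS : ∀ v ∈ F.S, v ≠ c → F.sg v ∈ F.S := fun v hv hvc => (hS.ud_sg hν h hv hvc).1
  have sne : ∀ v ∈ F.S, v ≠ c → F.sg v ≠ v := fun v hv hvc => (hS.ud_sg hν h hv hvc).2.1
  have sn : ∀ v ∈ F.S, v ≠ c → F.n v = F.sg v - v := fun v hv hvc => (hS.ud_sg hν h hv hvc).2.2
  have sc : ∀ v ∈ F.S, v ≠ c → F.sg v ≠ c := fun v hv hvc => hS.A_sg hν h hA hv hvc
  have si : ∀ v ∈ F.S, v ≠ c → F.sg (F.sg v) = v := fun v hv hvc => hS.A_invol hν h hA hv hvc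
  have hn := fun s (hs : s ∈ F.S) => hS.A_neg hν h hA hs
  have memT : ∀ t, t ∈ ((F.S.erase a).erase (F.sg a)).erase c ↔
      t ∈ F.S ∧ t ≠ a ∧ t ≠ F.sg a ∧ t ≠ c := by
    intro t; simp only [Finset.mem_erase]; tauto
  have hb := sS a ha hac
  have hbc := sc a ha hac
  have sub : ∀ v ∈ F.S, v ≠ c → F.sg v - v ∈ V := fun v hv hvc => by
    rw [← sn v hv hvc]; exact hS.n_memV F hv
  refine ⟨a, F.sg a, F.sg, h.U, ha, hb, h.hc, (sne a ha hac).symm, hac, hbc, ?_, ?_, ?_, ?_⟩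
  · intro t ht
    obtain ⟨h1, h2, h3, h4⟩ := (memT t).1 ht
    refine (memT _).2 ⟨sS t h1 h4, ?_, ?_, sc t h1 h4⟩
    · intro e; apply h3; rw [← e, si t h1 h4]
    · intro e; apply h2; rw [← si t h1 h4, e, si a ha hac]
  · intro t ht
    obtain ⟨h1, h2, h3, h4⟩ := (memT t).1 ht
    exact si t h1 h4
  · intro t ht
    obtain ⟨h1, h2, h3, h4⟩ := (memT t).1 ht
    exact sne t h1 h4
  · intro x
    constructor
    · intro hx
      by_cases hxS : x ∈ F.S
      · by_cases e1 : x = a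
        · exact Or.inl (Or.inl e1)
        by_cases e2 : x = F.sg a
        · subst e2; left; tauto
        by_cases e3 : x = c
        · subst e3; left; tauto
        exact Or.inr ⟨x, (memT x).2 ⟨hxS, e1, e2, e3⟩, Or.inl rfl⟩
      have hu := hS.u_le_zero F hx hxS
      by_cases hu0 : F.u x = 0
      · obtain ⟨q, hq, p, hp, -, hnq, -⟩ := hS.U0 hν h.U hx hu0
        have hqc : q ≠ c := by
          rintro rfl
          have := h.uc
          rw [hnq, hu0] at this; norm_num at this
        have e := sn q hq hqc
        rw [hnq] at e
        by_cases e1 : q = a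
        · subst e1; left; tauto
        by_cases e2 : q = F.sg a
        · subst e2
          rw [si a ha hac] at e; left; tauto
        exact Or.inr ⟨q, (memT q).2 ⟨hq, e1, e2, hqc⟩, Or.inr (Or.inr e)⟩
      · have h4 := hS.tII_Hn hν h.II ((hS.mem_Hn F).2 ⟨hx, lt_of_le_of_ne hu hu0⟩)
        obtain ⟨s, hs, e⟩ := hS.A_Hn hν h hA hx h4
        by_cases e1 : s = a
        · subst e1; left; tauto
        by_cases e2 : s = F.sg a
        · subst e2; left; tauto
        by_cases e3 : s = c
        · subst e3; left; tauto
        exact Or.inr ⟨s, (memT s).2 ⟨hs, e1, e2, e3⟩, Or.inr (Or.inl e)⟩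
    · rintro ((rfl | rfl | rfl | rfl | rfl | rfl | rfl | rfl) | ⟨t, ht, h1⟩)
      · exact F.sub ha
      · exact hn _ ha
      · exact sub _ ha hac
      · have := sub _ hb hbc
        rwa [si _ ha hac] at this
      · exact F.sub hb
      · exact hn _ hb
      · exact F.sub h.hc
      · exact hn _ h.hc
      · obtain ⟨t1, t2, t3, t4⟩ := (memT t).1 ht
        rcases h1 with rfl | rfl | rfl
        · exact F.sub t1
        · exact hn _ t1
        · exact sub _ t1 t4

end z
end Sys
end abstractpart7

section abstractpart8
set_option linter.unusedSectionVars false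
variable {E : Type*} [AddCommGroup E] [Module ℝ E] [DecidableEq E]
  {V : Finset E} {L : AddSubgroup E} {d : ℕ}
open Fct

namespace Sys

section z

/-! ### Case B -/

theorem B_k (hS : Sys V L d) (hν : (∑ x ∈ V, x) = 0) {F : Fct V L d} {c : E} (h : F.UD c) (hB : F.co c (F.n c) = -2) : F.k c = 1 := by
  rcases hS.ud_kc hν h with h1 | h1
  · rw [hB] at h1; norm_num at h1
  · exact h1.1

theorem B_III (hS : Sys V L d) (hν : (∑ x ∈ V, x) = 0) {F : Fct V L d} {c : E} (h : F.UD c) (hB : F.co c (F.n c) = -2) {v : E}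
    (hv : v ∈ F.S) (hvc : v ≠ c) (hG : (F.N v).TIII) : F.n c = v - c - c ∧ F.sg v = c := by
  have hc := h.hc
  obtain ⟨hs, hsv, e⟩ := hS.ud_sg hν h hv hvc
  obtain ⟨hk, hcn⟩ := hS.n_data F h.U hv (h.un v hv hvc)
  have hGU := hS.unim_N F h.U hv hcn
  obtain ⟨q, hq, hqv, hm⟩ := hS.ud_III hν h hv hvc hG
  generalize F.sg v = s at *
  have hcG := hS.mem_N F hv hc hvc.symm
  have hnG := hS.n_memN F hv
  have hcm := hS.n_memV F hc
  have hc0 := hS.tIII_n hν hG hcG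
  obtain ⟨g, hg, hgc, eg⟩ := hS.U0n hν hGU hcG hc0
  have hgm := hS.n_memV _ hcG
  have hgn : g = F.n v := by
    rcases hS.of_mem_N F hv hg with h1 | ⟨hg, h1⟩
    · exact h1
    · exfalso
      rw [eg] at hgm
      have := hS.eq_n F hc hgm (by rw [map_sub, F.u_mem hg, F.u_mem hc]; norm_num)
        (by rw [map_sub, F.co_self c hc, F.co_ne c hc g hg hgc.symm]; norm_num)
      have u1 := h.uc
      rw [← this, map_sub, F.u_mem hg, F.u_mem hc] at u1
      norm_num at u1
  have uG : (F.N v).u (F.n c) = -1 - F.co v (F.n c) := by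
    rw [hS.N_u F hv, h.uc, hk]; ring
  have ccn : F.co c (F.n v) = if c = s then 1 else 0 := by
    rw [e, map_sub, F.co_eq hc hs, F.co_ne c hc v hv hvc.symm]; ring
  have hne : F.n c ≠ (F.N v).n c := by
    intro hh
    rw [hh, eg, hgn, map_sub, ccn, F.co_self c hc] at hB
    split_ifs at hB <;> norm_num at hB
  have hnS : F.n c ∉ (F.N v).S := by
    intro hh
    rcases hS.of_mem_N F hv hh with h1 | ⟨h1, -⟩
    · have := h.uc
      rw [h1, h.un v hv hvc] at this
      norm_num at this
    · exact hS.n_notmem F hc h1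
  have k1 := hS.u_le_kco _ hcG hcm hnS hne
  rw [(hS.n_data _ hGU hcG hc0).1, uG] at k1
  have k2 := hS.co_N F hv hc hvc.symm (F.n c)
  rw [hS.co_N_pivot F hv hcn, hB, ccn] at k2
  have al : 1 ≤ F.co v (F.n c) := by
    refine (h.U _ (hS.memL hcm) v hv).pos ?_
    split_ifs at k2 <;> linarith
  have g2 := hS.ge2 hν (F.N v) hcm
  have uy : (F.N v).u (v - s - q) = -2 := by
    rw [hS.N_u F hv, hk, map_sub, map_sub, map_sub, map_sub, F.u_mem hv, F.u_mem hs, F.u_mem hq,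
      F.co_self v hv, F.co_ne v hv s hs hsv.symm, F.co_ne v hv q hq hqv.symm]
    norm_num
  have ey := hS.two_unique hν (F.N v) hcm hm (by linarith) uy
  have cy := hB
  rw [ey, map_sub, map_sub, F.co_ne c hc v hv hvc.symm, F.co_eq hc hs, F.co_eq hc hq] at cy
  have hcs : c = s := by
    by_contra hh
    rw [if_neg hh] at cy
    split_ifs at cy <;> norm_num at cy
  have hcq : c = q := by
    by_contra hh
    rw [if_neg hh] at cy
    split_ifs at cy <;> norm_num at cy
  rw [ey, ← hcs, ← hcq]
  exact ⟨rfl, rfl⟩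

theorem B_false (hS : Sys V L d) (hν : (∑ x ∈ V, x) = 0) {F : Fct V L d} {c : E} (hdo : Odd d) (h : F.UD c) (hB : F.co c (F.n c) = -2) :
    False := by
  have hc := h.hc
  have hcm := hS.n_memV F hc
  have hkc := hS.B_k hν h hB
  have sS : ∀ v ∈ F.S, v ≠ c → F.sg v ∈ F.S := fun v hv hvc => (hS.ud_sg hν h hv hvc).1
  have sne : ∀ v ∈ F.S, v ≠ c → F.sg v ≠ v := fun v hv hvc => (hS.ud_sg hν h hv hvc).2.1
  have sn : ∀ v ∈ F.S, v ≠ c → F.n v = F.sg v - v := fun v hv hvc => (hS.ud_sg hν h hv hvc).2.2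
  have : ∃ a ∈ F.S, a ≠ c ∧ (F.N a).TIII := by
    by_contra! hh
    have e := F.u_erase hc (F.n c)
    rw [h.uc, hB] at e
    have : ∑ w ∈ F.S.erase c, F.co w (F.n c) ≤ 0 := Finset.sum_nonpos fun w hw => by
      obtain ⟨hwc, hw⟩ := Finset.mem_erase.1 hw
      have := hS.co_le hν h.U hw (h.un w hw hwc)
        ((hS.ty hν (F.N w)).resolve_right (hh w hw hwc)) hcm
      rw [h.uc] at this
      linarith
    linarith
  obtain ⟨a, ha, hac, hGa⟩ := this
  obtain ⟨ec, sa⟩ := hS.B_III hν h hB ha hac hGa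
  have hII : ∀ w ∈ F.S, w ≠ c → w ≠ a → (F.N w).TII := by
    intro w hw hwc hwa
    rcases hS.ty hν (F.N w) with h1 | h1
    · exact h1
    · obtain ⟨e1, -⟩ := hS.B_III hν h hB hw hwc h1
      exfalso; apply hwa
      rw [ec] at e1
      have : w = (w - c - c) + c + c := by abel
      rw [this, ← e1]; abel
  have hcH : F.n c ∈ F.Hn := (hS.mem_Hn F).2 ⟨hcm, by rw [h.uc]; norm_num⟩
  have ka := (hS.n_data F h.U ha (h.un a ha hac)).1
  have cac : F.co a (F.n c) = 1 := by
    rw [ec, map_sub, map_sub, F.co_self a ha, F.co_ne a ha c hc hac]; norm_num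
  have Hw : ∀ y ∈ F.Hn, y ≠ F.n c → ∀ w ∈ F.S, w ≠ c → F.co w y ≤ 0 := by
    intro y hy hyc w hw hwc
    obtain ⟨hyV, hyu⟩ := hS.ud_Hn hν h hy
    by_cases hwa : w = a
    · subst hwa
      by_contra! hh
      have h1 := (h.U y (hS.memL hyV) w hw).pos hh
      have h2 := hS.ge2 hν (F.N w) hyV
      have h3 := hS.N_u F hw y
      have h4 := hS.N_u F hw (F.n c)
      rw [hyu, ka] at h3
      rw [h.uc, ka, cac] at h4
      exact hyc (hS.two_unique hν (F.N w) hyV hcm (by linarith) (by linarith))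
    · have := hS.co_le hν h.U hw (h.un w hw hwc) (hII w hw hwc hwa) hyV
      linarith
  have Hc : ∀ y ∈ F.Hn, y ≠ F.n c → -1 ≤ F.co c y := by
    intro y hy hyc
    obtain ⟨hyV, hyu⟩ := hS.ud_Hn hν h hy
    have := hS.ud_coc hν h hyV hyu hyc
    rw [hkc] at this; linarith
  have Hneg : ∀ y ∈ F.Hn, y ≠ F.n c → F.co c y ≤ 0 → ∃ s ∈ F.S, y = -s := by
    intro y hy hyc h0
    obtain ⟨hyV, hyu⟩ := hS.ud_Hn hν h hy
    refine F.form_neg hyu (fun w hw => ?_) (fun w hw => h.U y (hS.memL hyV) w hw)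
    by_cases hwc : w = c
    · rw [hwc]; exact h0
    · exact Hw y hy hyc w hw hwc
  -- no element with positive c-coordinate
  have N2 : ∀ y ∈ F.Hn, y ≠ F.n c → F.co c y ≤ 0 := by
    intro y0 hy0 hyc0
    by_contra! hpos
    obtain ⟨hyV, hyu⟩ := hS.ud_Hn hν h hy0
    have h1 := (h.U y0 (hS.memL hyV) c hc).pos hpos
    have h2 := hS.ge2 hν (F.N c) hyV
    have h3 := hS.N_u F hc y0
    rw [hyu, hkc] at h3
    have hc1 : F.co c y0 = 1 := by linarith
    have e := F.u_erase hc y0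
    rw [hyu, hc1] at e
    obtain ⟨w1, hw1, w2, hw2, hw⟩ := sum_two (F.S.erase c) (fun w => - F.co w y0)
      (fun w hw => by
        obtain ⟨hwc, hw⟩ := Finset.mem_erase.1 hw
        linarith [Hw y0 hy0 hyc0 w hw hwc])
      (fun w hw => (h.U y0 (hS.memL hyV) w (Finset.mem_of_mem_erase hw)).neg)
      (by rw [Finset.sum_neg_distrib]; linarith)
    obtain ⟨w1c, w1S⟩ := Finset.mem_erase.1 hw1
    obtain ⟨w2c, w2S⟩ := Finset.mem_erase.1 hw2
    have hne : w1 ≠ w2 := by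
      rintro rfl
      have := hw w1 hw1
      simp only [if_true] at this
      have := hS.co_ge h.U w1S (h.un w1 w1S w1c) hyV hyu
      linarith
    have fib : ∀ w ∈ F.S, w ≠ c → F.co w y0 < 0 → F.sg w = c := by
      intro w hw hwc hlt
      obtain ⟨r, hr, -, er⟩ := hS.R' hν h.U hw (h.un w hw hwc) hyV hyu hlt
      rw [er, sn w hw hwc, map_sub, map_sub, F.co_eq hc (sS w hw hwc), F.co_ne c hc w hw hwc.symm,
        F.co_eq hc hr] at hc1
      by_contra hh
      rw [if_neg (Ne.symm hh)] at hc1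
      split_ifs at hc1 <;> norm_num at hc1
    have f1 := fib w1 w1S w1c (by have := hw w1 hw1; simp [hne] at this; linarith)
    have f2 := fib w2 w2S w2c (by have := hw w2 hw2; simp [hne.symm] at this; linarith)
    have cardge : 2 ≤ ((F.S.erase c).filter fun s => F.sg s = c).card := by
      rw [← Finset.card_pair hne]
      apply Finset.card_le_card
      intro x hx
      rcases Finset.mem_insert.1 hx with rfl | hx
      · exact Finset.mem_filter.2 ⟨hw1, f1⟩
      · rw [Finset.mem_singleton] at hx; subst hx
        exact Finset.mem_filter.2 ⟨hw2, f2⟩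
    have hsum := hS.ud_sum hν h hc
    rw [if_pos rfl] at hsum
    have cardge' : (2 : ℝ) ≤ (((F.S.erase c).filter fun s => F.sg s = c).card : ℝ) := by
      exact_mod_cast cardge
    have low : ∑ y ∈ F.Hn, ((if F.n c = y then (-2:ℝ) else 0) + (if y0 = y then 1 else 0)
        - (if -c = y then 1 else 0)) ≤ ∑ y ∈ F.Hn, F.co c y := by
      refine Finset.sum_le_sum fun y hy => ?_
      by_cases e1 : F.n c = y
      · rw [if_pos e1, if_neg (by rw [← e1]; exact hyc0), ← e1, hB]
        split_ifs <;> norm_num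
      by_cases e2 : y0 = y
      · rw [if_neg e1, if_pos e2, ← e2, hc1]
        split_ifs <;> norm_num
      rw [if_neg e1, if_neg e2]
      have hyle : F.co c y ≤ 0 := by
        by_contra! hpos
        obtain ⟨hyV', hyu'⟩ := hS.ud_Hn hν h hy
        have h1 := (h.U y (hS.memL hyV') c hc).pos hpos
        have h2 := hS.ge2 hν (F.N c) hyV'
        have h4 := hS.N_u F hc y
        rw [hyu', hkc] at h4
        exact e2 (hS.two_unique hν (F.N c) hyV hyV' (by linarith) (by linarith))
      obtain ⟨s, hs, rfl⟩ := Hneg y hy (Ne.symm e1) hyle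
      rw [map_neg, F.co_eq hc hs]
      by_cases e3 : c = s
      · simp [e3]
      · simp [e3]
    rw [Finset.sum_sub_distrib, Finset.sum_add_distrib, Finset.sum_ite_eq, Finset.sum_ite_eq,
      Finset.sum_ite_eq, if_pos hcH, if_pos hy0] at low
    split_ifs at low <;> linarith
  have Hs : ∀ y ∈ F.Hn.erase (F.n c), ∃ s ∈ F.S, y = -s := by
    intro y hy
    obtain ⟨h1, h2⟩ := Finset.mem_erase.1 hy
    exact Hneg y h2 h1 (N2 y h2 h1)
  have sumz : ∀ z ∈ F.S, (((F.S.erase c).filter fun s => F.sg s = z).card : ℝ)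
      + (if z = c then 1 else 0) + (F.co z (F.n c) - if -z ∈ F.Hn.erase (F.n c) then 1 else 0) = 0 := by
    intro z hz
    have h1 := hS.ud_sum hν h hz
    rw [← Finset.add_sum_erase _ _ hcH, F.co_neg_sum _ Hs hz] at h1
    linarith
  have sa1 := sumz a ha
  rw [if_neg hac, cac] at sa1
  have nna : (0:ℝ) ≤ (((F.S.erase c).filter fun s => F.sg s = a).card : ℝ) := Nat.cast_nonneg _
  have hnaH : -a ∈ F.Hn.erase (F.n c) := by
    by_contra hh
    rw [if_neg hh] at sa1
    linarith
  rw [if_pos hnaH] at sa1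
  have fa : ((F.S.erase c).filter fun s => F.sg s = a).card = 0 := by
    have : (((F.S.erase c).filter fun s => F.sg s = a).card : ℝ) = 0 := by linarith
    exact_mod_cast this
  have hna : -a ∈ V := (hS.ud_Hn hν h (Finset.mem_of_mem_erase hnaH)).1
  have hncV : -c ∉ V := by
    intro hm
    obtain ⟨K, hK⟩ := hS.ex_facet hm
    have e1 : -c + -c = (a - c - c) + -a := by abel
    have e2 : K.u (-c) + K.u (-c) = K.u (a - c - c) + K.u (-a) := by rw [← map_add, e1, map_add]
    rw [ec] at hcm
    have l1 := K.u_le_one hcm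
    have l2 := K.u_le_one hna
    have m0 := mem_of_u hm hK
    have m1 := mem_of_u (F := K) hcm (by linarith)
    have m2 := mem_of_u (F := K) hna (by linarith)
    have e3 : K.co (-c) (-c) + K.co (-c) (-c) = K.co (-c) (a - c - c) + K.co (-c) (-a) := by
      rw [← map_add, e1, map_add]
    rw [K.co_self _ m0, K.co_ne _ m0 _ m1 (by
        intro hh
        apply hac
        have : a = (a - c - c) + c + c := by abel
        rw [this, ← hh]; abel), K.co_ne _ m0 _ m2 (by
        intro hh; exact hac (neg_injective hh.symm))] at e3
    norm_num at e3
  have sc1 := sumz c hc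
  rw [if_pos rfl, hB, if_neg (fun hh => hncV (hS.ud_Hn hν h (Finset.mem_of_mem_erase hh)).1)] at sc1
  have fc : ((F.S.erase c).filter fun s => F.sg s = c).card = 1 := by
    have : (((F.S.erase c).filter fun s => F.sg s = c).card : ℝ) = 1 := by linarith
    exact_mod_cast this
  have fc' : ∀ w ∈ F.S, w ≠ c → w ≠ a → F.sg w ≠ c := by
    intro w hw hwc hwa hh
    obtain ⟨x, hx⟩ := Finset.card_eq_one.1 fc
    have h1 : w ∈ ((F.S.erase c).filter fun s => F.sg s = c) :=
      Finset.mem_filter.2 ⟨Finset.mem_erase.2 ⟨hwc, hw⟩, hh⟩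
    have h2 : a ∈ ((F.S.erase c).filter fun s => F.sg s = c) :=
      Finset.mem_filter.2 ⟨Finset.mem_erase.2 ⟨hac, ha⟩, sa⟩
    rw [hx, Finset.mem_singleton] at h1 h2
    exact hwa (h1.trans h2.symm)
  have fa' : ∀ w ∈ F.S, w ≠ c → F.sg w ≠ a := by
    intro w hw hwc hh
    rw [Finset.card_eq_zero] at fa
    have h1 : w ∈ ((F.S.erase c).filter fun s => F.sg s = a) :=
      Finset.mem_filter.2 ⟨Finset.mem_erase.2 ⟨hwc, hw⟩, hh⟩
    rw [fa] at h1
    simp at h1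
  have inv : ∀ w ∈ F.S, w ≠ c → w ≠ a → F.sg (F.sg w) = w := by
    intro y hy hyc hya
    have hz := sS y hy hyc
    have hzc := fc' y hy hyc hya
    have hza := fa' y hy hyc
    have hzy := sne y hy hyc
    have ey := sn y hy hyc
    have hym := hS.n_memV F hy
    generalize F.sg y = z at *
    have ht := sS z hz hzc
    have htc := fc' z hz hzc hza
    have hta := fa' z hz hzc
    have htz := sne z hz hzc
    have ez := sn z hz hzc
    generalize F.sg z = t at *
    by_contra hty
    obtain ⟨hk, hcn⟩ := hS.n_data F h.U hz (h.un z hz hzc)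
    have hGU := hS.unim_N F h.U hz hcn
    have hGI := hII z hz hzc hza
    have hcG := hS.mem_N F hz h.hc hzc.symm
    have haG := hS.mem_N F hz ha hza.symm
    have htG := hS.mem_N F hz ht htz
    have hyG := hS.mem_N F hz hy hzy.symm
    have hnG := hS.n_memN F hz
    have ey2 : F.n y = t - F.n z - y := by rw [ey, ez]; abel
    have u1 : (F.N z).u (F.n c) = -1 := by
      rw [ec, map_sub, map_sub, u_mem _ hcG, u_mem _ haG]; norm_num
    have c1 : (F.N z).co c (F.n c) = -2 := by
      rw [ec, map_sub, map_sub, co_self _ _ hcG, co_ne _ _ hcG _ haG hac.symm]; norm_num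
    have key : (F.N z).n c = F.n c := by
      by_contra hne
      have k1 := hS.u_le_kco _ hcG hcm (hS.notmem_of_u _ (by rw [u1]; norm_num)) (Ne.symm hne)
      have k2 := hS.k_pos _ hcG
      rw [u1, c1] at k1
      linarith
    have hud : (F.N z).UD c := hS.ud_mk hν hGU hGI hcG (by rw [key, u1]; norm_num)
    have hB' : (F.N z).co c ((F.N z).n c) = -2 := by rw [key, c1]
    rcases hS.ty hν ((F.N z).N t) with hT | hT
    · have h2 := hS.co_le hν hGU htG (hud.un t htG htc) hT hym
      rw [ey2, map_sub, map_sub, map_sub, map_sub, u_mem _ htG, u_mem _ hnG, u_mem _ hyG,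
        co_self _ _ htG, co_ne _ _ htG _ hnG (hS.n_ne F hz ht), co_ne _ _ htG _ hyG hty] at h2
      norm_num at h2
    · obtain ⟨e1, -⟩ := hS.B_III hν hud hB' htG htc hT
      apply hta
      rw [key, ec] at e1
      have : t = (t - c - c) + c + c := by abel
      rw [this, ← e1]; abel
  have memT : ∀ t, t ∈ (F.S.erase c).erase a ↔ t ∈ F.S ∧ t ≠ c ∧ t ≠ a := by
    intro t; simp only [Finset.mem_erase]; tauto
  have ev := evencard F.sg ((F.S.erase c).erase a)
    (fun t ht => by
      obtain ⟨h1, h2, h3⟩ := (memT t).1 ht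
      exact (memT _).2 ⟨sS t h1 h2, fc' t h1 h2 h3, fa' t h1 h2⟩)
    (fun t ht => by
      obtain ⟨h1, h2, h3⟩ := (memT t).1 ht
      exact inv t h1 h2 h3)
    (fun t ht => by
      obtain ⟨h1, h2, h3⟩ := (memT t).1 ht
      exact sne t h1 h2)
  have n1 := Finset.card_erase_add_one hc
  have n2 : ((F.S.erase c).erase a).card + 1 = _ :=
    Finset.card_erase_add_one (Finset.mem_erase.2 ⟨hac, ha⟩)
  rw [F.card] at n1
  obtain ⟨i, hi⟩ := ev
  obtain ⟨j, hj⟩ := hdo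
  omega

theorem case_z (hS : Sys V L d) (hν : (∑ x ∈ V, x) = 0) (hd : 2 ≤ d) (hdo : Odd d) :
    ∃ (F : Fct V L d) (a b c : E) (τ : E → E), Out F a b c (-c) τ := by
  obtain ⟨F, c, h⟩ := hS.exists_UD hν
  rcases hS.ud_kc hν h with h1 | h1
  · obtain ⟨a, b, τ, ho⟩ := hS.A_out hν hd h h1.2
    exact ⟨F, a, b, c, τ, ho⟩
  · exact (hS.B_false hν hdo h h1.2).elim

end z

theorem main (hS : Sys V L d) (hd : 2 ≤ d) (hdo : Odd d) :
    ∃ (F : Fct V L d) (a b c : E) (τ : E → E), Out F a b c (-c) τ ∨ Out F a b c (a - c) τ := by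
  by_cases hν : (∑ x ∈ V, x) = 0
  · obtain ⟨F, a, b, c, τ, h⟩ := hS.case_z hν hd hdo
    exact ⟨F, a, b, c, τ, Or.inl h⟩
  · obtain ⟨F, a, b, c, τ, h⟩ := hS.case_nz hν hdo
    exact ⟨F, a, b, c, τ, Or.inr h⟩

end Sys
end abstractpart8

section polytopepart1

/-- the lattice of integer points -/
def latL (d : ℕ) : AddSubgroup (Fin d → ℝ) where
  carrier := {x | IsLP x}
  zero_mem' := fun i => ⟨0, by simp⟩
  add_mem' := by
    intro a b ha hb i
    obtain ⟨m, hm⟩ := ha i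
    obtain ⟨n, hn⟩ := hb i
    exact ⟨m + n, by simp [hm, hn]⟩
  neg_mem' := by
    intro a ha i
    obtain ⟨m, hm⟩ := ha i
    exact ⟨-m, by simp [hm]⟩

theorem mem_latL {d : ℕ} {x : Fin d → ℝ} : x ∈ latL d ↔ IsLP x := Iff.rfl

/-- data of a simplicial reflexive polytope given by its vertex set -/
structure PD {d : ℕ} (V : Finset (Fin d → ℝ)) : Prop where
  pos : 0 < d
  lat : ∀ v ∈ V, IsLP v
  ext : Set.extremePoints ℝ (convexHull ℝ (V : Set (Fin d → ℝ))) = V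
  int0 : (0 : Fin d → ℝ) ∈ interior (convexHull ℝ (V : Set (Fin d → ℝ)))
  simp : IsSimplicial (convexHull ℝ (V : Set (Fin d → ℝ)))
  dual : IsLatticePolytope (dualPolytope (convexHull ℝ (V : Set (Fin d → ℝ))))

/-- the vector of a linear functional -/
def vecOf {d : ℕ} (f : (Fin d → ℝ) →ₗ[ℝ] ℝ) : Fin d → ℝ := fun i => f (Pi.single i 1)

theorem dotp_vecOf {d : ℕ} (f : (Fin d → ℝ) →ₗ[ℝ] ℝ) (x : Fin d → ℝ) : dotp (vecOf f) x = f x := by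
  have h := f.pi_apply_eq_sum_univ x
  rw [h]
  unfold dotp vecOf
  refine Finset.sum_congr rfl fun i _ => ?_
  rw [smul_eq_mul, mul_comm]
  congr 2
  ext j
  simp [Pi.single_apply, eq_comm]

/-- the linear functional of a vector -/
def dotL {d : ℕ} (u : Fin d → ℝ) : (Fin d → ℝ) →ₗ[ℝ] ℝ where
  toFun := dotp u
  map_add' := by intro x y; simp [dotp, mul_add, Finset.sum_add_distrib]
  map_smul' := by
    intro c x
    simp only [dotp, Pi.smul_apply, smul_eq_mul, RingHom.id_apply, Finset.mul_sum]
    exact Finset.sum_congr rfl fun i _ => by ring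

theorem dotL_apply {d : ℕ} (u x : Fin d → ℝ) : dotL u x = dotp u x := rfl

theorem vecOf_dotL {d : ℕ} (u : Fin d → ℝ) : vecOf (dotL u) = u := by
  ext i
  change dotp u (Pi.single i 1) = u i
  simp [dotp, Pi.single_apply]

theorem vecOf_add {d : ℕ} (f g : (Fin d → ℝ) →ₗ[ℝ] ℝ) (s : ℝ) :
    vecOf (f + s • g) = vecOf f + s • vecOf g := by
  ext i; simp [vecOf]

theorem le_hull {d : ℕ} {V : Finset (Fin d → ℝ)} (f : (Fin d → ℝ) →ₗ[ℝ] ℝ) (r : ℝ)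
    (h : ∀ v ∈ V, f v ≤ r) : ∀ y ∈ convexHull ℝ (V : Set (Fin d → ℝ)), f y ≤ r := by
  intro y hy
  have hc : Convex ℝ {y | f y ≤ r} := convex_halfSpace_le f.isLinear r
  exact convexHull_min (s := (V : Set (Fin d → ℝ))) (fun v hv => h v hv) hc hy

theorem mem_dual_iff {d : ℕ} {V : Finset (Fin d → ℝ)} (f : (Fin d → ℝ) →ₗ[ℝ] ℝ) :
    vecOf f ∈ dualPolytope (convexHull ℝ (V : Set (Fin d → ℝ))) ↔ ∀ v ∈ V, f v ≤ 1 := by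
  constructor
  · intro h v hv
    rw [← dotp_vecOf]
    exact h v (subset_convexHull ℝ _ hv)
  · intro h y hy
    rw [dotp_vecOf]
    exact le_hull f 1 h y hy

theorem int_dotp {d : ℕ} {u x : Fin d → ℝ} (hu : IsLP u) (hx : IsLP x) : IsI (dotp u x) :=
  IsI.sum _ _ fun i _ => IsI.mul (hu i) (hx i)

theorem lin_ext {d : ℕ} {T : Set (Fin d → ℝ)} (h : Submodule.span ℝ T = ⊤)
    {f g : (Fin d → ℝ) →ₗ[ℝ] ℝ} (hfg : ∀ x ∈ T, f x = g x) : f = g :=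
  LinearMap.ext_on h hfg

namespace PD
variable {d : ℕ} {V : Finset (Fin d → ℝ)}

theorem tight_extreme (_hD : PD V) (f : (Fin d → ℝ) →ₗ[ℝ] ℝ) (hf : ∀ v ∈ V, f v ≤ 1)
    (hsp : Submodule.span ℝ {v | v ∈ V ∧ f v = 1} = ⊤) :
    vecOf f ∈ Set.extremePoints ℝ (dualPolytope (convexHull ℝ (V : Set (Fin d → ℝ)))) := by
  refine ⟨(mem_dual_iff f).2 hf, ?_⟩
  intro y hy z hz hyz
  obtain ⟨a, b, ha, hb, hab, he⟩ := hyz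
  have hy' : ∀ v ∈ V, dotL y v ≤ 1 := (mem_dual_iff _).1 (by rwa [vecOf_dotL])
  have hz' : ∀ v ∈ V, dotL z v ≤ 1 := (mem_dual_iff _).1 (by rwa [vecOf_dotL])
  have e1 : dotL y = f := by
    refine lin_ext hsp ?_
    rintro v ⟨hv, hv1⟩
    have h1 := hy' v hv
    have h2 := hz' v hv
    have h3 : f v = a * dotL y v + b * dotL z v := by
      rw [← dotp_vecOf, ← he, dotL_apply, dotL_apply]
      simp [dotp, add_mul, Finset.sum_add_distrib, Finset.mul_sum, mul_assoc]
    have : b * dotL z v ≤ b * 1 := mul_le_mul_of_nonneg_left h2 hb.le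
    have h4 : a * 1 ≤ a * dotL y v := by linarith
    have := le_of_mul_le_mul_left h4 ha
    linarith
  rw [← e1, vecOf_dotL]

theorem extreme_int (hD : PD V) {u : Fin d → ℝ}
    (hu : u ∈ Set.extremePoints ℝ (dualPolytope (convexHull ℝ (V : Set (Fin d → ℝ))))) : IsLP u := by
  obtain ⟨W, hW, he⟩ := hD.dual
  rw [he] at hu
  exact hW _ (extremePoints_convexHull_subset hu)

theorem tight_card (hD : PD V) (f : (Fin d → ℝ) →ₗ[ℝ] ℝ) (hf : ∀ v ∈ V, f v ≤ 1)
    (hsp : Submodule.span ℝ {v | v ∈ V ∧ f v = 1} = ⊤) :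
    (V.filter fun v => f v = 1).card = d := by
  set P := convexHull ℝ (V : Set (Fin d → ℝ)) with hPd
  set F : Set (Fin d → ℝ) := {y ∈ P | dotp (vecOf f) y = 1} with hF
  have hle : ∀ y ∈ P, f y ≤ 1 := le_hull f 1 hf
  have hTF : {v | v ∈ V ∧ f v = 1} ⊆ F := by
    rintro v ⟨hv, h1⟩
    exact ⟨subset_convexHull ℝ _ hv, by rw [dotp_vecOf]; exact h1⟩
  have : Nonempty (Fin d) := ⟨⟨0, hD.pos⟩⟩
  have hne : {v | v ∈ V ∧ f v = 1}.Nonempty := by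
    by_contra h
    rw [Set.not_nonempty_iff_eq_empty] at h
    rw [h, Submodule.span_empty] at hsp
    exact bot_ne_top hsp
  obtain ⟨t0, ht0⟩ := hne
  have hext : Set.extremePoints ℝ F = (V.filter fun v => f v = 1 : Finset (Fin d → ℝ)) := by
    have hfe : IsExtreme ℝ P F := by
      refine ⟨fun y hy => hy.1, ?_⟩
      intro y hy z hz x hx hxyz
      obtain ⟨a, b, ha, hb, hab, he⟩ := hxyz
      have h1 := hle y hy
      have h2 := hle z hz
      have h3 : f x = 1 := by rw [← dotp_vecOf]; exact hx.2
      rw [← he, map_add, map_smul, map_smul, smul_eq_mul, smul_eq_mul] at h3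
      refine ⟨hy, ?_⟩
      rw [dotp_vecOf]
      have : b * f z ≤ b * 1 := mul_le_mul_of_nonneg_left h2 hb.le
      have h4 : a * 1 ≤ a * f y := by linarith
      have := le_of_mul_le_mul_left h4 ha
      linarith
    rw [hfe.extremePoints_eq, hD.ext]
    ext x
    simp only [Set.mem_inter_iff, Finset.mem_coe, Finset.mem_filter]
    constructor
    · rintro ⟨h1, h2⟩
      exact ⟨h2, by rw [← dotp_vecOf]; exact h1.2⟩
    · rintro ⟨h1, h2⟩
      exact ⟨hTF ⟨h1, h2⟩, h1⟩
  have hfac : IsFacet P F := by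
    refine ⟨vecOf f, ⟨t0, hTF ht0⟩, ?_, rfl, ?_⟩
    · intro y hy; rw [dotp_vecOf]; exact hle y hy
    · have hk : vectorSpan ℝ F ≤ LinearMap.ker f := by
        rw [vectorSpan_def, Submodule.span_le]
        rintro _ ⟨x, hx, y, hy, rfl⟩
        have h1 : f x = 1 := by rw [← dotp_vecOf]; exact hx.2
        have h2 : f y = 1 := by rw [← dotp_vecOf]; exact hy.2
        simp [h1, h2]
      have hkr : Module.finrank ℝ (LinearMap.ker f) + 1 = d := by
        have h1 := LinearMap.finrank_range_add_finrank_ker f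
        have h2 : LinearMap.range f = ⊤ := by
          rw [LinearMap.range_eq_top]
          intro r
          exact ⟨r • t0, by simp [ht0.2]⟩
        rw [h2] at h1
        simp at h1
        omega
      have hup := Submodule.finrank_mono hk
      have hs : (⊤ : Submodule ℝ (Fin d → ℝ)) ≤ vectorSpan ℝ F ⊔ Submodule.span ℝ {t0} := by
        rw [← hsp, Submodule.span_le]
        intro v hv
        have : v = (v - t0) + t0 := by abel
        rw [this]
        refine Submodule.add_mem_sup ?_ (Submodule.mem_span_singleton_self t0)
        exact vsub_mem_vectorSpan ℝ (hTF hv) (hTF ht0)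
      have h3 := Submodule.finrank_mono hs
      have h4 := Submodule.finrank_add_le_finrank_add_finrank (vectorSpan ℝ F) (Submodule.span ℝ {t0})
      have h5 : Module.finrank ℝ (Submodule.span ℝ {t0}) ≤ 1 := by
        simpa using finrank_span_le_card (R := ℝ) ({t0} : Set (Fin d → ℝ))
      simp at h3
      omega
  have := hD.simp F hfac
  rw [hext, Set.ncard_coe_finset] at this
  exact this

theorem mkF (hD : PD V) (f : (Fin d → ℝ) →ₗ[ℝ] ℝ) (hf : ∀ v ∈ V, f v ≤ 1)
    (hsp : Submodule.span ℝ {v | v ∈ V ∧ f v = 1} = ⊤) :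
    ∃ F : Fct V (latL d) d, (F.S = V.filter fun v => f v = 1) ∧ F.u = f := by
  have hc := hD.tight_card f hf hsp
  set T := V.filter fun v => f v = 1 with hT
  have hTs : Set.range (fun t : T => (t : Fin d → ℝ)) = {v | v ∈ V ∧ f v = 1} := by
    ext v; simp [hT]
  have hli : LinearIndependent ℝ (fun t : T => (t : Fin d → ℝ)) := by
    apply linearIndependent_of_top_le_span_of_card_eq_finrank
    · rw [hTs, hsp]
    · simp [hc]
  let b := Module.Basis.mk hli (by rw [hTs, hsp])
  have hb : ∀ t : T, b t = (t : Fin d → ℝ) := fun t => by simp [b]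
  let co : (Fin d → ℝ) → (Fin d → ℝ) →ₗ[ℝ] ℝ := fun v => if h : v ∈ T then b.coord ⟨v, h⟩ else 0
  have hco : ∀ t : T, co t = b.coord t := fun t => by simp [co]
  have hst : ∀ s t : T, co s t = if s = t then 1 else 0 := by
    intro s t
    rw [hco, ← hb t, Module.Basis.coord_apply, Module.Basis.repr_self, Finsupp.single_apply]
    simp only [eq_comm]
  have hrep : ∀ x, ∑ v ∈ T, co v x • v = x := by
    intro x
    rw [← Finset.sum_coe_sort]
    conv_rhs => rw [← b.sum_repr x]
    refine Finset.sum_congr rfl fun t _ => ?_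
    rw [hco, hb]; rfl
  have hu : ∀ x, ∑ v ∈ T, co v x = f x := by
    intro x
    conv_rhs => rw [← hrep x]
    rw [map_sum]
    refine Finset.sum_congr rfl fun v hv => ?_
    rw [map_smul, (Finset.mem_filter.1 hv).2]; simp
  have hui := hD.extreme_int (hD.tight_extreme f hf hsp)
  refine ⟨⟨T, Finset.filter_subset _ _, hc, co, ?_, ?_, hrep, ?_, ?_⟩, rfl, ?_⟩
  · intro v hv
    have := hst ⟨v, hv⟩ ⟨v, hv⟩
    simpa using this
  · intro v hv w hw hvw
    have := hst ⟨v, hv⟩ ⟨w, hw⟩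
    simpa [hvw] using this
  · intro x hx hxT
    rw [hu]
    refine lt_of_le_of_ne (hf x hx) fun h => hxT ?_
    exact Finset.mem_filter.2 ⟨hx, h⟩
  · intro x hx
    rw [hu, ← dotp_vecOf]
    exact int_dotp hui hx
  · refine LinearMap.ext fun x => ?_
    rw [Fct.u_apply]
    exact hu _
end PD
end polytopepart1

section polytopepart2

theorem small_move {d : ℕ} {V : Finset (Fin d → ℝ)} (f g : (Fin d → ℝ) →ₗ[ℝ] ℝ)
    (hf : ∀ v ∈ V, f v ≤ 1) (hg : ∀ v ∈ V, f v = 1 → g v ≤ 0) :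
    ∃ s : ℝ, 0 < s ∧ ∀ v ∈ V, f v + s * g v ≤ 1 := by
  have key : ∀ᶠ s in nhdsWithin (0 : ℝ) (Set.Ioi 0), ∀ v ∈ V, f v + s * g v ≤ 1 := by
    rw [Filter.eventually_all_finset]
    intro v hv
    by_cases h1 : f v = 1
    · filter_upwards [self_mem_nhdsWithin] with s hs
      have := mul_nonpos_of_nonneg_of_nonpos (le_of_lt hs) (hg v hv h1)
      linarith
    · have h2 : f v < 1 := lt_of_le_of_ne (hf v hv) h1
      have hc : Filter.Tendsto (fun s : ℝ => f v + s * g v) (nhds 0) (nhds (f v + 0 * g v)) :=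
        Continuous.tendsto (by fun_prop) 0
      have hc' := hc.mono_left (nhdsWithin_le_nhds (s := Set.Ioi (0 : ℝ)))
      have h3 : f v + 0 * g v < 1 := by simpa using h2
      filter_upwards [hc'.eventually (Iio_mem_nhds h3)] with s hs
      exact le_of_lt hs
  obtain ⟨s, h1, h2⟩ := (key.and self_mem_nhdsWithin).exists
  exact ⟨s, h2, h1⟩

namespace PD
variable {d : ℕ} {V : Finset (Fin d → ℝ)}

theorem extreme_span (_hD : PD V) (f : (Fin d → ℝ) →ₗ[ℝ] ℝ)
    (hu : vecOf f ∈ Set.extremePoints ℝ (dualPolytope (convexHull ℝ (V : Set (Fin d → ℝ))))) :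
    Submodule.span ℝ {v | v ∈ V ∧ f v = 1} = ⊤ := by
  by_contra h
  obtain ⟨g, hg0, hg⟩ := Submodule.exists_le_ker_of_lt_top _ (lt_top_iff_ne_top.2 h)
  have hgT : ∀ v ∈ V, f v = 1 → g v = 0 := fun v hv h1 =>
    hg (Submodule.subset_span ⟨hv, h1⟩)
  have hf := (mem_dual_iff f).1 hu.1
  obtain ⟨s, hs, h1⟩ := small_move f g hf fun v hv h => (hgT v hv h).le
  obtain ⟨t, ht, h2⟩ := small_move f (-g) hf fun v hv h => by simp [hgT v hv h]
  have m1 := (mem_dual_iff (f + s • g)).2 h1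
  have m2 := (mem_dual_iff (f + t • (-g))).2 h2
  have hx := hu.2 m1 m2 ⟨t / (s + t), s / (s + t), by positivity, by positivity, by field_simp; ring, by
    have e1 : vecOf (-g) = - vecOf g := by ext i; simp [vecOf]
    rw [vecOf_add, vecOf_add, e1]
    ext i
    simp only [Pi.add_apply, Pi.smul_apply, Pi.neg_apply, smul_eq_mul]
    field_simp
    ring⟩
  apply hg0
  refine LinearMap.ext fun x => ?_
  rw [vecOf_add] at hx
  have hz : vecOf g = 0 := by
    have : s • vecOf g = 0 := by simpa using hx
    exact (smul_eq_zero.1 this).resolve_left hs.ne'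
  rw [← dotp_vecOf, hz]
  simp [dotp]

theorem cone (hD : PD V) (x : Fin d → ℝ) :
    ∃ F : Fct V (latL d) d, ∀ v ∈ F.S, 0 ≤ F.co v x := by
  obtain ⟨W, hW, he⟩ := hD.dual
  set D := dualPolytope (convexHull ℝ (V : Set (Fin d → ℝ))) with hDd
  have hcomp : IsCompact D := by rw [he]; exact W.finite_toSet.isCompact_convexHull ℝ
  have hconv : Convex ℝ D := by rw [he]; exact convex_convexHull ℝ _
  have h0 : (0 : Fin d → ℝ) ∈ D := by
    intro y _
    simp [dotp]
  have hext : D = convexHull ℝ (Set.extremePoints ℝ D) := by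
    have h1 := closure_convexHull_extremePoints hcomp hconv
    have h2 : (Set.extremePoints ℝ D).Finite := by
      rw [he]
      exact W.finite_toSet.subset extremePoints_convexHull_subset
    rw [(h2.isClosed_convexHull ℝ).closure_eq] at h1
    exact h1.symm
  have hfin : (Set.extremePoints ℝ D).Finite := by
    rw [he]
    exact W.finite_toSet.subset extremePoints_convexHull_subset
  have hne : (Set.extremePoints ℝ D).Nonempty := by
    rw [Set.nonempty_iff_ne_empty]
    intro h
    rw [h, convexHull_empty] at hext
    rw [hext] at h0
    exact h0
  obtain ⟨u, hu, hmax⟩ := Set.exists_max_image _ (fun u => dotL x u) hfin hne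
  have hmaxD : ∀ y ∈ D, dotL x y ≤ dotL x u := by
    intro y hy
    rw [hext] at hy
    exact convexHull_min (t := {y | dotL x y ≤ dotL x u}) hmax
      (convex_halfSpace_le (dotL x).isLinear _) hy
  have hu' : vecOf (dotL u) ∈ Set.extremePoints ℝ D := by rwa [vecOf_dotL]
  obtain ⟨F, hFS, hFu⟩ := hD.mkF (dotL u) ((mem_dual_iff _).1 hu'.1) (hD.extreme_span _ hu')
  refine ⟨F, fun v hv => ?_⟩
  obtain ⟨s, hs, h1⟩ := small_move (V := V) (dotL u) (-F.co v) ((mem_dual_iff _).1 hu'.1) (by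
    intro w hw h
    have hwS : w ∈ F.S := by rw [hFS]; exact Finset.mem_filter.2 ⟨hw, h⟩
    by_cases hvw : v = w
    · subst hvw; simp [F.co_self v hv]
    · simp [F.co_ne v hv w hwS hvw])
  have m1 := (mem_dual_iff (dotL u + s • (-F.co v))).2 h1
  have h2 := hmaxD _ m1
  have hsym : ∀ a b : Fin d → ℝ, dotp a b = dotp b a := fun a b =>
    Finset.sum_congr rfl fun i _ => mul_comm _ _
  rw [dotL_apply, dotL_apply, hsym, dotp_vecOf, hsym x u] at h2
  have h3 : dotp u x + s * (-(F.co v x)) ≤ dotp u x := h2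
  by_contra h
  push Not at h
  have : 0 < s * (-(F.co v x)) := mul_pos hs (by linarith)
  linarith

theorem nb (hD : PD V) (F : Fct V (latL d) d) (v : Fin d → ℝ) (hv : v ∈ F.S) :
    ∃ p : Fct V (latL d) d × (Fin d → ℝ), F.IsNb v p.1 p.2 := by
  have hex : ∃ x ∈ V, F.co v x < 0 := by
    by_contra h
    push Not at h
    have hall : ∀ y ∈ convexHull ℝ (V : Set (Fin d → ℝ)), (-F.co v) y ≤ 0 :=
      le_hull _ 0 fun w hw => by have := h w hw; simpa using this
    have hc : Filter.Tendsto (fun s : ℝ => s • v) (nhds 0) (nhds ((0 : ℝ) • v)) :=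
      Continuous.tendsto (by fun_prop) 0
    rw [zero_smul] at hc
    have hc' := hc.mono_left (nhdsWithin_le_nhds (s := Set.Iio (0 : ℝ)))
    obtain ⟨s, h1, h2⟩ := ((hc'.eventually (mem_interior_iff_mem_nhds.1 hD.int0)).and
      self_mem_nhdsWithin).exists
    have h3 := hall _ h1
    have h4 : s < 0 := h2
    rw [map_smul, LinearMap.neg_apply, F.co_self v hv] at h3
    simp at h3
    linarith
  have hne : (V.filter fun x => F.co v x < 0).Nonempty := by
    obtain ⟨x, h1, h2⟩ := hex
    exact ⟨x, Finset.mem_filter.2 ⟨h1, h2⟩⟩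
  obtain ⟨x, hx, hmin⟩ := Finset.exists_min_image _ (fun x => (1 - F.u x) / (-F.co v x)) hne
  obtain ⟨hxV, hx0⟩ := Finset.mem_filter.1 hx
  have hxS : x ∉ F.S := by
    intro h
    by_cases hvx : v = x
    · subst hvx; rw [F.co_self v hv] at hx0; linarith
    · rw [F.co_ne v hv x h hvx] at hx0; linarith
  set t := (1 - F.u x) / (-F.co v x) with ht
  have ht0 : 0 < t := div_pos (by have := Fct.u_lt hxV hxS; linarith) (by linarith)
  have hval : ∀ y, (F.u - t • F.co v) y = F.u y - t * F.co v y := fun y => by simp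
  have htx : (F.u - t • F.co v) x = 1 := by
    rw [hval, ht]
    have := hx0.ne
    field_simp
    ring
  have hle : ∀ w ∈ V, (F.u - t • F.co v) w ≤ 1 := by
    intro w hw
    rw [hval]
    have h1 := F.u_le_one hw
    rcases lt_or_ge (F.co v w) 0 with h | h
    · have h2 := hmin w (Finset.mem_filter.2 ⟨hw, h⟩)
      rw [le_div_iff₀ (by linarith)] at h2
      linarith
    · have := mul_nonneg ht0.le h
      linarith
  have htS : ∀ w ∈ F.S, w ≠ v → (F.u - t • F.co v) w = 1 := by
    intro w hw hwv
    rw [hval, F.u_mem hw, F.co_ne v hv w hw hwv.symm]; simp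
  have hsp : Submodule.span ℝ {w | w ∈ V ∧ (F.u - t • F.co v) w = 1} = ⊤ := by
    set M := Submodule.span ℝ {w | w ∈ V ∧ (F.u - t • F.co v) w = 1} with hM
    have hxM : x ∈ M := Submodule.subset_span ⟨hxV, htx⟩
    have hwM : ∀ w ∈ F.S, w ≠ v → w ∈ M := fun w hw hwv =>
      Submodule.subset_span ⟨F.sub hw, htS w hw hwv⟩
    have hvM : v ∈ M := by
      have h1 := F.repr x
      rw [← Finset.add_sum_erase _ _ hv] at h1
      have h2 : F.co v x • v ∈ M := by
        rw [eq_sub_of_add_eq h1]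
        refine M.sub_mem hxM (M.sum_mem fun w hw => M.smul_mem _ ?_)
        exact hwM w (Finset.mem_of_mem_erase hw) (Finset.ne_of_mem_erase hw)
      exact (M.smul_mem_iff hx0.ne).1 h2
    rw [eq_top_iff]
    intro y _
    rw [← F.repr y]
    refine M.sum_mem fun w hw => M.smul_mem _ ?_
    by_cases h : w = v
    · rw [h]; exact hvM
    · exact hwM w hw h
  obtain ⟨F', hS', -⟩ := hD.mkF _ hle hsp
  refine ⟨(F', x), hxS, ?_⟩
  symm
  apply Finset.eq_of_subset_of_card_le
  · intro w hw
    rw [hS', Finset.mem_filter]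
    rcases Finset.mem_insert.1 hw with rfl | hw
    · exact ⟨hxV, htx⟩
    · exact ⟨F.sub (Finset.mem_of_mem_erase hw),
        htS w (Finset.mem_of_mem_erase hw) (Finset.ne_of_mem_erase hw)⟩
  · rw [F'.card, Finset.card_insert_of_notMem fun h => hxS (Finset.mem_of_mem_erase h),
      Finset.card_erase_add_one hv, F.card]

theorem vmin (hD : PD V) : ∃ F : Fct V (latL d) d, ∀ v ∈ F.S, ∀ F' v', F.IsNb v F' v' →
    1 ≤ |F.co v v'| := by
  let G : Set (Fin d → V) := {g | ∃ F : Fct V (latL d) d,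
    F.S = Finset.univ.image fun i => (g i : Fin d → ℝ)}
  have hne : G.Nonempty := by
    obtain ⟨F, -⟩ := hD.cone 0
    let e := F.S.equivFinOfCardEq F.card
    refine ⟨fun i => ⟨(e.symm i : Fin d → ℝ), F.sub (e.symm i).2⟩, F, ?_⟩
    ext x
    simp only [Finset.mem_image, Finset.mem_univ, true_and]
    constructor
    · intro hx; exact ⟨e ⟨x, hx⟩, by simp⟩
    · rintro ⟨i, rfl⟩; exact (e.symm i).2
  obtain ⟨g, hg, hmin⟩ := Set.exists_min_image G
    (fun g => |Matrix.det (Matrix.of fun i => (g i : Fin d → ℝ))|) (Set.toFinite _) hne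
  obtain ⟨F, hF⟩ := hg
  have hinj : Function.Injective fun i => (g i : Fin d → ℝ) := by
    have h1 : (Finset.univ.image fun i => (g i : Fin d → ℝ)).card = (Finset.univ : Finset (Fin d)).card := by
      rw [← hF, F.card]; simp
    have h2 := Finset.card_image_iff.1 h1
    intro i j hij
    exact h2 (by simp) (by simp) hij
  have hmemS : ∀ i, (g i : Fin d → ℝ) ∈ F.S := fun i => by
    rw [hF]; exact Finset.mem_image_of_mem _ (Finset.mem_univ i)
  have hrep : ∀ x, ∑ i, F.co (g i) x • (g i : Fin d → ℝ) = x := by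
    intro x
    conv_rhs => rw [← F.repr x, hF]
    rw [Finset.sum_image fun i _ j _ h => hinj h]
  set M : Matrix (Fin d) (Fin d) ℝ := Matrix.of fun i => (g i : Fin d → ℝ) with hM
  have hdet : M.det ≠ 0 := by
    intro h0
    obtain ⟨w, hw0, hw⟩ := Matrix.exists_vecMul_eq_zero_iff.2 h0
    apply hw0
    ext j
    have h1 : ∑ i, w i • (g i : Fin d → ℝ) = 0 := by
      rw [← hw, Matrix.vecMul_eq_sum]
      rfl
    have h2 := congrArg (F.co (g j)) h1
    rw [map_sum, map_zero, Finset.sum_eq_single j] at h2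
    · rw [map_smul, F.co_self _ (hmemS j)] at h2
      simpa using h2
    · intro i _ hij
      rw [map_smul, F.co_ne _ (hmemS j) _ (hmemS i) fun h => hij (hinj h).symm]
      simp
    · simp
  refine ⟨F, fun v hv F' v' hnb => ?_⟩
  rw [hF] at hv
  obtain ⟨i, -, rfl⟩ := Finset.mem_image.1 hv
  have hv'V : v' ∈ V := F'.sub (by rw [hnb.2]; simp)
  have hg' : Function.update g i ⟨v', hv'V⟩ ∈ G := by
    refine ⟨F', ?_⟩
    rw [hnb.2, hF]
    ext x
    simp only [Finset.mem_insert, Finset.mem_erase, Finset.mem_image, Finset.mem_univ, true_and]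
    constructor
    · rintro (rfl | ⟨h1, j, rfl⟩)
      · exact ⟨i, by simp⟩
      · refine ⟨j, ?_⟩
        rw [Function.update_of_ne]
        rintro rfl
        exact h1 rfl
    · rintro ⟨j, rfl⟩
      by_cases h : j = i
      · subst h; left; simp
      · right
        rw [Function.update_of_ne h]
        exact ⟨fun h' => h (hinj h'), j, rfl⟩
  have h1 := hmin _ hg'
  have h2 : (Matrix.of fun j => (Function.update g i ⟨v', hv'V⟩ j : Fin d → ℝ)) =
      M.updateRow i (∑ k, F.co (g k) v' • M k) := by
    have e : ∑ k, F.co (g k) v' • M k = v' := hrep v'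
    rw [e]
    ext j k
    by_cases h : j = i
    · subst h; simp
    · simp [h, hM]
  rw [h2, Matrix.det_updateRow_sum, smul_eq_mul, abs_mul] at h1
  exact le_of_mul_le_mul_right (by simpa using h1) (abs_pos.2 hdet)

theorem sys (hD : PD V) (hc : V.card + 1 = 3 * d) : Sys V (latL d) d where
  VL := hD.lat
  zero := by
    intro h0
    have h1 : (0 : Fin d → ℝ) ∈ Set.extremePoints ℝ (convexHull ℝ (V : Set (Fin d → ℝ))) := by
      rw [hD.ext]; exact h0
    obtain ⟨F, -⟩ := hD.cone 0
    have hS : F.S.Nonempty := Finset.card_pos.1 (by rw [F.card]; exact hD.pos)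
    obtain ⟨v, hv⟩ := hS
    have hc : Filter.Tendsto (fun s : ℝ => s • v) (nhds 0) (nhds ((0 : ℝ) • v)) :=
      Continuous.tendsto (by fun_prop) 0
    have hc2 : Filter.Tendsto (fun s : ℝ => -(s • v)) (nhds 0) (nhds (-((0 : ℝ) • v))) :=
      Continuous.tendsto (by fun_prop) 0
    rw [zero_smul] at hc hc2
    rw [neg_zero] at hc2
    have hn := mem_interior_iff_mem_nhds.1 hD.int0
    have hc' := (hc.eventually hn).and (hc2.eventually hn)
    obtain ⟨s, ⟨h3, h4⟩, h2⟩ := ((hc'.filter_mono (nhdsWithin_le_nhds (s := Set.Ioi (0 : ℝ)))).and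
      self_mem_nhdsWithin).exists
    have h5 := h1.2 h3 h4 ⟨1 / 2, 1 / 2, by norm_num, by norm_num, by norm_num, by simp⟩
    have h6 : s ≠ 0 := ne_of_gt h2
    have h7 : v = 0 := (smul_eq_zero.1 h5).resolve_left h6
    have h8 := F.co_self v hv
    rw [h7, map_zero] at h8
    exact zero_ne_one h8
  card := hc
  nb := hD.nb
  cone := hD.cone
  vmin := hD.vmin

end PD

theorem PD.of_reflexive {d : ℕ} (hd : 0 < d) {P : Set (Fin d → ℝ)} (hP : IsReflexive P)
    (hs : IsSimplicial P) : ∃ V : Finset (Fin d → ℝ), PD V ∧ P = convexHull ℝ (V : Set (Fin d → ℝ)) ∧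
      Set.extremePoints ℝ P = V := by
  obtain ⟨⟨V0, hV0, hPV⟩, hInt, hdual⟩ := hP
  have hsub : Set.extremePoints ℝ P ⊆ V0 := by rw [hPV]; exact extremePoints_convexHull_subset
  have hfin : (Set.extremePoints ℝ P).Finite := V0.finite_toSet.subset hsub
  have hcomp : IsCompact P := by rw [hPV]; exact V0.finite_toSet.isCompact_convexHull ℝ
  have hconv : Convex ℝ P := by rw [hPV]; exact convex_convexHull ℝ _
  have h1 := closure_convexHull_extremePoints hcomp hconv
  rw [(hfin.isClosed_convexHull ℝ).closure_eq] at h1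
  have hV : (hfin.toFinset : Set (Fin d → ℝ)) = Set.extremePoints ℝ P := hfin.coe_toFinset
  refine ⟨hfin.toFinset, ⟨hd, ?_, ?_, ?_, ?_, ?_⟩, ?_, ?_⟩
  · intro v hv
    exact hV0 v (hsub (hfin.mem_toFinset.1 hv))
  all_goals simp only [hV, h1]
  · exact hInt
  · exact hs
  · exact hdual

end polytopepart2

section polytopepart3

/-- the target basis -/
def tgt {E : Type*} [AddCommGroup E] (a b c : E) (τ : E → E) (f : ℕ → E) (i : ℕ) : E :=
  if i = 0 then a else if i = 1 then b - a else if i = 2 then c else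
    if (i - 3) % 2 = 0 then f ((i - 3) / 2) else τ (f ((i - 3) / 2)) - f ((i - 3) / 2)

/-- the linear map sending the standard basis to the target basis -/
def tgtL {d : ℕ} (B : ℕ → Fin d → ℝ) : (Fin d → ℝ) →ₗ[ℝ] (Fin d → ℝ) :=
  Fintype.linearCombination ℝ fun i : Fin d => B i

theorem tgtL_apply {d : ℕ} (B : ℕ → Fin d → ℝ) (x : Fin d → ℝ) : tgtL B x = ∑ i, x i • B i := by
  simp [tgtL, Fintype.linearCombination_apply]

theorem tgtL_embed2 {d o : ℕ} (ho : o + 1 < d) (B : ℕ → Fin d → ℝ) (v : Fin 2 → ℤ) :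
    tgtL B (embed2 d o v) = (v 0 : ℝ) • B o + (v 1 : ℝ) • B (o + 1) := by
  rw [tgtL_apply]
  let g : ℕ → Fin d → ℝ :=
    fun n => (if n = o then (v 0 : ℝ) • B n else 0) + (if n = o + 1 then (v 1 : ℝ) • B n else 0)
  have h1 : ∀ i : Fin d, embed2 d o v i • B i = g i := by
    intro i
    simp only [embed2, g]
    split_ifs <;> first | omega | simp
  rw [Finset.sum_congr rfl fun i _ => h1 i, Fin.sum_univ_eq_sum_range g d, Finset.sum_add_distrib,
    Finset.sum_ite_eq', Finset.sum_ite_eq', if_pos, if_pos] <;> simp <;> omega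

theorem tgtL_embed3 {d : ℕ} (hd : 3 ≤ d) (B : ℕ → Fin d → ℝ) (v : Fin 3 → ℤ) :
    tgtL B (embed3 d v) = (v 0 : ℝ) • B 0 + (v 1 : ℝ) • B 1 + (v 2 : ℝ) • B 2 := by
  rw [tgtL_apply]
  let g : ℕ → Fin d → ℝ :=
    fun n => (if n = 0 then (v 0 : ℝ) • B n else 0) + (if n = 1 then (v 1 : ℝ) • B n else 0)
        + (if n = 2 then (v 2 : ℝ) • B n else 0)
  have h1 : ∀ i : Fin d, embed3 d v i • B i = g i := by
    intro i
    simp only [embed3, g]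
    split_ifs <;> first | omega | simp
  rw [Finset.sum_congr rfl fun i _ => h1 i, Fin.sum_univ_eq_sum_range g d, Finset.sum_add_distrib,
    Finset.sum_add_distrib, Finset.sum_ite_eq', Finset.sum_ite_eq', Finset.sum_ite_eq',
    if_pos, if_pos, if_pos] <;> simp <;> omega

theorem embed2_IsLP {d o : ℕ} (v : Fin 2 → ℤ) : IsLP (embed2 d o v) := by
  intro i
  unfold embed2
  split_ifs
  exacts [⟨_, rfl⟩, ⟨_, rfl⟩, ⟨0, by simp⟩]

theorem embed3_IsLP {d : ℕ} (v : Fin 3 → ℤ) : IsLP (embed3 d v) := by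
  intro i
  unfold embed3
  split_ifs
  exacts [⟨_, rfl⟩, ⟨_, rfl⟩, ⟨_, rfl⟩, ⟨0, by simp⟩]

theorem smul_latL {d : ℕ} {r : ℝ} (hr : IsI r) {x : Fin d → ℝ} (hx : x ∈ latL d) :
    r • x ∈ latL d := fun i => IsI.mul hr (hx i)

/-- from the combinatorial output to the unimodular transformation -/
theorem final {d : ℕ} (hd : 3 ≤ d) {V : Finset (Fin d → ℝ)} (hS : Sys V (latL d) d)
    {F : Fct V (latL d) d} {a b c c' : Fin d → ℝ} {τ : (Fin d → ℝ) → Fin d → ℝ}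
    (h : Out F a b c c' τ) (Q : Set (Fin 3 → ℤ))
    (hQ : ∀ x, (∃ v ∈ Q, (v 0 : ℝ) • a + (v 1 : ℝ) • (b - a) + (v 2 : ℝ) • c = x) ↔
      (x = a ∨ x = -a ∨ x = b - a ∨ x = a - b ∨ x = b ∨ x = -b ∨ x = c ∨ x = c')) :
    ∃ φ : (Fin d → ℝ) ≃ₗ[ℝ] (Fin d → ℝ), Unimodular φ ∧
      φ '' (convexHull ℝ (V : Set (Fin d → ℝ))) = splitModel3 d Q := by
  set T := ((F.S.erase a).erase b).erase c with hT
  obtain ⟨m, f, hm, hf, hall⟩ := pair_enum τ T h.maps h.invol h.fpf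
  have hTc : T.card + 3 = d := by
    have n1 := Finset.card_erase_add_one h.ha
    have n2 := Finset.card_erase_add_one (Finset.mem_erase.2 ⟨h.hab.symm, h.hb⟩)
    have n3 := Finset.card_erase_add_one (Finset.mem_erase.2 ⟨h.hbc.symm, Finset.mem_erase.2 ⟨h.hac.symm, h.hc⟩⟩)
    rw [F.card] at n1
    rw [hT]
    omega
  have hdm : (d - 3) / 2 = m := by omega
  set B := tgt a b c τ f with hB
  have B3 : ∀ v : Fin 3 → ℤ, tgtL B (embed3 d v) =
      (v 0 : ℝ) • a + (v 1 : ℝ) • (b - a) + (v 2 : ℝ) • c := by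
    intro v
    rw [tgtL_embed3 hd]
    simp [hB, tgt]
  have B2 : ∀ j < m, ∀ v : Fin 2 → ℤ, tgtL B (embed2 d (2 * j + 3) v) =
      (v 0 : ℝ) • f j + (v 1 : ℝ) • (τ (f j) - f j) := by
    intro j hj v
    rw [tgtL_embed2 (by omega)]
    have e1 : B (2 * j + 3) = f j := by
      rw [hB]; unfold tgt
      rw [if_neg (by omega), if_neg (by omega), if_neg (by omega), if_pos (by omega)]
      congr 1; omega
    have e2 : B (2 * j + 3 + 1) = τ (f j) - f j := by
      have e : (2 * j + 3 + 1 - 3) / 2 = j := by omega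
      rw [hB]; unfold tgt
      rw [if_neg (by omega), if_neg (by omega), if_neg (by omega), if_neg (by omega), e]
    rw [e1, e2]
  -- membership
  have hV2 : ∀ j < m, ∀ x, (∃ v ∈ V2v, (v 0 : ℝ) • f j + (v 1 : ℝ) • (τ (f j) - f j) = x) ↔
      (x = f j ∨ x = -f j ∨ x = τ (f j) ∨ x = -τ (f j) ∨ x = τ (f j) - f j ∨ x = f j - τ (f j)) := by
    intro j hj x
    simp only [V2v, Set.mem_insert_iff, Set.mem_singleton_iff, exists_eq_or_imp, exists_eq_left]
    simp
    grind
  have hmodel : ∀ x, x ∈ V ↔ x ∈ tgtL B '' (embed3 d '' Q ∪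
      ⋃ j ∈ Finset.range ((d - 3) / 2), embed2 d (2 * j + 3) '' V2v) := by
    intro x
    rw [h.mem, ← hQ, hdm, Set.image_union]
    refine or_congr ?_ ?_
    · simp only [Set.mem_image, exists_exists_and_eq_and, B3]
    · constructor
      · rintro ⟨t, ht, hx⟩
        obtain ⟨j, hj, htj⟩ := hall t ht
        have hi := h.invol _ (hf j hj)
        have : ∃ v ∈ V2v, (v 0 : ℝ) • f j + (v 1 : ℝ) • (τ (f j) - f j) = x := by
          rw [hV2 j hj]
          rcases htj with rfl | rfl
          · tauto
          · rw [hi] at hx; tauto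
        obtain ⟨v, hv, hvx⟩ := this
        refine ⟨embed2 d (2 * j + 3) v, ?_, by rw [B2 j hj, hvx]⟩
        simp only [Set.mem_iUnion]
        exact ⟨j, Finset.mem_range.2 hj, v, hv, rfl⟩
      · rintro ⟨y, hy, rfl⟩
        simp only [Set.mem_iUnion] at hy
        obtain ⟨j, hj, v, hv, rfl⟩ := hy
        have hj := Finset.mem_range.1 hj
        have hi := h.invol _ (hf j hj)
        have h1 := (hV2 j hj _).1 ⟨v, hv, rfl⟩
        rw [B2 j hj]
        have hτ := h.maps _ (hf j hj)
        rcases h1 with h1 | h1 | h1 | h1 | h1 | h1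
        · exact ⟨f j, hf j hj, Or.inl h1⟩
        · exact ⟨f j, hf j hj, Or.inr (Or.inl h1)⟩
        · exact ⟨τ (f j), hτ, Or.inl h1⟩
        · exact ⟨τ (f j), hτ, Or.inr (Or.inl h1)⟩
        · exact ⟨f j, hf j hj, Or.inr (Or.inr h1)⟩
        · exact ⟨τ (f j), hτ, Or.inr (Or.inr (by rw [hi]; exact h1))⟩
  have himg : tgtL B '' (embed3 d '' Q ∪
      ⋃ j ∈ Finset.range ((d - 3) / 2), embed2 d (2 * j + 3) '' V2v) = V := by
    ext x; rw [← hmodel]; rfl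
  have hpre : ∀ x ∈ V, ∃ w, IsLP w ∧ tgtL B w = x := by
    intro x hx
    obtain ⟨w, hw, rfl⟩ := (hmodel x).1 hx
    refine ⟨w, ?_, rfl⟩
    rcases hw with ⟨v, -, rfl⟩ | hw
    · exact embed3_IsLP v
    · simp only [Set.mem_iUnion] at hw
      obtain ⟨j, -, v, -, rfl⟩ := hw
      exact embed2_IsLP v
  choose! w hw1 hw2 using hpre
  have hinv : ∀ y, tgtL B (∑ v ∈ F.S, F.co v y • w v) = y := by
    intro y
    rw [map_sum]
    conv_rhs => rw [← F.repr y]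
    refine Finset.sum_congr rfl fun v hv => ?_
    rw [map_smul, hw2 v (F.sub hv)]
  have hsurj : Function.Surjective (tgtL B) := fun y => ⟨_, hinv y⟩
  have hinj : Function.Injective (tgtL B) := LinearMap.injective_iff_surjective.2 hsurj
  have hmS : ∀ x ∈ F.S, x ∈ latL d := fun x hx => hS.VL x (F.sub hx)
  have hmT : ∀ x ∈ T, x ∈ latL d := fun x hx =>
    hmS x (Finset.mem_of_mem_erase (Finset.mem_of_mem_erase (Finset.mem_of_mem_erase hx)))
  have hBL : ∀ i : Fin d, B i ∈ latL d := by
    intro i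
    rw [hB]
    unfold tgt
    have hi := i.2
    split_ifs
    · exact hmS _ h.ha
    · exact sub_mem (hmS _ h.hb) (hmS _ h.ha)
    · exact hmS _ h.hc
    · exact hmT _ (hf _ (by omega))
    · exact sub_mem (hmT _ (h.maps _ (hf _ (by omega)))) (hmT _ (hf _ (by omega)))
  have hfwd : ∀ x, IsLP x → IsLP (tgtL B x) := by
    intro x hx
    rw [← mem_latL, tgtL_apply]
    exact sum_mem fun i _ => smul_latL (hx i) (hBL i)
  have hbwd : ∀ x, IsLP (tgtL B x) → IsLP x := by
    intro x hx
    have e : x = ∑ v ∈ F.S, F.co v (tgtL B x) • w v := hinj (hinv _).symm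
    rw [e, ← mem_latL]
    exact sum_mem fun v hv => smul_latL (h.unim _ hx v hv) (hw1 v (F.sub hv))
  let ψ := LinearEquiv.ofBijective (tgtL B) ⟨hinj, hsurj⟩
  have hψ : ∀ x, ψ x = tgtL B x := fun x => rfl
  refine ⟨ψ.symm, ?_, ?_⟩
  · intro x
    have e : tgtL B (ψ.symm x) = x := ψ.apply_symm_apply x
    constructor
    · intro hx; exact hbwd _ (by rwa [e])
    · intro hx; rw [← e]; exact hfwd _ hx
  · have e1 : (V : Set (Fin d → ℝ)) = ψ '' (embed3 d '' Q ∪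
      ⋃ j ∈ Finset.range ((d - 3) / 2), embed2 d (2 * j + 3) '' V2v) := himg.symm
    have e2 : convexHull ℝ (V : Set (Fin d → ℝ)) = ψ '' splitModel3 d Q := by
      rw [e1]
      exact (LinearMap.image_convexHull (ψ : (Fin d → ℝ) →ₗ[ℝ] (Fin d → ℝ)) _).symm
    rw [e2, ← Set.image_comp]
    convert Set.image_id _
    ext1 x
    exact ψ.symm_apply_apply x

end polytopepart3

/-- a `d`-dimensional simplicial reflexive polytope with `3d-1` vertices,
`d ≥ 3` odd, splits into `(d-3)/2` copies of `V₂` and one copy of `Q₃` or `Q₃'`. -/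
theorem stmt1 {d : ℕ} (hd : 3 ≤ d) (hdo : Odd d)
    (P : Set (Fin d → ℝ)) (hP : IsReflexive P) (hs : IsSimplicial P)
    (hcard : (Set.extremePoints ℝ P).ncard = 3 * d - 1) :
    ∃ φ : (Fin d → ℝ) ≃ₗ[ℝ] (Fin d → ℝ), Unimodular φ ∧
      (φ '' P = splitModel3 d Q3v ∨ φ '' P = splitModel3 d Q3'v) := by
  obtain ⟨V, hD, hPV, hext⟩ := PD.of_reflexive (by omega) hP hs
  rw [hext, Set.ncard_coe_finset] at hcard
  have hS : Sys V (latL d) d := hD.sys (by omega)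
  obtain ⟨F, a, b, c, τ, h | h⟩ := hS.main (by omega) hdo
  · obtain ⟨φ, h1, h2⟩ := final hd hS h Q3v (by
      intro x
      simp only [Q3v, Set.mem_insert_iff, Set.mem_singleton_iff, exists_eq_or_imp, exists_eq_left]
      simp
      grind)
    exact ⟨φ, h1, Or.inl (by rw [hPV, h2])⟩
  · obtain ⟨φ, h1, h2⟩ := final hd hS h Q3'v (by
      intro x
      simp only [Q3'v, Set.mem_insert_iff, Set.mem_singleton_iff, exists_eq_or_imp, exists_eq_left]
      simp
      grind)
    exact ⟨φ, h1, Or.inr (by rw [hPV, h2])⟩
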